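/- Let Φ be of type B_n, C_n, or D_n, let I, J ⊆ Δ with I standard, and let λ be an integral Φ_I-regular weight with Φ_{λ̄} = Φ_J. Let 1 ≤ i, j ≤ q_{m−1} with λ_iλ_j ≠ 0 and suppose s_{e_i}s_{e_j}λ is Φ_I-regular. If λ ⟷̸ s_{e_i}s_{e_j}λ, then (Φ, Φ_I, Φ_J) is strongly separable. -/

import Mathlib

namespace JantzenBlocks

open scoped Classical

/-- The three classical types `B`, `C`, `D`. -/
inductive CType : Type
  | B | C | D
deriving DecidableEq

/-- The weight space `ℝ^n`. -/
abbrev V (n : ℕ) := Fin n → ℝ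

noncomputable section

/-- The standard inner product on `ℝ^n`. -/
def inn {n : ℕ} (x y : V n) : ℝ := ∑ i, x i * y i

/-- The standard basis vector `e i`. -/
def ee {n : ℕ} (i : Fin n) : V n := Pi.single i 1

/-- The reflection `s_v` in the vector `v`. -/
def sRefl {n : ℕ} (v x : V n) : V n := x - (2 * inn x v / inn v v) • v

/-- The roots `±e_i ± e_j` (`i ≠ j`), i.e. the root system of type `D_n`. -/
def DRoots (n : ℕ) : Set (V n) :=
  {v | ∃ i j : Fin n, i ≠ j ∧ (v = ee i + ee j ∨ v = ee i - ee j ∨ v = -ee i - ee j)}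

/-- The ambient root system `Φ` of type `B_n`, `C_n` or `D_n`. -/
def Phi (n : ℕ) : CType → Set (V n)
  | CType.B => DRoots n ∪ {v | ∃ i : Fin n, v = ee i ∨ v = -ee i}
  | CType.C => DRoots n ∪ {v | ∃ i : Fin n, v = (2:ℝ) • ee i ∨ v = -((2:ℝ) • ee i)}
  | CType.D => DRoots n

/-- The standard positive system `Φ⁺`: roots whose first nonzero coordinate is positive. -/
def PhiPos (n : ℕ) (ct : CType) : Set (V n) :=
  {v | v ∈ Phi n ct ∧ ∃ i : Fin n, 0 < v i ∧ ∀ j : Fin n, j < i → v j = 0}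

/-- The simple root `α_{i+1}` (`0`-based index `i`). -/
def alphaR (n : ℕ) (ct : CType) (i : Fin n) : V n :=
  if h : i.1 + 1 < n then ee i - ee ⟨i.1 + 1, h⟩
  else
    match ct with
    | CType.B => ee i
    | CType.C => (2:ℝ) • ee i
    | CType.D => ee ⟨n - 2, Nat.sub_lt i.pos (by norm_num)⟩ + ee i

/-- The subsystem `Φ_I` generated by the simple roots indexed by `I`. -/
def PhiI (n : ℕ) (ct : CType) (I : Finset (Fin n)) : Set (V n) :=
  Phi n ct ∩ (Submodule.span ℝ (alphaR n ct '' (I : Set (Fin n))) : Set (V n))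

/-- `λ` is `Φ_I`-regular. -/
def RegI (n : ℕ) (ct : CType) (I : Finset (Fin n)) (lam : V n) : Prop :=
  ∀ β ∈ PhiI n ct I, inn lam β ≠ 0

/-- `λ` is integral. -/
def IntegralW (n : ℕ) (ct : CType) (lam : V n) : Prop :=
  ∀ β ∈ Phi n ct, ∃ k : ℤ, 2 * inn lam β / inn β β = (k : ℝ)

/-- `λ` is dominant. -/
def DominantW (n : ℕ) (ct : CType) (lam : V n) : Prop :=
  ∀ i : Fin n, 0 ≤ inn lam (alphaR n ct i)

/-- `μ` lies in the `W_I`-orbit of `λ` (`W_I` generated by the reflections `s_α`, `α ∈ I`). -/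
def WIOrb (n : ℕ) (ct : CType) (I : Finset (Fin n)) : V n → V n → Prop :=
  Relation.ReflTransGen (fun x y => ∃ i ∈ I, y = sRefl (alphaR n ct i) x)

/-- `μ` lies in the `W`-orbit of `λ`. -/
def WOrb (n : ℕ) (ct : CType) : V n → V n → Prop := WIOrb n ct Finset.univ

/-- `λ ∈ Λ_I⁺`. -/
def LamIPlus (n : ℕ) (ct : CType) (I : Finset (Fin n)) (lam : V n) : Prop :=
  IntegralW n ct lam ∧ ∀ i ∈ I, 0 < inn lam (alphaR n ct i)

/-- The sorted list `q_1 < q_2 < … < q_{m-1}` (`1`-based values) of indices of `Δ∖I`. -/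
def Qlist (n : ℕ) (I : Finset (Fin n)) : List ℕ :=
  ((Finset.univ \ I).sort (· ≤ ·)).map (fun j => j.1 + 1)

/-- The number `m` of segments determined by `I`. -/
def mval (n : ℕ) (I : Finset (Fin n)) : ℕ := (Qlist n I).length + 1

/-- `q_s`, with the conventions `q_0 = 0` and `q_m = n`. -/
def qval (n : ℕ) (I : Finset (Fin n)) (s : ℕ) : ℕ :=
  if s = 0 then 0 else if s < mval n I then (Qlist n I).getD (s - 1) 0 else n

/-- `I` is standard (automatic in types `B`, `C`). -/
def StandardI (n : ℕ) (ct : CType) (I : Finset (Fin n)) : Prop :=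
  ct = CType.D → ∀ h : 2 ≤ n,
    ((⟨n - 2, by omega⟩ : Fin n) ∈ I ∨ (⟨n - 1, by omega⟩ : Fin n) ∉ I)

/-- `q_s`, corrected for nonstandard `I` (where `q_{m-1}` is replaced by `n`,
so that the `(m-1)`-st segment is `(q_{m-2}, n]` and the `m`-th segment is empty). -/
def qv (n : ℕ) (ct : CType) (I : Finset (Fin n)) (s : ℕ) : ℕ :=
  if ¬ StandardI n ct I ∧ s = mval n I - 1 then n else qval n I s

/-- The segment length `n_s`. -/
def nsval (n : ℕ) (ct : CType) (I : Finset (Fin n)) (s : ℕ) : ℕ :=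
  qv n ct I s - qv n ct I (s - 1)

/-- The (`0`-based) index `i` lies in the `s`-th segment, i.e. `q_{s-1} < i+1 ≤ q_s`. -/
def InSeg (n : ℕ) (ct : CType) (I : Finset (Fin n)) (s : ℕ) (i : Fin n) : Prop :=
  qv n ct I (s - 1) < i.1 + 1 ∧ i.1 + 1 ≤ qv n ct I s

/-- `n_s^λ(a)`: the number of entries of the `s`-th segment of `λ` with absolute value `a`. -/
def nsl (n : ℕ) (ct : CType) (I : Finset (Fin n)) (lam : V n) (s : ℕ) (a : ℝ) : ℕ :=
  (Finset.univ.filter (fun i : Fin n => InSeg n ct I s i ∧ |lam i| = a)).card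

/-- `a_t = λ̄_{q̄_t}` for `1 ≤ t < m̄`, and `a_{m̄} = 0`. -/
def aval (n : ℕ) (ct : CType) (J : Finset (Fin n)) (lbar : V n) (t : ℕ) : ℝ :=
  if t < mval n J then
    (if h : qv n ct J t - 1 < n then lbar ⟨qv n ct J t - 1, h⟩ else 0)
  else 0

/-- `n_s^λ(a)` is maximal among all `Φ_I`-regular weights in the orbit of `λ`. -/
def IsMaxN (n : ℕ) (ct : CType) (I : Finset (Fin n)) (lam : V n) (s : ℕ) (a : ℝ) : Prop :=
  ∀ mu : V n, WOrb n ct lam mu → RegI n ct I mu →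
    nsl n ct I mu s a ≤ nsl n ct I lam s a

/-- The exceptional configurations of Proposition 4.7 (types `B` and `C`, with
`shortR i` the short/long root `e_i` resp. `2e_i`). -/
def ExcBC (n : ℕ) (ct : CType) (I : Finset (Fin n)) (shortR : Fin n → V n)
    (lam β : V n) : Prop :=
  ∃ s : ℕ, 1 ≤ s ∧ s < mval n I ∧ ∃ a : ℝ, 0 < a ∧
    nsl n ct I lam s a = 1 ∧
    nsl n ct I lam s 0 + nsl n ct I lam (mval n I) a = 1 ∧
    ((∃ i j : Fin n, InSeg n ct I s i ∧ InSeg n ct I s j ∧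
        |lam i| = a ∧ lam j = 0 ∧ (β = shortR i ∨ β = ee i + ee j)) ∨
     (∃ i j : Fin n, InSeg n ct I s i ∧ InSeg n ct I (mval n I) j ∧
        ((lam i = a ∧ lam j = a) ∨ (lam i = -a ∧ lam j = -a)) ∧
        (β = shortR i ∨ β = ee i + ee j)) ∨
     (∃ i j : Fin n, InSeg n ct I s i ∧ InSeg n ct I (mval n I) j ∧
        ((lam i = a ∧ lam j = -a) ∨ (lam i = -a ∧ lam j = a)) ∧
        (β = shortR i ∨ β = ee i - ee j)))

/-- The exceptional configurations of Proposition 4.7 (type `D`). -/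
def ExcD (n : ℕ) (I : Finset (Fin n)) (lam β : V n) : Prop :=
  ∃ s : ℕ, 1 ≤ s ∧ s < mval n I ∧ ∃ a : ℝ, 0 < a ∧
    nsl n CType.D I lam s a = 1 ∧ nsl n CType.D I lam (mval n I) a = 1 ∧
    nsl n CType.D I lam s 0 = 1 ∧ nsl n CType.D I lam (mval n I) 0 = 1 ∧
    ∃ i j k l : Fin n, InSeg n CType.D I s i ∧ InSeg n CType.D I s j ∧
      InSeg n CType.D I (mval n I) k ∧ InSeg n CType.D I (mval n I) l ∧
      lam j = 0 ∧ lam l = 0 ∧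
      ((((lam i = a ∧ lam k = a) ∨ (lam i = -a ∧ lam k = -a)) ∧
          (β = ee i + ee j ∨ β = ee i + ee k)) ∨
       (((lam i = a ∧ lam k = -a) ∨ (lam i = -a ∧ lam k = a)) ∧
          (β = ee i + ee j ∨ β = ee i - ee k)))

/-- The exceptional configurations in which `β` fails to be a linked root. -/
def Exc (n : ℕ) (ct : CType) (I : Finset (Fin n)) (lam β : V n) : Prop :=
  match ct with
  | CType.B => ExcBC n CType.B I (fun i => ee i) lam β
  | CType.C => ExcBC n CType.C I (fun i => (2:ℝ) • ee i) lam β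
  | CType.D => ExcD n I lam β

/-- `β` is a linked root of the `Φ_I`-regular weight `λ` (for standard `I`). -/
def PlainLinked (n : ℕ) (ct : CType) (I : Finset (Fin n)) (lam β : V n) : Prop :=
  RegI n ct I lam ∧ β ∈ PhiPos n ct ∧ β ∉ PhiI n ct I ∧
  RegI n ct I (sRefl β lam) ∧ sRefl β lam ≠ lam ∧ ¬ Exc n ct I lam β

/-- The transposition of the last two indices. -/
def swapLast (n : ℕ) (j : Fin n) : Fin n :=
  if j.1 = n - 1 then ⟨n - 2, Nat.sub_lt j.pos (by norm_num)⟩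
  else if j.1 = n - 2 then ⟨n - 1, Nat.sub_lt j.pos (by norm_num)⟩
  else j

/-- The isomorphism `φ = s_{e_n}` (negating the last coordinate). -/
def phiW {n : ℕ} (x : V n) : V n := fun j => if j.1 = n - 1 then -x j else x j

/-- The image `φ(I)` of an index set under `φ` (interchanging `α_{n-1}` and `α_n`). -/
def phiIdx (n : ℕ) (I : Finset (Fin n)) : Finset (Fin n) := I.image (swapLast n)

/-- `β` is a linked root of `λ`; for nonstandard `I` the notion is transported along `φ`. -/
def LinkedRoot (n : ℕ) (ct : CType) (I : Finset (Fin n)) (lam β : V n) : Prop :=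
  if StandardI n ct I then PlainLinked n ct I lam β
  else PlainLinked n ct (phiIdx n I) (phiW lam) (phiW β)

/-- One step in a connecting chain: `y ∈ W_I x`, or `y = w s_β x` for a linked root `β` of `x`. -/
def ConnStep (n : ℕ) (ct : CType) (I : Finset (Fin n)) (x y : V n) : Prop :=
  RegI n ct I x ∧ RegI n ct I y ∧
  (WIOrb n ct I x y ∨ ∃ β : V n, LinkedRoot n ct I x β ∧ WIOrb n ct I (sRefl β x) y)

/-- `λ ⟷ μ`: `λ` and `μ` are connected by a chain of linked roots. -/
def Conn (n : ℕ) (ct : CType) (I : Finset (Fin n)) (lam mu : V n) : Prop :=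
  RegI n ct I lam ∧ RegI n ct I mu ∧
  Relation.ReflTransGen (ConnStep n ct I) lam mu

/-- The set `^IW^Jλ̄ = Wλ̄ ∩ Λ_I⁺` of weights parametrizing the simple modules. -/
def IWJset (n : ℕ) (ct : CType) (I : Finset (Fin n)) (lbar : V n) : Set (V n) :=
  {mu | WOrb n ct lbar mu ∧ LamIPlus n ct I mu}

/-- `(S, S̄)` is a separable pair for the weight `λ`. -/
def IsSepPair (n : ℕ) (ct : CType) (I J : Finset (Fin n)) (lbar lam : V n)
    (S Sb : Finset ℕ) : Prop :=
  S.Nonempty ∧ Sb.Nonempty ∧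
  S ⊆ Finset.Icc 1 (mval n I) ∧ Sb ⊆ Finset.Icc 1 (mval n J) ∧
  1 < mval n I ∧ 1 < mval n J ∧
  (∀ s ∈ S, ∀ t ∈ Sb, IsMaxN n ct I lam s (aval n ct J lbar t)) ∧
  (∀ s ∈ Finset.Icc 1 (mval n I), s ∉ S →
     ∀ t ∈ Finset.Icc 1 (mval n J), t ∉ Sb →
       nsl n ct I lam s (aval n ct J lbar t) = 0) ∧
  (match ct with
   | CType.B => (mval n I ∈ S ↔ mval n J ∉ Sb)
   | CType.C => (mval n I ∈ S ↔ mval n J ∉ Sb)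
   | CType.D => (mval n I ∈ S ↔ mval n J ∈ Sb))

/-- `𝒟`: the set of separable pairs of the system `(Φ, Φ_I, Φ_J)`. -/
def DSet (n : ℕ) (ct : CType) (I J : Finset (Fin n)) (lbar : V n) :
    Set (Finset ℕ × Finset ℕ) :=
  {p | ∀ lam ∈ IWJset n ct I lbar, IsSepPair n ct I J lbar lam p.1 p.2}

/-- The four weakly separable pairs. -/
def IsWeakPair (n : ℕ) (I J : Finset (Fin n)) (p : Finset ℕ × Finset ℕ) : Prop :=
  p = (Finset.Icc 1 (mval n I - 1), {mval n J}) ∨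
  p = (Finset.Icc 1 (mval n I), {mval n J}) ∨
  p = ({mval n I}, Finset.Icc 1 (mval n J - 1)) ∨
  p = ({mval n I}, Finset.Icc 1 (mval n J))

/-- The system `(Φ, Φ_I, Φ_J)` is separable. -/
def SepSys (n : ℕ) (ct : CType) (I J : Finset (Fin n)) (lbar : V n) : Prop :=
  (DSet n ct I J lbar).Nonempty

/-- The system `(Φ, Φ_I, Φ_J)` is strongly separable. -/
def StronglySepSys (n : ℕ) (ct : CType) (I J : Finset (Fin n)) (lbar : V n) : Prop :=
  ∃ p ∈ DSet n ct I J lbar, ¬ IsWeakPair n I J p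

/-- The system `(Φ, Φ_I, Φ_J)` is weakly separable. -/
def WeaklySepSys (n : ℕ) (ct : CType) (I J : Finset (Fin n)) (lbar : V n) : Prop :=
  SepSys n ct I J lbar ∧ ∀ p ∈ DSet n ct I J lbar, IsWeakPair n I J p

/-- The partial ordering on separable pairs: `(S₁,S̄₁) ≤ (S₂,S̄₂)` iff `S₁ ⊆ S₂`, `S̄₁ ⊇ S̄₂`. -/
def pairLE (p q : Finset ℕ × Finset ℕ) : Prop := p.1 ⊆ q.1 ∧ q.2 ⊆ p.2

/-- Strict version of `pairLE`. -/
def pairLT (p q : Finset ℕ × Finset ℕ) : Prop := pairLE p q ∧ p ≠ q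

/-- The generating relations of the equivalence `∼` on `𝒟`. -/
def PairRel (D : Set (Finset ℕ × Finset ℕ)) (p q : Finset ℕ × Finset ℕ) : Prop :=
  p ∈ D ∧ q ∈ D ∧ ((p.2 = q.2 ∧ p.1 ⊆ q.1) ∨ (p.1 = q.1 ∧ p.2 ⊆ q.2))

/-- The equivalence relation `∼` on separable pairs. -/
def PairEquiv (D : Set (Finset ℕ × Finset ℕ)) :
    Finset ℕ × Finset ℕ → Finset ℕ × Finset ℕ → Prop :=
  Relation.EqvGen (PairRel D)

/-- A trivial separable pair. -/
def TrivialPair (n : ℕ) (ct : CType) (I J : Finset (Fin n)) (lbar : V n)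
    (p : Finset ℕ × Finset ℕ) : Prop :=
  match ct with
  | CType.B | CType.C =>
    (∃ s0 : ℕ, 1 ≤ s0 ∧ s0 < mval n I ∧
       PairEquiv (DSet n ct I J lbar) p ({s0}, Finset.Icc 1 (mval n J))) ∨
    (∃ t0 : ℕ, 1 ≤ t0 ∧ t0 < mval n J ∧
       PairEquiv (DSet n ct I J lbar) p (Finset.Icc 1 (mval n I), {t0}))
  | CType.D =>
    (∃ s0 : ℕ, 1 ≤ s0 ∧ s0 < mval n I ∧
       PairEquiv (DSet n ct I J lbar) p ({s0}, Finset.Icc 1 (mval n J - 1))) ∨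
    (∃ t0 : ℕ, 1 ≤ t0 ∧ t0 < mval n J ∧
       PairEquiv (DSet n ct I J lbar) p (Finset.Icc 1 (mval n I - 1), {t0}))

/-- The set of blocks: equivalence classes of `^IW^Jλ̄` under `⟷`. -/
def BlockSet (n : ℕ) (ct : CType) (I : Finset (Fin n)) (lbar : V n) : Set (Set (V n)) :=
  {Cl | ∃ lam ∈ IWJset n ct I lbar,
     Cl = {mu | mu ∈ IWJset n ct I lbar ∧ Conn n ct I lam mu}}

/-- The parity `P(λ)` of the number of negative entries of `λ`. -/
def Pfun (n : ℕ) (lam : V n) : ℕ :=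
  (Finset.univ.filter (fun i : Fin n => lam i < 0)).card % 2

/-- A fundamental chain `c 1 ∼ c 2 ∼ … ∼ c k` in `𝒟`. -/
def IsFundChain (D : Set (Finset ℕ × Finset ℕ)) (c : ℕ → Finset ℕ × Finset ℕ)
    (k : ℕ) : Prop :=
  1 ≤ k ∧ (∀ i, 1 ≤ i → i ≤ k → c i ∈ D) ∧
  (∀ i, 1 ≤ i → i < k →
     ((c i).1 = (c (i+1)).1 ∨ (c i).2 = (c (i+1)).2) ∧
     (pairLT (c i) (c (i+1)) ∨ pairLT (c (i+1)) (c i)))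

/-- The list of parts of the partition `π_I`. -/
def piParts (n : ℕ) (ct : CType) (I : Finset (Fin n)) : List ℕ :=
  (List.range (mval n I - 1)).map (fun s => nsval n ct I (s+1)) ++
  (List.range (mval n I - 1)).map (fun s => nsval n ct I (s+1)) ++
  (match ct with
   | CType.B => [2 * nsval n ct I (mval n I) + 1]
   | CType.C => [2 * nsval n ct I (mval n I)]
   | CType.D => if nsval n ct I (mval n I) = 0 then []
                else [2 * nsval n ct I (mval n I) - 1, 1])

/-- The `i`-th part (`1`-based) of the partition with list of parts `L`. -/
def partAt (L : List ℕ) (i : ℕ) : ℕ :=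
  (L.mergeSort (fun a b => decide (b ≤ a))).getD (i - 1) 0

/-- The `i`-th part (`1`-based) of the dual partition `π^t`: the number of parts `≥ i`. -/
def dualAt (L : List ℕ) (i : ℕ) : ℕ :=
  (L.filter (fun x => decide (i ≤ x))).length

/-- `k` is compatible with the system `(Φ, Φ_I, Φ_J)`. -/
def CompatibleK (n : ℕ) (ct : CType) (I J : Finset (Fin n)) (k : ℕ) : Prop :=
  1 ≤ k ∧ k ≤ 2 * mval n I - 1 ∧
  (match ct with
   | CType.B =>
     (Odd k ∧ k ≤ partAt (piParts n CType.B J) 2 ∧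
        2 * nsval n CType.B J (mval n J) + 1 ≤ k ∧
        partAt (piParts n CType.B I) k ≤ 2 * nsval n CType.B I (mval n I) + 1) ∨
     (Even k ∧ k ≤ 2 * nsval n CType.B J (mval n J) ∧
        2 * nsval n CType.B I (mval n I) + 1 ≤ partAt (piParts n CType.B I) k)
   | CType.C =>
     (Odd k ∧ k ≤ partAt (piParts n CType.C J) 2 ∧
        2 * nsval n CType.C J (mval n J) + 1 ≤ k ∧
        partAt (piParts n CType.C I) k ≤ 2 * nsval n CType.C I (mval n I)) ∨
     (Even k ∧ k ≤ 2 * nsval n CType.C J (mval n J) ∧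
        2 * nsval n CType.C I (mval n I) + 1 ≤ partAt (piParts n CType.C I) k)
   | CType.D =>
     (Even k ∧ k ≤ partAt (piParts n CType.D J) 2 ∧
        2 * nsval n CType.D J (mval n J) ≤ k ∧
        2 * nsval n CType.D I (mval n I) ≤ partAt (piParts n CType.D I) k) ∨
     (Odd k ∧ k ≤ 2 * nsval n CType.D J (mval n J) - 1 ∧
        partAt (piParts n CType.D I) k ≤ 2 * nsval n CType.D I (mval n I) - 1))

/-- `s_{e_{k_1}}^{ε_1} ⋯ s_{e_{k_r}}^{ε_r} μ`. -/
def applyFlips (n : ℕ) (ks : ℕ → Fin n) (eps : ℕ → Bool) : ℕ → V n → V n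
  | 0, v => v
  | (r+1), v =>
      if eps (r+1) then sRefl (ee (ks (r+1))) (applyFlips n ks eps r v)
      else applyFlips n ks eps r v

end

/-!
Only an entry that occurs once in its segment, outside the last segment, can have its sign changed
on its own; call it *lone*.  Whether changing the signs of a pair of lone entries stays inside the
connected class depends only on the pattern of absolute values.  If some pair leaves the class, then
exchanging entries of different segments transports this obstruction to a pattern in which no
exchange separates two equal absolute values: otherwise a suitable exchange lowers the complexity of
the pattern.  There the lone entries adjacent to an obstructed one determine a cut: a set `R` of
segments and a set `T` of values such that every segment in `R` is saturated by values outside `T`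
and no segment outside `R` contains a value of `T`.  Counting entries shows that every regular
weight of the orbit has the same cut.  Read off as sets of indices, the cut is a separable pair; it
involves a segment other than the last and a nonzero value, so it is none of the four weak pairs.
-/

/-! ### Sign changes and exchanges of entries -/

section Moves
variable {ι : Type*} [DecidableEq ι]

/-- The weight obtained from `x` by negating the entry at `i`: the reflection in `e_i`. -/
def negAt (i : ι) (x : ι → ℝ) : ι → ℝ := Function.update x i (-x i)

/-- The reflection of `x` in `e_i + e_j`: the entries at `i` and `j` are exchanged and negated.
The reflection in `e_i - e_j` is `x ∘ Equiv.swap i j`. -/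
def negSwap (i j : ι) (x : ι → ℝ) : ι → ℝ :=
  Function.update (Function.update x i (-x j)) j (-x i)

theorem negAt_apply (i k : ι) (x : ι → ℝ) : negAt i x k = if k = i then -x k else x k := by
  simp only [negAt, Function.update_apply]; grind

theorem negSwap_apply (i j k : ι) (x : ι → ℝ) :
    negSwap i j x k = if k = i then -x j else if k = j then -x i else x k := by
  simp only [negSwap, Function.update_apply]; grind

theorem negAt_comm (i j : ι) (x : ι → ℝ) : negAt i (negAt j x) = negAt j (negAt i x) := by
  funext k; simp only [negAt_apply]; grind

@[simp] theorem negAt_negAt_self (i : ι) (x : ι → ℝ) : negAt i (negAt i x) = x := by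
  funext k; simp only [negAt_apply]; grind

@[simp] theorem negAt_cancel_left (i j : ι) (x : ι → ℝ) :
    negAt i (negAt j (negAt i x)) = negAt j x := by
  rw [negAt_comm j i, negAt_negAt_self]

theorem negAt_eq_self {i : ι} {x : ι → ℝ} (h : x i = 0) : negAt i x = x := by
  simp [negAt, h]

@[simp] theorem abs_negAt (i : ι) (x : ι → ℝ) : |negAt i x| = |x| := by
  funext k; simp only [Pi.abs_apply, negAt_apply]; split_ifs <;> simp only [abs_neg]

theorem abs_negSwap (i j : ι) (x : ι → ℝ) : |negSwap i j x| = |x| ∘ Equiv.swap i j := by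
  funext k
  simp only [Pi.abs_apply, negSwap_apply, Function.comp, Equiv.swap_apply_def]
  split_ifs <;> simp only [abs_neg]

theorem negAt_comp_swap (i k p : ι) (x : ι → ℝ) :
    negAt p x ∘ Equiv.swap i k = negAt (Equiv.swap i k p) (x ∘ Equiv.swap i k) := by
  funext q; simp only [Function.comp, negAt_apply, Equiv.swap_apply_def]; grind

theorem comp_swap_comp_swap {α : Type*} (i k : ι) (x : ι → α) :
    (x ∘ Equiv.swap i k) ∘ Equiv.swap i k = x := by
  funext q; simp

theorem negAt_negAt_eq_negSwap_comp_swap {i j : ι} (hij : i ≠ j) (x : ι → ℝ) :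
    negAt i (negAt j x) = negSwap i j (x ∘ Equiv.swap i j) := by
  funext k; simp only [negAt_apply, negSwap_apply, Function.comp, Equiv.swap_apply_def]; grind

end Moves

/-! ### Regularity relative to a segmentation -/

/-- A partition of the coordinates into segments, one of which (`last`) may be the segment on
which `Φ_I` has type `B`, `C` or `D`; `typeD` records whether the ambient type is `D`. -/
structure Segmentation (ι : Type*) where
  seg : ι → ℕ
  last : ℕ
  typeD : Prop

namespace Segmentation
variable {ι : Type*} {S : Segmentation ι} {x w : ι → ℝ} {i j k p : ι} {s : ℕ} {a b : ℝ}

/-- `Φ_I`-regularity: no two entries of a segment agree, entries of the last segment differ also in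
absolute value and, outside type `D`, do not vanish. -/
def Regular (S : Segmentation ι) (x : ι → ℝ) : Prop :=
  (∀ i j, i ≠ j → S.seg i = S.seg j → x i ≠ x j ∧ (S.seg i = S.last → x i ≠ -x j)) ∧
  (¬ S.typeD → ∀ i, S.seg i = S.last → x i ≠ 0)

/-- The value `a` can be placed at `i` without violating regularity. -/
def Fits (S : Segmentation ι) (x : ι → ℝ) (i : ι) (a : ℝ) : Prop :=
  (∀ q, q ≠ i → S.seg q = S.seg i → x q ≠ a ∧ (S.seg q = S.last → x q ≠ -a)) ∧
  (¬ S.typeD → S.seg i = S.last → a ≠ 0)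

/-- `n_s^w(a) ≥ 1`. As below, `w` stands for the vector of absolute values of a weight. -/
def Occurs (S : Segmentation ι) (w : ι → ℝ) (s : ℕ) (a : ℝ) : Prop := ∃ i, S.seg i = s ∧ w i = a

/-- `n_s^w(a) ≥ 2`. -/
def OccursTwice (S : Segmentation ι) (w : ι → ℝ) (s : ℕ) (a : ℝ) : Prop :=
  ∃ i j, i ≠ j ∧ S.seg i = s ∧ S.seg j = s ∧ w i = a ∧ w j = a

/-- `a` occurs in segment `s` as often as regularity permits: twice for a nonzero value outside the
last segment, once otherwise. -/
def Saturated (S : Segmentation ι) (w : ι → ℝ) (s : ℕ) (a : ℝ) : Prop :=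
  if s = S.last ∨ a = 0 then S.Occurs w s a else S.OccursTwice w s a

/-- The entry at `p` is nonzero, lies outside the last segment and occurs only once in its segment;
these are the entries whose sign can be changed individually. -/
def Lone (S : Segmentation ι) (w : ι → ℝ) (p : ι) : Prop :=
  S.seg p ≠ S.last ∧ w p ≠ 0 ∧ ∀ q, q ≠ p → S.seg q = S.seg p → w q ≠ w p

/-- The entries at `i` and `k` are new to each other's segments, so exchanging them preserves
regularity. -/
structure Exchangeable (S : Segmentation ι) (w : ι → ℝ) (i k : ι) : Prop where
  left : ¬ S.Occurs w (S.seg i) (w k)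
  right : ¬ S.Occurs w (S.seg k) (w i)
  left_ne_zero : S.seg k = S.last → S.typeD ∨ w i ≠ 0
  right_ne_zero : S.seg i = S.last → S.typeD ∨ w k ≠ 0

theorem Exchangeable.symm (h : S.Exchangeable w i k) : S.Exchangeable w k i :=
  ⟨h.right, h.left, h.right_ne_zero, h.left_ne_zero⟩

theorem Exchangeable.seg_ne (h : S.Exchangeable w i k) : S.seg i ≠ S.seg k :=
  fun e => h.left ⟨k, e.symm, rfl⟩

theorem Exchangeable.ne (h : S.Exchangeable w i k) : w i ≠ w k := fun e => h.left ⟨i, rfl, e⟩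

theorem Exchangeable.of_lone (hi : S.Lone w i) (hk : S.Lone w k)
    (h1 : ¬ S.Occurs w (S.seg i) (w k)) (h2 : ¬ S.Occurs w (S.seg k) (w i)) :
    S.Exchangeable w i k :=
  ⟨h1, h2, fun _ => Or.inr hi.2.1, fun _ => Or.inr hk.2.1⟩

theorem saturated_last : S.Saturated w S.last b ↔ S.Occurs w S.last b := by
  rw [Saturated, if_pos (Or.inl rfl)]

theorem saturated_zero : S.Saturated w s 0 ↔ S.Occurs w s 0 := by
  rw [Saturated, if_pos (Or.inr rfl)]

theorem saturated_iff_occursTwice (hs : s ≠ S.last) (hb : b ≠ 0) :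
    S.Saturated w s b ↔ S.OccursTwice w s b := by
  rw [Saturated, if_neg (not_or.2 ⟨hs, hb⟩)]

theorem OccursTwice.occurs (h : S.OccursTwice w s b) : S.Occurs w s b := by
  obtain ⟨i, -, -, hi, -, hw, -⟩ := h
  exact ⟨i, hi, hw⟩

theorem Saturated.occurs (h : S.Saturated w s b) : S.Occurs w s b := by
  unfold Saturated at h
  split_ifs at h
  exacts [h, h.occurs]

theorem exists_lone_of_not_saturated (h : S.Occurs w s b) (h' : ¬ S.Saturated w s b) :
    ∃ k, S.Lone w k ∧ S.seg k = s ∧ w k = b := by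
  rw [Saturated] at h'
  split_ifs at h' with hc
  · exact absurd h h'
  · obtain ⟨k, rfl, rfl⟩ := h
    obtain ⟨hs, hb⟩ := not_or.1 hc
    exact ⟨k, ⟨hs, hb, fun q hq hs he => h' ⟨q, k, hq, hs, rfl, he, rfl⟩⟩, rfl, rfl⟩

theorem Lone.not_occursTwice (hi : S.Lone w i) : ¬ S.OccursTwice w (S.seg i) (w i) := by
  rintro ⟨a, b, hab, h1, h2, h3, h4⟩
  by_cases ha : a = i
  · exact hi.2.2 b (fun e => hab (ha.trans e.symm)) h2 h4
  · exact hi.2.2 a ha h1 h3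

theorem Fits.of_not_occurs (h : ¬ S.Occurs |x| (S.seg i) |a|)
    (h0 : S.seg i = S.last → S.typeD ∨ a ≠ 0) : S.Fits x i a := by
  simp only [Occurs, Pi.abs_apply, abs_eq_abs, not_exists, not_and, not_or] at h
  exact ⟨fun q _ hq => ⟨(h q hq).1, fun _ => (h q hq).2⟩, fun hD hi => (h0 hi).resolve_left hD⟩

theorem fits_neg_of_lone (hi : S.Lone |x| i) : S.Fits x i (-x i) := by
  simp only [Lone, Pi.abs_apply, abs_eq_abs, not_or, ne_eq] at hi
  exact ⟨fun q hq hs => ⟨(hi.2.2 q hq hs).2, fun hl => absurd (hs.symm.trans hl) hi.1⟩,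
    fun _ hl => absurd hl hi.1⟩

theorem Regular.fits_neg_of_last (h : S.Regular x) (hi : S.seg i = S.last) :
    S.Fits x i (-x i) := by
  refine ⟨fun q hq hs => ?_, fun hD _ => neg_ne_zero.2 (h.2 hD i hi)⟩
  have := h.1 q i hq hs
  exact ⟨this.2 (hs.trans hi), fun _ => by simpa using this.1⟩

theorem Regular.comp_perm (h : S.Regular x) {σ : Equiv.Perm ι} (hσ : ∀ q, S.seg (σ q) = S.seg q) :
    S.Regular (x ∘ σ) := by
  refine ⟨fun p q hpq hs => ?_, fun hD p hp => h.2 hD (σ p) ((hσ p).trans hp)⟩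
  have := h.1 (σ p) (σ q) (σ.injective.ne hpq) (by rw [hσ, hσ, hs])
  rwa [hσ] at this

theorem Regular.eq_neg_of_abs_eq (h : S.Regular x) (hij : i ≠ j) (hs : S.seg i = S.seg j)
    (he : |x i| = |x j|) : x i = -x j :=
  (abs_eq_abs.1 he).resolve_left (h.1 i j hij hs).1

theorem Regular.ne_zero_of_abs_eq (h : S.Regular x) (hij : i ≠ j) (hs : S.seg i = S.seg j)
    (he : |x j| = |x i|) : x i ≠ 0 := by
  intro h0
  rw [h0, abs_zero, abs_eq_zero] at he
  exact (h.1 i j hij hs).1 (h0.trans he.symm)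

variable [DecidableEq ι]

theorem Regular.update (h : S.Regular x) (ha : S.Fits x i a) :
    S.Regular (Function.update x i a) := by
  obtain ⟨h1, h2⟩ := h
  obtain ⟨f1, f2⟩ := ha
  refine ⟨fun p q hpq hs => ?_, fun hD p hp => ?_⟩ <;> simp only [Function.update_apply] <;> grind

theorem Fits.update (ha : S.Fits x j a) (hs : S.seg i ≠ S.seg j) :
    S.Fits (Function.update x i b) j a := by
  refine ⟨fun q hq hq' => ?_, ha.2⟩
  rw [Function.update_of_ne (fun e => hs (by rw [← e, hq']))]
  exact ha.1 q hq hq'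

theorem Regular.comp_swap (h : S.Regular x) (hs : S.seg i ≠ S.seg j)
    (hi : S.Fits x i (x j)) (hj : S.Fits x j (x i)) : S.Regular (x ∘ Equiv.swap i j) := by
  rw [Equiv.comp_swap_eq_update]
  exact (h.update hj).update (hi.update hs.symm)

theorem Regular.negSwap (h : S.Regular x) (hs : S.seg i ≠ S.seg j)
    (hi : S.Fits x i (-x j)) (hj : S.Fits x j (-x i)) : S.Regular (negSwap i j x) :=
  (h.update hi).update (hj.update hs)

theorem seg_swap (hs : S.seg i = S.seg j) (q : ι) : S.seg (Equiv.swap i j q) = S.seg q := by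
  rw [Equiv.swap_apply_def]; grind

theorem Regular.comp_swap_of_seg_eq (h : S.Regular x) (hs : S.seg i = S.seg j) :
    S.Regular (x ∘ Equiv.swap i j) := h.comp_perm (seg_swap hs)

theorem Regular.negAt_of_lone (h : S.Regular x) (hi : S.Lone |x| i) : S.Regular (negAt i x) :=
  h.update (fits_neg_of_lone hi)

theorem Regular.negAt_of_last (h : S.Regular x) (hi : S.seg i = S.last) : S.Regular (negAt i x) :=
  h.update (h.fits_neg_of_last hi)

theorem Regular.negAt_negAt (h : S.Regular x) (hi : S.Lone |x| i) (hj : S.Lone |x| j) :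
    S.Regular (JantzenBlocks.negAt i (JantzenBlocks.negAt j x)) :=
  (h.negAt_of_lone hj).negAt_of_lone (by rwa [abs_negAt])

theorem Regular.negAt_negAt_last (h : S.Regular x) (hi : S.Lone |x| i) (hj : S.seg j = S.last) :
    S.Regular (JantzenBlocks.negAt i (JantzenBlocks.negAt j x)) :=
  (h.negAt_of_last hj).negAt_of_lone (by rwa [abs_negAt])

theorem Regular.comp_swap_of_exchangeable (h : S.Regular x) (he : S.Exchangeable |x| i k) :
    S.Regular (x ∘ Equiv.swap i k) :=
  h.comp_swap he.seg_ne
    (.of_not_occurs he.left fun hl => (he.right_ne_zero hl).imp_right abs_ne_zero.1)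
    (.of_not_occurs he.right fun hl => (he.left_ne_zero hl).imp_right abs_ne_zero.1)

theorem Lone.comp_swap (hp : S.Lone w p) (he : S.Exchangeable w i k)
    (hl : S.seg (Equiv.swap i k p) ≠ S.last) :
    S.Lone (w ∘ Equiv.swap i k) (Equiv.swap i k p) := by
  obtain ⟨-, h0, h⟩ := hp
  obtain ⟨h1, h2, -, -⟩ := he
  simp only [Occurs, not_exists, not_and] at h1 h2
  refine ⟨hl, by simpa only [Function.comp, Equiv.swap_apply_self] using h0, fun q hq hs => ?_⟩
  simp only [Function.comp, Equiv.swap_apply_def] at *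
  grind

end Segmentation

/-! ### Linkage systems and their local moves -/

/-- A segmentation with a relation `conn` on weights that is closed under the elementary
connections: the action of `W_I` and the linked roots. -/
structure LinkageSystem (ι : Type*) [DecidableEq ι] extends Segmentation ι where
  conn : (ι → ℝ) → (ι → ℝ) → Prop
  conn_refl {x} : toSegmentation.Regular x → conn x x
  conn_trans {x y z} : conn x y → conn y z → conn x z
  conn_swap_of_seg_eq {x} {i j : ι} : toSegmentation.Regular x → seg i = seg j → seg i ≠ last →
    conn x (x ∘ Equiv.swap i j)
  conn_negAt_last {x} {k : ι} : ¬ typeD → toSegmentation.Regular x → seg k = last →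
    conn x (negAt k x)
  conn_negAt_negAt_last {x} {k l : ι} : typeD → toSegmentation.Regular x → k ≠ l →
    seg k = last → seg l = last → conn x (negAt k (negAt l x))
  conn_swap {x} {i j : ι} : toSegmentation.Regular x →
    toSegmentation.Regular (x ∘ Equiv.swap i j) → seg i ≠ seg j →
    (|x i| ≠ |x j| ∨ (seg i ≠ last ∧ seg j ≠ last)) → conn x (x ∘ Equiv.swap i j)
  conn_negSwap {x} {i j : ι} : toSegmentation.Regular x →
    toSegmentation.Regular (negSwap i j x) → seg i ≠ seg j →
    (|x i| ≠ |x j| ∨ (seg i ≠ last ∧ seg j ≠ last)) → conn x (negSwap i j x)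
  conn_negAt_negAt {x} {i j : ι} : toSegmentation.Regular x →
    toSegmentation.Regular (negAt i (negAt j x)) → i ≠ j → seg i = seg j → seg i ≠ last →
    x i ≠ 0 → x j ≠ 0 → conn x (negAt i (negAt j x))
  conn_negAt {x} {i : ι} : ¬ typeD → toSegmentation.Regular x →
    toSegmentation.Regular (negAt i x) → seg i ≠ last → x i ≠ 0 →
    (toSegmentation.Occurs |x| (seg i) 0 ↔ toSegmentation.Occurs |x| last |x i|) →
    conn x (negAt i x)
  conn_negAt_typeD {x} {i j : ι} : typeD → toSegmentation.Regular x →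
    toSegmentation.Regular (negAt i x) → seg i = seg j → seg i ≠ last → x j = 0 → x i ≠ 0 →
    ¬ (toSegmentation.Occurs |x| last |x i| ∧ toSegmentation.Occurs |x| last 0) →
    conn x (negAt i x)
  conn_negAt_last_typeD {x} {i k : ι} : typeD → toSegmentation.Regular x →
    toSegmentation.Regular (negAt i (negAt k x)) → seg i ≠ last → seg k = last →
    |x i| = |x k| → x i ≠ 0 →
    ¬ (toSegmentation.Occurs |x| (seg i) 0 ∧ toSegmentation.Occurs |x| last 0) →
    conn x (negAt i (negAt k x))

namespace LinkageSystem
open Segmentation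
variable {ι : Type*} [DecidableEq ι] {S : LinkageSystem ι} {x : ι → ℝ} {i j k l : ι}

theorem conn_comp_swap (hx : S.Regular x) (he : S.Exchangeable |x| i k) :
    S.conn x (x ∘ Equiv.swap i k) :=
  S.conn_swap hx (hx.comp_swap_of_exchangeable he) he.seg_ne (Or.inl he.ne)

theorem conn_negAt_negAt_of_abs_eq (hx : S.Regular x) (hi : S.Lone |x| i) (hj : S.Lone |x| j)
    (hs : S.seg i ≠ S.seg j) (hab : |x i| = |x j|) : S.conn x (negAt i (negAt j x)) := by
  have hr := hx.negAt_negAt hi hj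
  rcases abs_eq_abs.1 hab with e | e
  · have e' : negAt i (negAt j x) = negSwap i j x := by
      funext k; simp only [negAt_apply, negSwap_apply]; grind
    rw [e'] at hr ⊢
    exact S.conn_negSwap hx hr hs (Or.inr ⟨hi.1, hj.1⟩)
  · have e' : negAt i (negAt j x) = x ∘ Equiv.swap i j := by
      funext k; simp only [negAt_apply, Function.comp, Equiv.swap_apply_def]; grind
    rw [e'] at hr ⊢
    exact S.conn_swap hx hr hs (Or.inr ⟨hi.1, hj.1⟩)

theorem conn_negAt_negAt_of_exchangeable (hx : S.Regular x) (he : S.Exchangeable |x| i k)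
    (hr : S.Regular (negAt i (negAt k x))) : S.conn x (negAt i (negAt k x)) := by
  have hne : i ≠ k := fun e => he.seg_ne (by rw [e])
  rw [negAt_negAt_eq_negSwap_comp_swap hne] at hr ⊢
  refine S.conn_trans (conn_comp_swap hx he)
    (S.conn_negSwap (hx.comp_swap_of_exchangeable he) hr he.seg_ne (Or.inl ?_))
  simpa only [Function.comp, Equiv.swap_apply_left, Equiv.swap_apply_right, Pi.abs_apply]
    using he.ne.symm

/-- Two entries of a segment with the same absolute value realise both signs. -/
theorem exists_eq_neg_and_eq (hx : S.Regular x) {y : ℝ} (hl : S.OccursTwice |x| (S.seg l) |y|) :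
    ∃ k k', k ≠ k' ∧ S.seg k = S.seg l ∧ S.seg k' = S.seg l ∧ x k = -y ∧ x k' = y := by
  obtain ⟨k, k', hk, s, s', h1, h2⟩ := hl
  have := (hx.1 k k' hk (s.trans s'.symm)).1
  rw [Pi.abs_apply, abs_eq_abs] at h1 h2
  rcases h1 with h1 | h1 <;> rcases h2 with h2 | h2
  · exact absurd (h1.trans h2.symm) this
  · exact ⟨k', k, hk.symm, s', s, h2, h1⟩
  · exact ⟨k, k', hk, s, s', h1, h2⟩
  · exact absurd (h1.trans h2.symm) this

/-- A zero next to `i` moves to segment `s`, is replaced there by `-x i`, and returns. -/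
theorem conn_negAt_of_zero_of_occursTwice {s : ℕ} (hx : S.Regular x) (hi : S.Lone |x| i)
    (hk : S.seg k = S.seg i) (hk0 : x k = 0) (hs : s ≠ S.last)
    (h0 : ¬ S.Occurs |x| s 0) (h2 : S.OccursTwice |x| s |x i|) : S.conn x (negAt i x) := by
  obtain ⟨l, -, -, rfl, -⟩ := id h2
  obtain ⟨l, l', hll, q, -, e1, e2⟩ := exists_eq_neg_and_eq hx h2
  rw [← q] at h0 hs
  have hls : S.seg k ≠ S.seg l := by
    intro e; exact h0 ⟨k, e, by simp [hk0]⟩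
  have hr3 := (hx.negAt_of_lone hi).comp_swap_of_seg_eq hk.symm
  have hi1 := hi.1
  have e : negSwap i l (x ∘ Equiv.swap k l) = negAt i x ∘ Equiv.swap i k := by
    funext k
    simp only [negAt_apply, negSwap_apply, Function.comp, Equiv.swap_apply_def]; grind
  have hr2 := e ▸ hr3
  simp only [Lone, Occurs, Pi.abs_apply, abs_eq_abs, abs_eq_zero, ne_eq, not_or, not_exists,
    not_and] at h0 hi
  have := hx.1
  have hr1 : S.Regular (x ∘ Equiv.swap k l) :=
    hx.comp_swap hls (by constructor <;> grind) (by constructor <;> grind)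
  rw [← comp_swap_comp_swap i k (negAt i x), ← e]
  refine S.conn_trans (S.conn_swap hx hr1 hls (Or.inr ⟨by grind, hs⟩)) ?_
  refine S.conn_trans (S.conn_negSwap hr1 hr2 (by grind) (Or.inr ⟨hi1, hs⟩)) ?_
  exact S.conn_swap_of_seg_eq hr2 hk.symm hi1

/-- The last entry `l` takes the place of `k` next to `i` and, after an exchange with `i`, returns
with the opposite sign. -/
theorem conn_negAt_negAt_last_of_eq (hx : S.Regular x) (hi : S.Lone |x| i)
    (hk : S.seg k = S.seg i) (hk0 : x k ≠ 0)
    (hl : S.seg l = S.last) (hli : x l = x i) (h0 : ¬ S.Occurs |x| S.last |x k|) :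
    S.conn x (negAt i (negAt l x)) := by
  have hi1 := hi.1
  have hr3 := (hx.negAt_negAt_last hi hl).comp_swap_of_seg_eq hk.symm
  have hab : |x k| ≠ |x l| := fun e => h0 ⟨l, hl, e.symm⟩
  have hkl : S.seg k ≠ S.seg l := by rwa [hk, hl]
  have hil : S.seg i ≠ S.seg l := by rwa [hl]
  have hik : i ≠ k := by rintro rfl; exact hab (by rw [hli])
  have hil' : i ≠ l := fun e => hil (by rw [e])
  have := hx.1
  simp only [Lone, Occurs, Pi.abs_apply, abs_eq_abs, abs_eq_zero, ne_eq, not_or, not_exists,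
    not_and] at h0 hi
  have hr1 : S.Regular (negSwap k l x) :=
    hx.negSwap hkl (by constructor <;> grind) (by constructor <;> grind)
  have e : negSwap i l (negSwap k l x) = negAt i (negAt l x) ∘ Equiv.swap i k := by
    funext k
    simp only [negAt_apply, negSwap_apply, Function.comp, Equiv.swap_apply_def]; grind
  have hr2 := e ▸ hr3
  rw [← comp_swap_comp_swap i k (negAt i (negAt l x)), ← e]
  refine S.conn_trans (S.conn_negSwap hx hr1 hkl (Or.inl hab)) ?_
  refine S.conn_trans (S.conn_negSwap hr1 hr2 hil (Or.inl ?_))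
    (S.conn_swap_of_seg_eq hr2 hk.symm hi1)
  have hlk : l ≠ k := fun e => hkl (by rw [e])
  simpa only [negSwap_apply, hik, hil', hlk, if_true, if_false, abs_neg, hli] using hab.symm

theorem conn_negAt_negAt_last_of_eq_neg (hx : S.Regular x) (hi : S.Lone |x| i)
    (hk : S.seg k = S.seg i) (hk0 : x k ≠ 0)
    (hl : S.seg l = S.last) (hli : x l = -x i) (h0 : ¬ S.Occurs |x| S.last |x k|) :
    S.conn x (negAt i (negAt l x)) := by
  have hi1 := hi.1
  have hr3 := (hx.negAt_negAt_last hi hl).comp_swap_of_seg_eq hk.symm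
  have hab : |x k| ≠ |x l| := fun e => h0 ⟨l, hl, e.symm⟩
  have hkl : S.seg k ≠ S.seg l := by rwa [hk, hl]
  have hil : S.seg i ≠ S.seg l := by rwa [hl]
  have hik : i ≠ k := by rintro rfl; exact hab (by rw [hli, abs_neg])
  have hil' : i ≠ l := fun e => hil (by rw [e])
  have := hx.1
  simp only [Lone, Occurs, Pi.abs_apply, abs_eq_abs, abs_eq_zero, ne_eq, not_or, not_exists,
    not_and] at h0 hi
  have hr1 : S.Regular (x ∘ Equiv.swap k l) :=
    hx.comp_swap hkl (by constructor <;> grind) (by constructor <;> grind)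
  have e : (x ∘ Equiv.swap k l) ∘ Equiv.swap i l = negAt i (negAt l x) ∘ Equiv.swap i k := by
    funext k
    simp only [negAt_apply, Function.comp, Equiv.swap_apply_def]; grind
  have hr2 := e ▸ hr3
  rw [← comp_swap_comp_swap i k (negAt i (negAt l x)), ← e]
  refine S.conn_trans (S.conn_swap hx hr1 hkl (Or.inl hab)) ?_
  refine S.conn_trans (S.conn_swap hr1 hr2 hil (Or.inl ?_))
    (S.conn_swap_of_seg_eq hr2 hk.symm hi1)
  simp only [Function.comp, Equiv.swap_apply_def]; grind

theorem conn_negAt_negAt_last_of_occursTwice {b : ℝ} (hx : S.Regular x) (hi : S.Lone |x| i)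
    (hb : S.OccursTwice |x| (S.seg i) b) (hl : S.seg l = S.last) (hli : |x l| = |x i|)
    (h0 : ¬ S.Occurs |x| S.last b) : S.conn x (negAt i (negAt l x)) := by
  obtain ⟨k, k', hkk, hk, hk', rfl, hxk⟩ := hb
  have hk0 := hx.ne_zero_of_abs_eq hkk (hk.trans hk'.symm) hxk
  exact (abs_eq_abs.1 hli).elim
    (fun e => conn_negAt_negAt_last_of_eq hx hi hk hk0 hl e h0)
    (fun e => conn_negAt_negAt_last_of_eq_neg hx hi hk hk0 hl e h0)

theorem conn_negAt_negAt_of_occursTwice (hx : S.Regular x) (hi : S.Lone |x| i)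
    (hj : S.Lone |x| j) (hs : S.seg i ≠ S.seg j) (h1 : S.OccursTwice |x| (S.seg i) |x j|)
    (h2 : S.OccursTwice |x| (S.seg j) |x i|) : S.conn x (negAt i (negAt j x)) := by
  obtain ⟨k, k', hkk, hk, hk', e1, e2⟩ := exists_eq_neg_and_eq hx h1
  obtain ⟨l, l', hll, hl, hl', e3, e4⟩ := exists_eq_neg_and_eq hx h2
  have hi1 := hi.1
  have hj1 := hj.1
  have hr3 := (hx.negAt_negAt hi hj).comp_swap_of_seg_eq hl.symm
  have hkl : S.seg k ≠ S.seg l := by rwa [hk, hl]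
  simp only [Lone, Pi.abs_apply, abs_eq_abs, abs_eq_zero, ne_eq, not_or] at hi hj
  have hik : i ≠ k := by rintro rfl; have := hi.2.2 k'; grind
  have hjl : j ≠ l := by rintro rfl; have := hj.2.2 l'; grind
  have := hx.1
  have : ∀ q, q ≠ k → S.seg q = S.seg k → x q ≠ x l := by
    intro q _; have := hi.2.2 q; grind
  have : ∀ q, q ≠ l → S.seg q = S.seg l → x q ≠ x k := by
    intro q _; have := hj.2.2 q; grind
  have hr1 : S.Regular (x ∘ Equiv.swap k l) :=
    hx.comp_swap hkl (by constructor <;> grind) (by constructor <;> grind)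
  have e : negSwap i j (x ∘ Equiv.swap k l) =
      (negAt i (negAt j x) ∘ Equiv.swap j l) ∘ Equiv.swap i k := by
    funext k; simp only [negAt_apply, negSwap_apply, Function.comp, Equiv.swap_apply_def]; grind
  have hr2 := e ▸ hr3.comp_swap_of_seg_eq hk.symm
  rw [← comp_swap_comp_swap j l (negAt i (negAt j x)),
    ← comp_swap_comp_swap i k (negAt i (negAt j x) ∘ _), ← e]
  refine S.conn_trans (S.conn_swap hx hr1 hkl (Or.inr ⟨by grind, by grind⟩)) ?_
  refine S.conn_trans (S.conn_negSwap hr1 hr2 hs (Or.inr ⟨hi1, hj1⟩)) ?_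
  exact S.conn_trans (S.conn_swap_of_seg_eq hr2 hk.symm hi1)
    (S.conn_swap_of_seg_eq (hr2.comp_swap_of_seg_eq hk.symm) hl.symm hj1)

/-! ### Sign changes allowed by a pattern of absolute values -/

variable {w : ι → ℝ} {p q r : ι} {s : ℕ} {b : ℝ}

/-- In every regular weight with absolute values `w`, changing the signs at `p` and `q` stays in
the connected class. -/
def PairFlippable (S : LinkageSystem ι) (w : ι → ℝ) (p q : ι) : Prop :=
  ∀ x, S.Regular x → |x| = w → S.conn x (negAt p (negAt q x))

/-- In every regular weight with absolute values `w`, changing the sign at `p` stays in the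
connected class. -/
def Flippable (S : LinkageSystem ι) (w : ι → ℝ) (p : ι) : Prop :=
  ∀ x, S.Regular x → |x| = w → S.conn x (negAt p x)

/-- The sign at `p` can be changed together with that at any entry of the last segment, and there
is such an entry. -/
def FlippableWithLast (S : LinkageSystem ι) (w : ι → ℝ) (p : ι) : Prop :=
  (∃ k, S.seg k = S.last) ∧ ∀ k, S.seg k = S.last → S.PairFlippable w p k

/-- The sign at `p` can be changed together with that at a suitable entry of the last segment. -/
def FlippableWithSomeLast (S : LinkageSystem ι) (w : ι → ℝ) (p : ι) : Prop :=
  ∃ k, S.seg k = S.last ∧ S.PairFlippable w p k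

theorem PairFlippable.refl (w : ι → ℝ) (p : ι) : S.PairFlippable w p p := by
  intro x hx _
  rw [negAt_negAt_self]
  exact S.conn_refl hx

theorem PairFlippable.symm (h : S.PairFlippable w p q) : S.PairFlippable w q p := by
  intro x hx e
  rw [negAt_comm]
  exact h x hx e

theorem PairFlippable.trans (hp : S.Lone w p) (hq : S.Lone w q) (h : S.PairFlippable w p q)
    (h' : S.PairFlippable w q r) : S.PairFlippable w p r := by
  rintro x hx rfl
  have e : negAt p (negAt r x) = negAt q (negAt r (negAt p (negAt q x))) := by
    rw [negAt_comm p q x, negAt_comm r q, negAt_negAt_self, negAt_comm]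
  rw [e]
  exact S.conn_trans (h x hx rfl) (h' _ (hx.negAt_negAt hp hq) (by simp only [abs_negAt]))

theorem Flippable.pair (hq : S.Lone w q) (hp' : S.Flippable w p) (hq' : S.Flippable w q) :
    S.PairFlippable w p q := by
  rintro x hx rfl
  exact S.conn_trans (hq' x hx rfl) (hp' _ (hx.negAt_of_lone hq) (abs_negAt q x))

theorem Flippable.of_pair (hp : S.Lone w p) (hq : S.Lone w q) (h : S.PairFlippable w p q)
    (h' : S.Flippable w q) : S.Flippable w p := by
  rintro x hx rfl
  have := h' _ (hx.negAt_negAt hp hq) (by simp only [abs_negAt])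
  rw [negAt_cancel_left] at this
  exact S.conn_trans (h x hx rfl) this

theorem FlippableWithLast.of_pair (hp : S.Lone w p) (hq : S.Lone w q) (h : S.PairFlippable w p q)
    (h' : S.FlippableWithLast w q) : S.FlippableWithLast w p :=
  ⟨h'.1, fun k hk => h.trans hp hq (h'.2 k hk)⟩

theorem FlippableWithLast.pair (hq : S.Lone w q) (hp' : S.FlippableWithLast w p)
    (hq' : S.FlippableWithLast w q) : S.PairFlippable w p q := by
  obtain ⟨⟨k, hk⟩, hp'⟩ := hp'
  rintro x hx rfl
  have e : negAt p (negAt q x) = negAt p (negAt k (negAt q (negAt k x))) := by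
    rw [negAt_cancel_left]
  rw [e]
  exact S.conn_trans (hq'.2 k hk x hx rfl)
    (hp' k hk _ (hx.negAt_negAt_last hq hk) (by simp only [abs_negAt]))

theorem FlippableWithSomeLast.flippableWithLast (hp : S.Lone w p) (hD : S.typeD)
    (h : S.FlippableWithSomeLast w p) : S.FlippableWithLast w p := by
  obtain ⟨k, hk, h⟩ := h
  refine ⟨⟨k, hk⟩, fun l hl => ?_⟩
  by_cases hkl : k = l
  · exact hkl ▸ h
  rintro x hx rfl
  have e : negAt p (negAt l x) = negAt k (negAt l (negAt p (negAt k x))) := by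
    rw [negAt_comm p k x, negAt_comm l k, negAt_negAt_self, negAt_comm]
  rw [e]
  exact S.conn_trans (h x hx rfl)
    (S.conn_negAt_negAt_last hD (hx.negAt_negAt_last hp hk) hkl hk hl)

/-- The compensating sign change at a last entry is undone by itself outside type `D`, and by means
of a zero of the last segment in type `D`. -/
theorem FlippableWithSomeLast.flippable (hp : S.Lone w p) (h0 : ¬ S.typeD ∨ S.Occurs w S.last 0)
    (h : S.FlippableWithSomeLast w p) : S.Flippable w p := by
  by_cases hD : S.typeD
  · obtain ⟨z, hz, hz0⟩ := h0.resolve_left (not_not.2 hD)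
    rintro x hx rfl
    have := (h.flippableWithLast hp hD).2 z hz x hx rfl
    rwa [negAt_eq_self (abs_eq_zero.1 hz0)] at this
  · obtain ⟨k, hk, h⟩ := h
    rintro x hx rfl
    have := S.conn_negAt_last hD (hx.negAt_negAt_last hp hk) hk
    rw [negAt_cancel_left] at this
    exact S.conn_trans (h x hx rfl) this

/-! ### Criteria for flippability -/

theorem PairFlippable.of_seg_eq (hp : S.Lone w p) (hq : S.Lone w q) (hs : S.seg p = S.seg q) :
    S.PairFlippable w p q := by
  by_cases hpq : p = q
  · exact hpq ▸ .refl w p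
  rintro x hx rfl
  exact S.conn_negAt_negAt hx (hx.negAt_negAt hp hq) hpq hs hp.1 (abs_ne_zero.1 hp.2.1)
    (abs_ne_zero.1 hq.2.1)

theorem PairFlippable.of_eq (hp : S.Lone w p) (hq : S.Lone w q) (hw : w p = w q) :
    S.PairFlippable w p q := by
  by_cases hs : S.seg p = S.seg q
  · exact .of_seg_eq hp hq hs
  rintro x hx rfl
  exact conn_negAt_negAt_of_abs_eq hx hp hq hs hw

theorem PairFlippable.of_not_occurs (hp : S.Lone w p) (hq : S.Lone w q)
    (h1 : ¬ S.Occurs w (S.seg p) (w q)) (h2 : ¬ S.Occurs w (S.seg q) (w p)) :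
    S.PairFlippable w p q := by
  rintro x hx rfl
  exact conn_negAt_negAt_of_exchangeable hx (.of_lone hp hq h1 h2) (hx.negAt_negAt hp hq)

theorem PairFlippable.of_occursTwice (hp : S.Lone w p) (hq : S.Lone w q)
    (h1 : S.OccursTwice w (S.seg p) (w q)) (h2 : S.OccursTwice w (S.seg q) (w p)) :
    S.PairFlippable w p q := by
  by_cases hs : S.seg p = S.seg q
  · exact .of_seg_eq hp hq hs
  rintro x hx rfl
  exact conn_negAt_negAt_of_occursTwice hx hp hq hs h1 h2

theorem FlippableWithSomeLast.of_not_occurs (hp : S.Lone w p) (hb : S.Occurs w S.last b)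
    (h1 : ¬ S.Occurs w (S.seg p) b) (h2 : ¬ S.Occurs w S.last (w p)) :
    S.FlippableWithSomeLast w p := by
  obtain ⟨k, hk, rfl⟩ := hb
  refine ⟨k, hk, ?_⟩
  rintro x hx rfl
  exact conn_negAt_negAt_of_exchangeable hx
    ⟨h1, hk ▸ h2, fun _ => Or.inr hp.2.1, fun h => absurd h hp.1⟩ (hx.negAt_negAt_last hp hk)

theorem FlippableWithSomeLast.of_occursTwice (hp : S.Lone w p)
    (hb : S.OccursTwice w (S.seg p) b) (h1 : ¬ S.Occurs w S.last b)
    (h2 : S.Occurs w S.last (w p)) : S.FlippableWithSomeLast w p := by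
  obtain ⟨l, hl, h2⟩ := h2
  refine ⟨l, hl, ?_⟩
  rintro x hx rfl
  exact conn_negAt_negAt_last_of_occursTwice hx hp hb hl h2 h1

theorem FlippableWithSomeLast.of_typeD (hp : S.Lone w p) (hD : S.typeD)
    (h1 : ¬ (S.Occurs w (S.seg p) 0 ∧ S.Occurs w S.last 0)) (h2 : S.Occurs w S.last (w p)) :
    S.FlippableWithSomeLast w p := by
  obtain ⟨k, hk, h2⟩ := h2
  refine ⟨k, hk, ?_⟩
  rintro x hx rfl
  exact S.conn_negAt_last_typeD hD hx (hx.negAt_negAt_last hp hk) hp.1 hk h2.symm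
    (abs_ne_zero.1 hp.2.1) h1

theorem Flippable.of_iff (hp : S.Lone w p) (hD : ¬ S.typeD)
    (h : S.Occurs w (S.seg p) 0 ↔ S.Occurs w S.last (w p)) : S.Flippable w p := by
  rintro x hx rfl
  exact S.conn_negAt hD hx (hx.negAt_of_lone hp) hp.1 (abs_ne_zero.1 hp.2.1) h

theorem Flippable.of_typeD (hp : S.Lone w p) (hD : S.typeD) (h0 : S.Occurs w (S.seg p) 0)
    (h1 : ¬ (S.Occurs w S.last (w p) ∧ S.Occurs w S.last 0)) : S.Flippable w p := by
  obtain ⟨j, hj, h0⟩ := h0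
  rintro x hx rfl
  exact S.conn_negAt_typeD hD hx (hx.negAt_of_lone hp) hj.symm hp.1 (abs_eq_zero.1 h0)
    (abs_ne_zero.1 hp.2.1) h1

theorem Flippable.of_not_occurs (hp : S.Lone w p) (hs : s ≠ S.last) (h0 : S.Occurs w s 0)
    (h1 : ¬ S.Occurs w (S.seg p) 0) (h2 : ¬ S.Occurs w s (w p)) : S.Flippable w p := by
  obtain ⟨k, rfl, h0⟩ := h0
  rintro x hx rfl
  have he : S.Exchangeable |x| p k :=
    ⟨h0 ▸ h1, h2, fun _ => Or.inr hp.2.1, fun h => absurd h hp.1⟩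
  have hk : negAt k x = x := negAt_eq_self (abs_eq_zero.1 h0)
  have := conn_negAt_negAt_of_exchangeable hx he
  rw [hk] at this
  exact this (hx.negAt_of_lone hp)

theorem Flippable.of_occursTwice (hp : S.Lone w p) (hs : s ≠ S.last)
    (h0 : S.Occurs w (S.seg p) 0) (h1 : ¬ S.Occurs w s 0) (h2 : S.OccursTwice w s (w p)) :
    S.Flippable w p := by
  obtain ⟨k, hk, h0⟩ := h0
  rintro x hx rfl
  exact conn_negAt_of_zero_of_occursTwice hx hp hk (abs_eq_zero.1 h0) hs h1 h2

/-! ### Transporting an obstruction along an exchange -/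

/-- The pair `p`, `p'` of lone entries obstructs connectedness: in some regular weight with absolute
values `w`, changing both signs leaves the connected class. -/
def Obstruction (S : LinkageSystem ι) (w : ι → ℝ) (p p' : ι) : Prop :=
  S.Lone w p ∧ S.Lone w p' ∧ ¬ S.PairFlippable w p p'

theorem Obstruction.symm (h : S.Obstruction w p q) : S.Obstruction w q p :=
  ⟨h.2.1, h.1, fun h' => h.2.2 h'.symm⟩

theorem Obstruction.exists_regular (h : S.Obstruction w p q) : ∃ x, S.Regular x ∧ |x| = w := by
  have := h.2.2
  simp only [PairFlippable, not_forall] at this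
  obtain ⟨x, hx, e, -⟩ := this
  exact ⟨x, hx, e⟩

theorem Obstruction.comp_swap (h : S.Obstruction w p q) (he : S.Exchangeable w i k)
    (hp : S.seg (Equiv.swap i k p) ≠ S.last) (hq : S.seg (Equiv.swap i k q) ≠ S.last) :
    S.Obstruction (w ∘ Equiv.swap i k) (Equiv.swap i k p) (Equiv.swap i k q) := by
  obtain ⟨hp', hq', h⟩ := h
  refine ⟨hp'.comp_swap he hp, hq'.comp_swap he hq, fun hflip => h ?_⟩
  rintro x hx rfl
  have hr := hx.negAt_negAt hp' hq'
  have he' : S.Exchangeable |negAt p (negAt q x)| i k := by rwa [abs_negAt, abs_negAt]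
  have hback := S.conn_swap (hr.comp_swap_of_exchangeable he')
    (by rwa [comp_swap_comp_swap]) he.seg_ne (Or.inl (by
      simpa only [Function.comp, Equiv.swap_apply_left, Equiv.swap_apply_right, Pi.abs_apply]
        using he'.ne.symm))
  rw [comp_swap_comp_swap] at hback
  have := hflip _ (hx.comp_swap_of_exchangeable he) rfl
  rw [← negAt_comp_swap, ← negAt_comp_swap] at this
  exact S.conn_trans (conn_comp_swap hx he) (S.conn_trans this hback)

section
variable [Fintype ι]

/-- The ordered pairs of distinct entries of a segment with the same value. -/
noncomputable def equalPairs (S : LinkageSystem ι) (w : ι → ℝ) : Finset (ι × ι) :=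
  {u | u.1 ≠ u.2 ∧ S.seg u.1 = S.seg u.2 ∧ w u.1 = w u.2}

theorem mem_equalPairs {u v : ι} :
    (u, v) ∈ S.equalPairs w ↔ u ≠ v ∧ S.seg u = S.seg v ∧ w u = w v := by
  simp only [equalPairs, Finset.mem_filter, Finset.mem_univ, true_and]

theorem equalPairs_comp_swap_subset (he : S.Exchangeable w i k) :
    S.equalPairs (w ∘ Equiv.swap i k) ⊆ S.equalPairs w := by
  obtain ⟨h1, h2, -, -⟩ := he
  simp only [Occurs, not_exists, not_and] at h1 h2
  rintro ⟨u, v⟩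
  simp only [mem_equalPairs, Function.comp, Equiv.swap_apply_def]
  grind

theorem equalPairs_comp_swap_ssubset (he : S.Exchangeable w i k) {k' : ι} (hk : k ≠ k')
    (hs : S.seg k' = S.seg k) (hw : w k' = w k) :
    S.equalPairs (w ∘ Equiv.swap i k) ⊂ S.equalPairs w := by
  refine (Finset.ssubset_iff_of_subset (equalPairs_comp_swap_subset he)).2
    ⟨(k, k'), mem_equalPairs.2 ⟨hk, hs.symm, hw.symm⟩, fun h => ?_⟩
  have hik : k' ≠ i := by rintro rfl; exact he.seg_ne hs
  have := (mem_equalPairs.1 h).2.2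
  rw [Function.comp_apply, Function.comp_apply, Equiv.swap_apply_right,
    Equiv.swap_apply_of_ne_of_ne hik hk.symm] at this
  exact he.right ⟨k', hs, this.symm⟩

end

/-- Exchanging `x k` for `x l = -x i` turns the lone `x i` into a pair `±x i` and breaks up the
pairs `x k = ±x k'` and `x l = -x l'`, which leaves `l'` lone in place of `i`. -/
structure PairExchange (S : LinkageSystem ι) (x : ι → ℝ) (i k k' l l' : ι) : Prop where
  lone : S.Lone |x| i
  ne : k ≠ k'
  seg_k : S.seg k = S.seg i
  seg_k' : S.seg k' = S.seg i
  abs_eq : |x k'| = |x k|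
  ne' : l ≠ l'
  seg_l' : S.seg l' = S.seg l
  seg_l_ne_last : S.seg l ≠ S.last
  apply_l : x l = -x i
  apply_l' : x l' = x i
  not_occurs : ¬ S.Occurs |x| (S.seg l) |x k|

namespace PairExchange
variable {k' l' : ι}

theorem seg_ne (h : S.PairExchange x i k k' l l') : S.seg k ≠ S.seg l :=
  fun e => h.not_occurs ⟨k, e, rfl⟩

theorem pairwise_ne (h : S.PairExchange x i k k' l l') :
    (i ≠ k ∧ i ≠ k' ∧ i ≠ l ∧ i ≠ l') ∧ (k ≠ l ∧ k ≠ l' ∧ k' ≠ l ∧ k' ≠ l') := by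
  have hs := h.seg_ne
  refine ⟨⟨?_, ?_, ?_, ?_⟩, ?_, ?_, ?_, ?_⟩
  · rintro rfl; exact h.lone.2.2 k' h.ne.symm h.seg_k' h.abs_eq
  · rintro rfl; exact h.lone.2.2 k h.ne h.seg_k h.abs_eq.symm
  all_goals refine ne_of_apply_ne S.seg ?_
  all_goals simpa only [h.seg_k', h.seg_l', ← h.seg_k] using hs

theorem ne_of_lone (h : S.PairExchange x i k k' l l') (hq : S.Lone |x| q) :
    q ≠ k ∧ q ≠ k' ∧ q ≠ l ∧ q ≠ l' := by
  have hl : |x l'| = |x l| := by rw [h.apply_l, h.apply_l', abs_neg]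
  refine ⟨?_, ?_, ?_, ?_⟩ <;> rintro rfl
  · exact hq.2.2 k' h.ne.symm (h.seg_k'.trans h.seg_k.symm) h.abs_eq
  · exact hq.2.2 k h.ne (h.seg_k.trans h.seg_k'.symm) h.abs_eq.symm
  · exact hq.2.2 l' h.ne'.symm h.seg_l' hl
  · exact hq.2.2 l h.ne' h.seg_l'.symm hl.symm

theorem negAt_of_lone (h : S.PairExchange x i k k' l l') (hq : S.Lone |x| q) (hqi : q ≠ i) :
    S.PairExchange (negAt q x) i k k' l l' := by
  obtain ⟨-, -, hl, hl'⟩ := h.ne_of_lone hq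
  have ea : ∀ r, |negAt q x r| = |x r| := congrFun (abs_negAt q x)
  have e : ∀ r, q ≠ r → negAt q x r = x r := fun r hr => by rw [negAt_apply, if_neg hr.symm]
  exact { h with
    lone := by rw [abs_negAt]; exact h.lone
    abs_eq := by rw [ea, ea]; exact h.abs_eq
    apply_l := by rw [e l hl, e i hqi]; exact h.apply_l
    apply_l' := by rw [e l' hl', e i hqi]; exact h.apply_l'
    not_occurs := by rw [abs_negAt, ea]; exact h.not_occurs }

theorem negAt_self (h : S.PairExchange x i k k' l l') :
    S.PairExchange (negAt i x) i k k' l' l := by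
  obtain ⟨⟨-, -, hl, hl'⟩, -⟩ := h.pairwise_ne
  have ea : ∀ r, |negAt i x r| = |x r| := congrFun (abs_negAt i x)
  have ei : negAt i x i = -x i := by rw [negAt_apply, if_pos rfl]
  have e : ∀ r, i ≠ r → negAt i x r = x r := fun r hr => by rw [negAt_apply, if_neg hr.symm]
  exact { h with
    lone := by rw [abs_negAt]; exact h.lone
    abs_eq := by rw [ea, ea]; exact h.abs_eq
    ne' := h.ne'.symm
    seg_l' := h.seg_l'.symm
    seg_l_ne_last := h.seg_l' ▸ h.seg_l_ne_last
    apply_l := by rw [e l' hl', ei, neg_neg]; exact h.apply_l'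
    apply_l' := by rw [e l hl, ei]; exact h.apply_l
    not_occurs := by rw [abs_negAt, ea, h.seg_l']; exact h.not_occurs }

theorem regular_comp_swap (h : S.PairExchange x i k k' l l') (hx : S.Regular x) :
    S.Regular (x ∘ Equiv.swap k l) := by
  refine hx.comp_swap h.seg_ne ⟨fun q _ hs => ⟨?_, fun hl => ?_⟩, fun _ hl => ?_⟩
    (.of_not_occurs h.not_occurs fun hl => absurd hl h.seg_l_ne_last)
  · rw [h.apply_l]
    by_cases hqi : q = i
    · rw [hqi]
      exact fun e => h.lone.2.1 (abs_eq_zero.2 (by linarith))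
    · exact fun e => h.lone.2.2 q hqi (hs.trans h.seg_k) (by simp only [Pi.abs_apply, e, abs_neg])
  · exact absurd ((h.seg_k.symm.trans hs.symm).trans hl) h.lone.1
  · exact absurd (h.seg_k.symm.trans hl) h.lone.1

theorem conn_comp_swap (h : S.PairExchange x i k k' l l') (hx : S.Regular x) :
    S.conn x (x ∘ Equiv.swap k l) :=
  S.conn_swap hx (h.regular_comp_swap hx) h.seg_ne
    (Or.inr ⟨h.seg_k ▸ h.lone.1, h.seg_l_ne_last⟩)

theorem conn_comp_swap_left (h : S.PairExchange x i k k' l l') (hx : S.Regular x) :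
    S.conn (x ∘ Equiv.swap k l) x := by
  have := S.conn_swap (h.regular_comp_swap hx) (by rwa [comp_swap_comp_swap]) h.seg_ne
    (Or.inr ⟨h.seg_k ▸ h.lone.1, h.seg_l_ne_last⟩)
  rwa [comp_swap_comp_swap] at this

theorem lone_comp_swap (h : S.PairExchange x i k k' l l') (hq : S.Lone |x| q) (hqi : q ≠ i) :
    S.Lone (|x| ∘ Equiv.swap k l) q := by
  obtain ⟨hk, -, hl, -⟩ := h.ne_of_lone hq
  have e := Equiv.swap_apply_of_ne_of_ne hk hl
  refine ⟨hq.1, by rw [Function.comp_apply, e]; exact hq.2.1, fun r hr hs => ?_⟩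
  rw [Function.comp_apply, Function.comp_apply, e, Equiv.swap_apply_def]
  split_ifs with hrk hrl
  · have := hq.2.2 i hqi.symm ((h.seg_k.symm.trans (hrk ▸ hs)))
    rwa [Pi.abs_apply, h.apply_l, abs_neg]
  · exact fun e' => h.not_occurs ⟨q, (hrl ▸ hs).symm, e'.symm⟩
  · exact hq.2.2 r hr hs

theorem lone_comp_swap_l' (h : S.PairExchange x i k k' l l') (hx : S.Regular x) :
    S.Lone (|x| ∘ Equiv.swap k l) l' := by
  obtain ⟨⟨hik, -⟩, -, hkl', -, -⟩ := h.pairwise_ne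
  have e := Equiv.swap_apply_of_ne_of_ne hkl'.symm h.ne'.symm
  have e' : |x| l' = |x| i := congrArg abs h.apply_l'
  refine ⟨h.seg_l' ▸ h.seg_l_ne_last, by rw [Function.comp_apply, e, e']; exact h.lone.2.1,
    fun r hr hs => ?_⟩
  rw [Function.comp_apply, Function.comp_apply, e, e', Equiv.swap_apply_def]
  split_ifs with hrk hrl
  · exact absurd (hrk ▸ hs.trans h.seg_l') h.seg_ne
  · exact h.lone.2.2 k hik.symm h.seg_k
  · rw [Pi.abs_apply, Pi.abs_apply, ne_eq, abs_eq_abs, ← h.apply_l, ← h.apply_l']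
    exact not_or.2 ⟨(hx.1 r l' hr hs).1, (hx.1 r l hrl (hs.trans h.seg_l')).1⟩

theorem conn_negAt (h : S.PairExchange x i k k' l l') (hx : S.Regular x) :
    S.conn (negAt l' (x ∘ Equiv.swap k l)) (negAt i x) := by
  have hy : S.Regular (negAt l' (x ∘ Equiv.swap k l)) :=
    (h.regular_comp_swap hx).negAt_of_lone (h.lone_comp_swap_l' hx)
  have e : (negAt l' (x ∘ Equiv.swap k l) ∘ Equiv.swap i k) ∘ Equiv.swap l l' =
      negAt i x ∘ Equiv.swap k l' := by
    obtain ⟨⟨hik, -, hil, hil'⟩, hkl, hkl', -, -⟩ := h.pairwise_ne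
    have := h.ne'; have := h.apply_l; have := h.apply_l'
    clear hy hx h
    funext q
    simp only [Function.comp, negAt_apply, Equiv.swap_apply_def]
    grind
  refine S.conn_trans (S.conn_swap_of_seg_eq hy h.seg_k.symm h.lone.1) (S.conn_trans
    (S.conn_swap_of_seg_eq (hy.comp_swap_of_seg_eq h.seg_k.symm) h.seg_l'.symm h.seg_l_ne_last) ?_)
  rw [e]
  exact h.negAt_self.conn_comp_swap_left (hx.negAt_of_lone h.lone)

theorem not_conn_comp_swap (h : S.PairExchange x i k k' l l') (hx : S.Regular x)
    (hp : S.Lone |x| p) (hq : S.Lone |x| q) (hpi : p ≠ i) (hqi : q ≠ i)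
    (hc : ¬ S.conn x (negAt p (negAt q x))) :
    ¬ S.conn (x ∘ Equiv.swap k l) (negAt p (negAt q (x ∘ Equiv.swap k l))) := by
  have e : ∀ {r : ι} (y : ι → ℝ), S.Lone |x| r →
      negAt r (y ∘ Equiv.swap k l) = negAt r y ∘ Equiv.swap k l := by
    intro r y hr
    obtain ⟨hk, -, hl, -⟩ := h.ne_of_lone hr
    rw [negAt_comp_swap, Equiv.swap_apply_of_ne_of_ne hk hl]
  rw [e x hq, e _ hp]
  refine fun hc' => hc (S.conn_trans (h.conn_comp_swap hx) (S.conn_trans hc' ?_))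
  exact ((h.negAt_of_lone hq hqi).negAt_of_lone (by rwa [abs_negAt]) hpi).conn_comp_swap_left
    (hx.negAt_negAt hp hq)

theorem not_conn_comp_swap_self (h : S.PairExchange x i k k' l l') (hx : S.Regular x)
    (hq : S.Lone |x| q) (hqi : q ≠ i) (hc : ¬ S.conn x (negAt i (negAt q x))) :
    ¬ S.conn (x ∘ Equiv.swap k l) (negAt l' (negAt q (x ∘ Equiv.swap k l))) := by
  obtain ⟨hk, -, hl, -⟩ := h.ne_of_lone hq
  have e : negAt q (x ∘ Equiv.swap k l) = negAt q x ∘ Equiv.swap k l := by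
    rw [negAt_comp_swap, Equiv.swap_apply_of_ne_of_ne hk hl]
  rw [e]
  exact fun hc' => hc (S.conn_trans (h.conn_comp_swap hx) (S.conn_trans hc'
    ((h.negAt_of_lone hq hqi).conn_negAt (hx.negAt_of_lone hq))))

theorem exists_obstruction (h : S.PairExchange x i k k' l l') (hx : S.Regular x)
    (hp : S.Lone |x| p) (hq : S.Lone |x| q) (hqi : q ≠ i)
    (hc : ¬ S.conn x (negAt p (negAt q x))) :
    ∃ r, S.Obstruction (|x| ∘ Equiv.swap k l) r q := by
  have hx' := h.regular_comp_swap hx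
  by_cases hpi : p = i
  · subst hpi
    exact ⟨l', h.lone_comp_swap_l' hx, h.lone_comp_swap hq hqi,
      fun hf => h.not_conn_comp_swap_self hx hq hqi hc (hf _ hx' rfl)⟩
  · exact ⟨p, h.lone_comp_swap hp hpi, h.lone_comp_swap hq hqi,
      fun hf => h.not_conn_comp_swap hx hp hq hpi hqi hc (hf _ hx' rfl)⟩

theorem card_equalPairs_lt [Fintype ι] (h : S.PairExchange x i k k' l l') :
    (S.equalPairs (|x| ∘ Equiv.swap k l)).card < (S.equalPairs |x|).card := by
  obtain ⟨⟨hik, hik', -⟩, hkl, hkl', hk'l, -⟩ := h.pairwise_ne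
  have hl : |x| l = |x| i := by rw [Pi.abs_apply, h.apply_l, abs_neg]; rfl
  have hl' : |x| l' = |x| i := by rw [Pi.abs_apply, h.apply_l']; rfl
  set broken : Finset (ι × ι) := {(k, k'), (k', k), (l, l')}
  have hbroken : broken.card = 3 :=
    Finset.card_eq_three.2 ⟨_, _, _, by grind [h.ne], by grind, by grind, rfl⟩
  have hsub : broken ⊆ S.equalPairs |x| := by
    simp only [broken, Finset.insert_subset_iff, Finset.singleton_subset_iff, mem_equalPairs]
    exact ⟨⟨h.ne, h.seg_k.trans h.seg_k'.symm, h.abs_eq.symm⟩,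
      ⟨h.ne.symm, h.seg_k'.trans h.seg_k.symm, h.abs_eq⟩, h.ne', h.seg_l'.symm, hl.trans hl'.symm⟩
  have hnew : S.equalPairs (|x| ∘ Equiv.swap k l) ⊆
      insert (i, k) (insert (k, i) (S.equalPairs |x| \ broken)) := by
    obtain ⟨-, -, hlone⟩ := h.lone
    have h1 := h.not_occurs
    have hsk := h.seg_k
    have := h.seg_ne
    simp only [Occurs, not_exists, not_and] at h1
    rintro ⟨u, v⟩
    simp only [mem_equalPairs, Function.comp, Equiv.swap_apply_def, Finset.mem_insert,
      Finset.mem_sdiff, broken, Finset.mem_singleton, Prod.mk.injEq]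
    rw [← Pi.abs_apply] at h1
    grind
  have := Finset.card_le_card hnew
  have := Finset.card_insert_le (i, k) (insert (k, i) (S.equalPairs |x| \ broken))
  have := Finset.card_insert_le (k, i) (S.equalPairs |x| \ broken)
  have := Finset.card_sdiff_add_card_eq_card hsub
  omega

end PairExchange

theorem Obstruction.exists_of_occursTwice [Fintype ι] (h : S.Obstruction w p q) (hi : S.Lone w i)
    (hb : S.OccursTwice w (S.seg i) b) (hs : s ≠ S.last) (h2 : S.OccursTwice w s (w i))
    (h1 : ¬ S.Occurs w s b) :
    ∃ (σ : Equiv.Perm ι) (r r' : ι), S.Obstruction (w ∘ σ) r r' ∧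
      (S.equalPairs (w ∘ σ)).card < (S.equalPairs w).card := by
  obtain ⟨k, k', hk, sk, sk', rfl, hw⟩ := hb
  obtain ⟨l, -, -, rfl, -, -⟩ := id h2
  wlog hqi : q ≠ i generalizing p q
  · rw [not_not] at hqi
    refine this h.symm ?_
    rintro rfl
    exact h.2.2 (hqi ▸ .refl w q)
  obtain ⟨hp, hq, h⟩ := h
  simp only [PairFlippable, not_forall] at h
  obtain ⟨x, hx, rfl, hc⟩ := h
  obtain ⟨l₁, l₂, hl, s₁, s₂, e₁, e₂⟩ := exists_eq_neg_and_eq hx h2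
  have hE : S.PairExchange x i k k' l₁ l₂ := ⟨hi, hk, sk, sk', hw, hl, s₂.trans s₁.symm,
    s₁ ▸ hs, e₁, e₂, s₁ ▸ h1⟩
  obtain ⟨r, hr⟩ := hE.exists_obstruction hx hp hq hqi hc
  exact ⟨Equiv.swap k l₁, r, q, hr, hE.card_equalPairs_lt⟩

/-! ### Reduced patterns and their cuts -/

/-- A pattern of absolute values to which no exchange applies that would break up a pair of equal
values or, in type `D`, bring a zero into the last segment. -/
structure Reduced (S : LinkageSystem ι) (w : ι → ℝ) : Prop where
  lone_pair : ∀ i s b, S.Lone w i → s ≠ S.last → S.OccursTwice w s b →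
    ¬ S.Occurs w (S.seg i) b → S.Occurs w s (w i)
  pair_pair : ∀ i s b, S.Lone w i → s ≠ S.last → S.OccursTwice w s (w i) →
    S.OccursTwice w (S.seg i) b → S.Occurs w s b
  zero_last : ∀ s d, S.typeD → ¬ S.Occurs w S.last 0 → s ≠ S.last → S.Occurs w s 0 →
    S.Occurs w S.last d → S.Occurs w s d
  pair_last : ∀ s b d, s ≠ S.last → S.OccursTwice w s b → S.Occurs w S.last d →
    ¬ S.Occurs w S.last b → S.Occurs w s d

/-- A set `R` of segments and a set `T` of values separating the pattern `w`: segments in `R` are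
saturated with the values outside `T`, which are the only values of the remaining segments. -/
structure IsCut (S : LinkageSystem ι) (w : ι → ℝ) (R : Set ℕ) (T : Set ℝ) : Prop where
  saturated : ∀ s a, s ∈ R → a ∉ T → S.Saturated w s a
  not_occurs : ∀ s a, s ∉ R → a ∈ T → ¬ S.Occurs w s a
  last_mem_iff : ¬ S.typeD → (S.last ∈ R ↔ 0 ∈ T)
  last_mem_iff_typeD : S.typeD → (S.last ∈ R ↔ 0 ∉ T)
  exists_notMem : ∃ u, w u ≠ 0 ∧ w u ∉ T
  exists_mem : ∃ z, S.seg z ≠ S.last ∧ S.seg z ∈ R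

/-- An elementary reason for the signs at the lone entries `i` and `k` to be changeable together. -/
def Adjacent (S : LinkageSystem ι) (w : ι → ℝ) (i k : ι) : Prop :=
  S.Lone w k ∧ (S.seg k = S.seg i ∨ w k = w i ∨
    (¬ S.Occurs w (S.seg i) (w k) ∧ ¬ S.Occurs w (S.seg k) (w i)) ∨
    (S.OccursTwice w (S.seg i) (w k) ∧ S.OccursTwice w (S.seg k) (w i)))

theorem Adjacent.symm (hi : S.Lone w i) (h : S.Adjacent w i k) : S.Adjacent w k i :=
  ⟨hi, h.2.imp Eq.symm (Or.imp Eq.symm (Or.imp And.symm And.symm))⟩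

theorem Adjacent.pairFlippable (hi : S.Lone w i) (h : S.Adjacent w i k) :
    S.PairFlippable w i k := by
  obtain ⟨hk, h | h | h | h⟩ := h
  · exact .of_seg_eq hi hk h.symm
  · exact .of_eq hi hk h.symm
  · exact .of_not_occurs hi hk h.1 h.2
  · exact .of_occursTwice hi hk h.1 h.2

/-- A set of lone entries closed under `Adjacent`, none of which is flippable in the presence of a
zero outside the last segment. -/
structure ClosedClass (S : LinkageSystem ι) (w : ι → ℝ) (A : Set ι) : Prop where
  lone : ∀ i ∈ A, S.Lone w i
  mem_of_adjacent : ∀ i k, i ∈ A → S.Adjacent w i k → k ∈ A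
  not_flippable : (∃ z, S.seg z ≠ S.last ∧ w z = 0) → ∀ i ∈ A, ¬ S.Flippable w i

namespace ClosedClass
variable {A : Set ι}

theorem mem_of_seg_eq (hA : S.ClosedClass w A) (hi : i ∈ A) (hk : S.Lone w k)
    (h : S.seg k = S.seg i) : k ∈ A := hA.mem_of_adjacent i k hi ⟨hk, Or.inl h⟩

theorem mem_of_eq (hA : S.ClosedClass w A) (hi : i ∈ A) (hk : S.Lone w k) (h : w k = w i) :
    k ∈ A := hA.mem_of_adjacent i k hi ⟨hk, Or.inr (Or.inl h)⟩

theorem exists_mem_of_saturated (hA : S.ClosedClass w A) (hw : S.Reduced w)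
    (hm : s = S.last → ∀ i ∈ A, ¬ S.FlippableWithSomeLast w i) (hi : i ∈ A)
    (h1 : S.Saturated w s (w i)) (h2 : S.Saturated w (S.seg i) b) (h3 : ¬ S.Saturated w s b)
    (h4 : s = S.last → b ≠ 0) : ∃ k ∈ A, S.seg k = s ∧ w k = b := by
  have hl := hA.lone i hi
  by_cases hs : s = S.last
  · subst hs
    rw [saturated_last] at h1 h3
    rw [saturated_iff_occursTwice hl.1 (h4 rfl)] at h2
    exact absurd (.of_occursTwice hl h2 h3 h1) (hm rfl i hi)
  rw [saturated_iff_occursTwice hs hl.2.1] at h1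
  by_cases hb : b = 0
  · subst hb
    rw [saturated_zero] at h2 h3
    have hf := Flippable.of_occursTwice hl hs h2 h3 h1
    obtain ⟨z, hz, hz0⟩ := h2
    exact absurd hf (hA.not_flippable ⟨z, hz ▸ hl.1, hz0⟩ i hi)
  · rw [saturated_iff_occursTwice hl.1 hb] at h2
    obtain ⟨k, hk, rfl, rfl⟩ :=
      exists_lone_of_not_saturated (hw.pair_pair i s b hl hs h1 h2) h3
    exact ⟨k, hA.mem_of_adjacent i k hi ⟨hk, Or.inr (Or.inr (Or.inr ⟨h2, h1⟩))⟩, rfl, rfl⟩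

theorem exists_mem_of_not_occurs (hA : S.ClosedClass w A) (hw : S.Reduced w)
    (hm : s = S.last → ∀ i ∈ A, ¬ S.FlippableWithSomeLast w i) (hi : i ∈ A)
    (h1 : ¬ S.Occurs w (S.seg i) b) (h2 : ¬ S.Occurs w s (w i)) (h3 : S.Occurs w s b) :
    ∃ k ∈ A, S.seg k = s ∧ w k = b := by
  have hl := hA.lone i hi
  by_cases hs : s = S.last
  · subst hs
    exact absurd (.of_not_occurs hl h3 h1 h2) (hm rfl i hi)
  by_cases hb : b = 0
  · subst hb
    have hf := Flippable.of_not_occurs hl hs h3 h1 h2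
    obtain ⟨z, hz, hz0⟩ := h3
    exact absurd hf (hA.not_flippable ⟨z, hz ▸ hs, hz0⟩ i hi)
  · have h4 : ¬ S.Saturated w s b := by
      rw [saturated_iff_occursTwice hs hb]
      exact fun h => h2 (hw.lone_pair i s b hl hs h h1)
    obtain ⟨k, hk, rfl, rfl⟩ := exists_lone_of_not_saturated h3 h4
    exact ⟨k, hA.mem_of_adjacent i k hi ⟨hk, Or.inr (Or.inr (Or.inl ⟨h1, h2⟩))⟩, rfl, rfl⟩

theorem saturated_of_occurs (hA : S.ClosedClass w A) (hw : S.Reduced w)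
    (hm : s = S.last → ∀ i ∈ A, ¬ S.FlippableWithSomeLast w i)
    (h0 : s = S.last → b = 0 → S.Saturated w s b) (h1 : ∀ i ∈ A, S.Saturated w s (w i))
    (hi : i ∈ A) (h2 : S.Occurs w (S.seg i) b) : S.Saturated w s b := by
  by_contra hc
  by_cases h3 : S.Saturated w (S.seg i) b
  · obtain ⟨k, hk, -, rfl⟩ := hA.exists_mem_of_saturated hw hm hi (h1 i hi) h3 hc
      fun h h' => hc (h0 h h')
    exact hc (h1 k hk)
  · obtain ⟨k, hl, hk, rfl⟩ := exists_lone_of_not_saturated h2 h3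
    exact hc (h1 k (hA.mem_of_seg_eq hi hl hk))

theorem saturated_of_not_occurs (hA : S.ClosedClass w A) (hw : S.Reduced w)
    (hm : s = S.last → ∀ i ∈ A, ¬ S.FlippableWithSomeLast w i)
    (h1 : ∀ i ∈ A, ¬ S.Occurs w (S.seg i) b) (h2 : S.Occurs w s b) (hi : i ∈ A) :
    S.Saturated w s (w i) := by
  by_contra hc
  by_cases h3 : S.Occurs w s (w i)
  · obtain ⟨k, hl, hk, hk'⟩ := exists_lone_of_not_saturated h3 hc
    exact h1 k (hA.mem_of_eq hi hl hk') (by rwa [hk])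
  · obtain ⟨k, hk, e, -⟩ := hA.exists_mem_of_not_occurs hw hm hi (h1 i hi) h3 h2
    exact h1 k hk (by rwa [e])

theorem saturated_of_saturated (hA : S.ClosedClass w A) (hw : S.Reduced w)
    (hm : s = S.last → ∀ i ∈ A, ¬ S.FlippableWithSomeLast w i)
    (h0 : s = S.last → b = 0 → S.Saturated w s b) (h1 : ∀ i ∈ A, S.Saturated w (S.seg i) b)
    (hi : i ∈ A) (h2 : S.Occurs w s (w i)) : S.Saturated w s b := by
  by_contra hc
  by_cases h3 : S.Saturated w s (w i)
  · obtain ⟨k, hk, e, -⟩ := hA.exists_mem_of_saturated hw hm hi h3 (h1 i hi) hc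
      fun h h' => hc (h0 h h')
    exact hc (e ▸ h1 k hk)
  · obtain ⟨k, hl, hk, hk'⟩ := exists_lone_of_not_saturated h2 h3
    exact hc (hk ▸ h1 k (hA.mem_of_eq hi hl hk'))

theorem not_occurs_of_not_saturated (hA : S.ClosedClass w A) (hw : S.Reduced w)
    (hm : s = S.last → ∀ i ∈ A, ¬ S.FlippableWithSomeLast w i)
    (h1 : ∀ i ∈ A, ¬ S.Occurs w s (w i)) (hi : i ∈ A) (h2 : ¬ S.Saturated w (S.seg i) b) :
    ¬ S.Occurs w s b := by
  intro hc
  by_cases h3 : S.Occurs w (S.seg i) b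
  · obtain ⟨k, hl, hk, rfl⟩ := exists_lone_of_not_saturated h3 h2
    exact h1 k (hA.mem_of_seg_eq hi hl hk) hc
  · obtain ⟨k, hk, -, rfl⟩ := hA.exists_mem_of_not_occurs hw hm hi h3 (h1 i hi) hc
    exact h1 k hk hc

end ClosedClass

/-- The segment of `j` contains the pair of values `±w i`, while that of `i` does not contain
`±w j`. -/
def Dominates (S : LinkageSystem ι) (w : ι → ℝ) (j i : ι) : Prop :=
  S.OccursTwice w (S.seg j) (w i) ∧ ¬ S.Occurs w (S.seg i) (w j)

theorem ClosedClass.dominates_or_dominates {A : Set ι} (hA : S.ClosedClass w A) (hi : i ∈ A)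
    (hj : S.Lone w j) (hjA : j ∉ A) : S.Dominates w j i ∨ S.Dominates w i j := by
  have hl := hA.lone i hi
  have hji : S.Occurs w (S.seg j) (w i) → S.OccursTwice w (S.seg j) (w i) := by
    intro h
    rw [← saturated_iff_occursTwice hj.1 hl.2.1]
    by_contra hc
    obtain ⟨k, hlk, hk, hk'⟩ := exists_lone_of_not_saturated h hc
    exact hjA (hA.mem_of_seg_eq (hA.mem_of_eq hi hlk hk') hj hk.symm)
  have hij : S.Occurs w (S.seg i) (w j) → S.OccursTwice w (S.seg i) (w j) := by
    intro h
    rw [← saturated_iff_occursTwice hl.1 hj.2.1]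
    by_contra hc
    obtain ⟨k, hlk, hk, hk'⟩ := exists_lone_of_not_saturated h hc
    exact hjA (hA.mem_of_eq (hA.mem_of_seg_eq hi hlk hk) hj hk'.symm)
  have hadj : ¬ S.Adjacent w i j := fun h => hjA (hA.mem_of_adjacent i j hi h)
  by_cases b1 : S.Occurs w (S.seg j) (w i) <;> by_cases b2 : S.Occurs w (S.seg i) (w j)
  · exact absurd ⟨hj, Or.inr (Or.inr (Or.inr ⟨hij b2, hji b1⟩))⟩ hadj
  · exact Or.inl ⟨hji b1, b2⟩
  · exact Or.inr ⟨hij b2, b1⟩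
  · exact absurd ⟨hj, Or.inr (Or.inr (Or.inl ⟨b2, b1⟩))⟩ hadj

theorem Dominates.not_dominates_of_adjacent (hw : S.Reduced w) (hi : S.Lone w i) (hj : S.Lone w j)
    (h : S.Adjacent w i k) (hd : S.Dominates w j i) : ¬ S.Dominates w k j := by
  rintro ⟨h1, h2⟩
  obtain ⟨hk, h | h | h | h⟩ := h
  · exact hd.2 (h ▸ h1.occurs)
  · exact h2 (h ▸ hd.1.occurs)
  · exact h2 (hw.lone_pair k (S.seg j) (w i) hk hj.1 hd.1 h.2)
  · exact hd.2 (hw.pair_pair k (S.seg i) (w j) hk hi.1 h.1 h1)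

/-- The lone entries reachable from `p` by a chain of adjacent entries. -/
def flipClass (S : LinkageSystem ι) (w : ι → ℝ) (p : ι) : Set ι :=
  {k | Relation.ReflTransGen (S.Adjacent w) p k}

theorem lone_and_pairFlippable_of_mem_flipClass (hp : S.Lone w p) (hk : k ∈ S.flipClass w p) :
    S.Lone w k ∧ S.PairFlippable w p k := by
  induction hk with
  | refl => exact ⟨hp, .refl w p⟩
  | tail _ h ih => exact ⟨h.1, ih.2.trans hp ih.1 (h.pairFlippable ih.1)⟩

theorem closedClass_flipClass (hp : S.Lone w p)
    (hf : (∃ z, S.seg z ≠ S.last ∧ w z = 0) → ¬ S.Flippable w p) :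
    S.ClosedClass w (S.flipClass w p) where
  lone _ hi := (lone_and_pairFlippable_of_mem_flipClass hp hi).1
  mem_of_adjacent _ _ hi h := hi.tail h
  not_flippable hz _ hi h := by
    obtain ⟨hl, hg⟩ := lone_and_pairFlippable_of_mem_flipClass hp hi
    exact hf hz (.of_pair hp hl hg h)

theorem ClosedClass.forall_dominates_or (hA : S.ClosedClass w (S.flipClass w p))
    (hw : S.Reduced w) (hj : S.Lone w j) (hjA : j ∉ S.flipClass w p) :
    (∀ i ∈ S.flipClass w p, S.Dominates w j i) ∨ ∀ i ∈ S.flipClass w p, S.Dominates w i j := by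
  rcases hA.dominates_or_dominates .refl hj hjA with h | h
  · refine Or.inl fun i hi => ?_
    induction hi with
    | refl => exact h
    | tail hab hbc ih =>
      exact (hA.dominates_or_dominates (hab.tail hbc) hj hjA).resolve_right
        (ih.not_dominates_of_adjacent hw (hA.lone _ hab) hj hbc)
  · refine Or.inr fun i hi => ?_
    induction hi with
    | refl => exact h
    | tail hab hbc ih =>
      refine (hA.dominates_or_dominates (hab.tail hbc) hj hjA).resolve_left fun hd => ?_
      exact hd.not_dominates_of_adjacent hw hbc.1 hj (hbc.symm (hA.lone _ hab)) ih

/-- A closed class none of whose entries can be flipped together with one of the last segment, and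
whose zeros are distributed so that its cuts respect the parity conditions on separable pairs. -/
structure RigidClass (S : LinkageSystem ι) (w : ι → ℝ) (A : Set ι) : Prop
    extends S.ClosedClass w A where
  not_flippableWithSomeLast : ∀ i ∈ A, ¬ S.FlippableWithSomeLast w i
  occurs_zero_iff : ¬ S.typeD → ∀ i ∈ A, (S.Occurs w (S.seg i) 0 ↔ ¬ S.Occurs w S.last (w i))
  occurs_zero_iff_typeD : S.typeD → ∀ i ∈ A, ∀ j ∈ A,
    (S.Occurs w (S.seg i) 0 ↔ S.Occurs w S.last (w j))
  occurs_last_zero : ∀ i ∈ A, S.Occurs w (S.seg i) 0 → S.Occurs w S.last (w i) →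
    S.Occurs w S.last 0

namespace RigidClass
variable {A : Set ι}

theorem isCut_of_dominates (hA : S.RigidClass w A) (hw : S.Reduced w) (hp : p ∈ A)
    (hj : S.Lone w j) (ho : ∀ i ∈ A, S.Dominates w j i) :
    S.IsCut w {s | ∀ i ∈ A, S.Saturated w s (w i)} {b | ∀ i ∈ A, ¬ S.Occurs w (S.seg i) b} where
  saturated s b h1 h2 := by
    simp only [Set.mem_ofPred_eq, not_forall, not_not] at h2
    obtain ⟨i, hi, h2⟩ := h2
    refine hA.saturated_of_occurs hw (fun _ => hA.not_flippableWithSomeLast) ?_ h1 hi h2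
    rintro rfl rfl
    exact saturated_last.2 (hA.occurs_last_zero i hi h2 (saturated_last.1 (h1 i hi)))
  not_occurs s b h1 h2 hc := h1 fun i hi =>
    hA.saturated_of_not_occurs hw (fun _ => hA.not_flippableWithSomeLast) h2 hc hi
  last_mem_iff hD := by
    simp only [Set.mem_ofPred_eq, saturated_last]
    exact forall₂_congr fun i hi => by rw [hA.occurs_zero_iff hD i hi, not_not]
  last_mem_iff_typeD hD := by
    simp only [Set.mem_ofPred_eq, saturated_last, not_forall, not_not]
    exact ⟨fun h => ⟨p, hp, (hA.occurs_zero_iff_typeD hD p hp p hp).2 (h p hp)⟩,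
      fun ⟨i, hi, h⟩ k hk => (hA.occurs_zero_iff_typeD hD i hi k hk).1 h⟩
  exists_notMem := ⟨p, (hA.lone p hp).2.1, fun h => h p hp ⟨p, rfl, rfl⟩⟩
  exists_mem := ⟨j, hj.1, fun i hi =>
    (saturated_iff_occursTwice hj.1 (hA.lone i hi).2.1).2 (ho i hi).1⟩

theorem isCut_of_dominated (hA : S.RigidClass w A) (hw : S.Reduced w) (hp : p ∈ A)
    (hj : S.Lone w j) (ho : ∀ i ∈ A, S.Dominates w i j) :
    S.IsCut w {s | ∃ i ∈ A, S.Occurs w s (w i)} {b | ∃ i ∈ A, ¬ S.Saturated w (S.seg i) b} where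
  saturated s b h1 h2 := by
    simp only [Set.mem_ofPred_eq, not_exists, not_and, not_not] at h1 h2
    obtain ⟨i, hi, h1⟩ := h1
    refine hA.saturated_of_saturated hw (fun _ => hA.not_flippableWithSomeLast) ?_ h2 hi h1
    rintro rfl rfl
    exact saturated_last.2 (hA.occurs_last_zero i hi (saturated_zero.1 (h2 i hi)) h1)
  not_occurs s b h1 h2 := by
    obtain ⟨i, hi, h2⟩ := h2
    exact hA.not_occurs_of_not_saturated hw (fun _ => hA.not_flippableWithSomeLast)
      (fun k hk hc => h1 ⟨k, hk, hc⟩) hi h2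
  last_mem_iff hD := by
    simp only [Set.mem_ofPred_eq, saturated_zero]
    exact exists_congr fun i => and_congr_right fun hi => by
      rw [hA.occurs_zero_iff hD i hi, not_not]
  last_mem_iff_typeD hD := by
    simp only [Set.mem_ofPred_eq, saturated_zero, not_exists, not_and, not_not]
    exact ⟨fun ⟨i, hi, h⟩ k hk => (hA.occurs_zero_iff_typeD hD k hk i hi).2 h,
      fun h => ⟨p, hp, (hA.occurs_zero_iff_typeD hD p hp p hp).1 (h p hp)⟩⟩
  exists_notMem := by
    refine ⟨j, hj.2.1, ?_⟩
    rintro ⟨i, hi, h⟩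
    exact h ((saturated_iff_occursTwice (hA.lone i hi).1 hj.2.1).2 (ho i hi).1)
  exists_mem := ⟨p, (hA.lone p hp).1, p, hp, p, rfl, rfl⟩

theorem exists_isCut (hA : S.RigidClass w (S.flipClass w p)) (hw : S.Reduced w)
    (h : S.Obstruction w p j) : ∃ R T, S.IsCut w R T := by
  have hjA : j ∉ S.flipClass w p := fun hj =>
    h.2.2 (lone_and_pairFlippable_of_mem_flipClass h.1 hj).2
  rcases hA.forall_dominates_or hw h.2.1 hjA with ho | ho
  · exact ⟨_, _, hA.isCut_of_dominates hw .refl h.2.1 ho⟩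
  · exact ⟨_, _, hA.isCut_of_dominated hw .refl h.2.1 ho⟩

end RigidClass

theorem rigidClass_of_not_typeD (hp : S.Lone w p) (hD : ¬ S.typeD) (hf : ¬ S.Flippable w p) :
    S.RigidClass w (S.flipClass w p) := by
  have hf' : ∀ i ∈ S.flipClass w p, ¬ S.Flippable w i := fun i hi h =>
    have hi := lone_and_pairFlippable_of_mem_flipClass hp hi
    hf (.of_pair hp hi.1 hi.2 h)
  have hC := closedClass_flipClass hp fun _ => hf
  have hiff : ∀ i ∈ S.flipClass w p,
      (S.Occurs w (S.seg i) 0 ↔ ¬ S.Occurs w S.last (w i)) := fun i hi => by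
    have : ¬ (S.Occurs w (S.seg i) 0 ↔ S.Occurs w S.last (w i)) :=
      fun h => hf' i hi (.of_iff (hC.lone i hi) hD h)
    tauto
  exact { hC with
    not_flippableWithSomeLast := fun i hi h => hf' i hi (h.flippable (hC.lone i hi) (Or.inl hD))
    occurs_zero_iff := fun _ => hiff
    occurs_zero_iff_typeD := fun h => absurd h hD
    occurs_last_zero := fun i hi h h' => absurd h' ((hiff i hi).1 h) }

theorem rigidClass_of_typeD_of_occurs_last_zero (hp : S.Lone w p) (hD : S.typeD)
    (h0 : S.Occurs w S.last 0) (hf : ¬ S.Flippable w p) : S.RigidClass w (S.flipClass w p) := by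
  have hf' : ∀ i ∈ S.flipClass w p, ¬ S.Flippable w i := fun i hi h =>
    have hi := lone_and_pairFlippable_of_mem_flipClass hp hi
    hf (.of_pair hp hi.1 hi.2 h)
  have hC := closedClass_flipClass hp fun _ => hf
  have hM : ∀ i ∈ S.flipClass w p, ¬ S.FlippableWithSomeLast w i := fun i hi h =>
    hf' i hi (h.flippable (hC.lone i hi) (Or.inr h0))
  have hboth : ∀ i ∈ S.flipClass w p, S.Occurs w (S.seg i) 0 ∧ S.Occurs w S.last (w i) := by
    intro i hi
    have hl := hC.lone i hi
    have h1 := fun h h' => hf' i hi (.of_typeD hl hD h h')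
    have h2 := fun h h' => hM i hi (.of_not_occurs hl h0 h h')
    have h3 := fun h h' => hM i hi (.of_typeD hl hD h h')
    tauto
  exact { hC with
    not_flippableWithSomeLast := hM
    occurs_zero_iff := fun h => absurd hD h
    occurs_zero_iff_typeD := fun _ i hi j hj => iff_of_true (hboth i hi).1 (hboth j hj).2
    occurs_last_zero := fun _ _ _ _ => h0 }

theorem rigidClass_of_typeD_of_not_occurs_last_zero (hp : S.Lone w p) (hD : S.typeD)
    (h0 : ¬ S.Occurs w S.last 0) (hs : ¬ S.FlippableWithLast w p)
    (hf : (∃ z, S.seg z ≠ S.last ∧ w z = 0) → ¬ S.Flippable w p) :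
    S.RigidClass w (S.flipClass w p) := by
  have hC := closedClass_flipClass hp hf
  have hM : ∀ i ∈ S.flipClass w p, ¬ S.FlippableWithSomeLast w i := fun i hi h =>
    have hi := lone_and_pairFlippable_of_mem_flipClass hp hi
    hs (.of_pair hp hi.1 hi.2 (h.flippableWithLast hi.1 hD))
  have hseg : ∀ i ∈ S.flipClass w p, ¬ S.Occurs w (S.seg i) 0 := by
    intro i hi h
    have hfi := Flippable.of_typeD (hC.lone i hi) hD h fun h => h0 h.2
    obtain ⟨z, hz, hz0⟩ := h
    exact hC.not_flippable ⟨z, hz ▸ (hC.lone i hi).1, hz0⟩ i hi hfi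
  have hlast : ∀ i ∈ S.flipClass w p, ¬ S.Occurs w S.last (w i) := fun i hi h =>
    hM i hi (.of_typeD (hC.lone i hi) hD (fun h => h0 h.2) h)
  exact { hC with
    not_flippableWithSomeLast := hM
    occurs_zero_iff := fun h => absurd hD h
    occurs_zero_iff_typeD := fun _ i hi j hj => iff_of_false (hseg i hi) (hlast j hj)
    occurs_last_zero := fun i hi h => absurd h (hseg i hi) }

/-- The lone entries that can be flipped together with any entry of the last segment. -/
def lastFlipClass (S : LinkageSystem ι) (w : ι → ℝ) : Set ι :=
  {i | S.Lone w i ∧ S.FlippableWithLast w i}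

theorem closedClass_lastFlipClass (hp : p ∈ S.lastFlipClass w) (hf : ¬ S.Flippable w p) :
    S.ClosedClass w (S.lastFlipClass w) where
  lone _ hi := hi.1
  mem_of_adjacent _ _ hi h := ⟨h.1, .of_pair h.1 hi.1 (h.pairFlippable hi.1).symm hi.2⟩
  not_flippable _ _ hi h := hf (.of_pair hp.1 hi.1 (FlippableWithLast.pair hi.1 hp.2 hi.2) h)

theorem saturated_of_not_occurs_last (hw : S.Reduced w) (hD : S.typeD)
    (h0 : ¬ S.Occurs w S.last 0) (hs : s ≠ S.last)
    (h1 : ∀ i ∈ S.lastFlipClass w, ¬ S.Occurs w (S.seg i) b) (h2 : ¬ S.Occurs w S.last b)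
    (h3 : S.Occurs w s b) (hk : S.seg k = S.last) : S.Saturated w s (w k) := by
  have hmem : ∀ i, S.Lone w i → S.FlippableWithSomeLast w i → i ∈ S.lastFlipClass w :=
    fun i hi h => ⟨hi, h.flippableWithLast hi hD⟩
  by_contra hc
  by_cases hd : S.Occurs w s (w k)
  · obtain ⟨q, hq, rfl, e⟩ := exists_lone_of_not_saturated hd hc
    exact h1 q (hmem q hq (.of_typeD hq hD (fun h => h0 h.2) ⟨k, hk, e.symm⟩)) h3
  by_cases hb : b = 0
  · exact hd (hw.zero_last s (w k) hD h0 hs (hb ▸ h3) ⟨k, hk, rfl⟩)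
  by_cases ht : S.Saturated w s b
  · rw [saturated_iff_occursTwice hs hb] at ht
    exact hd (hw.pair_last s b (w k) hs ht ⟨k, hk, rfl⟩ h2)
  · obtain ⟨q, hq, rfl, rfl⟩ := exists_lone_of_not_saturated h3 ht
    exact h1 q (hmem q hq (.of_not_occurs hq ⟨k, hk, rfl⟩ hd h2)) h3

theorem isCut_lastFlipClass (hw : S.Reduced w) (hD : S.typeD) (h0 : ¬ S.Occurs w S.last 0)
    (hp : p ∈ S.lastFlipClass w) (hf : ¬ S.Flippable w p)
    (hz : ∃ z, S.seg z ≠ S.last ∧ w z = 0) :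
    S.IsCut w
      {s | s ≠ S.last ∧ (∀ i ∈ S.lastFlipClass w, S.Saturated w s (w i)) ∧
        ∀ k, S.seg k = S.last → S.Saturated w s (w k)}
      {b | (∀ i ∈ S.lastFlipClass w, ¬ S.Occurs w (S.seg i) b) ∧ ¬ S.Occurs w S.last b} := by
  have hA := closedClass_lastFlipClass hp hf
  have hT0 : ∀ i ∈ S.lastFlipClass w, ¬ S.Occurs w (S.seg i) 0 := fun i hi h =>
    hA.not_flippable hz i hi (.of_typeD hi.1 hD h fun h => h0 h.2)
  have hR : ∀ {s b}, (∀ i ∈ S.lastFlipClass w, ¬ S.Occurs w (S.seg i) b) →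
      ¬ S.Occurs w S.last b → S.Occurs w s b → s ≠ S.last ∧
        (∀ i ∈ S.lastFlipClass w, S.Saturated w s (w i)) ∧
        ∀ k, S.seg k = S.last → S.Saturated w s (w k) := by
    intro s b h1 h2 h3
    have hs : s ≠ S.last := by rintro rfl; exact h2 h3
    exact ⟨hs, fun i hi => hA.saturated_of_not_occurs hw (fun e => absurd e hs) h1 h3 hi,
      fun k hk => saturated_of_not_occurs_last hw hD h0 hs h1 h2 h3 hk⟩
  constructor
  · rintro s b ⟨hs, h1, h2⟩ h3
    by_cases hm : S.Occurs w S.last b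
    · obtain ⟨k, hk, rfl⟩ := hm
      exact h2 k hk
    · simp only [Set.mem_ofPred_eq, not_and_or, not_forall, not_not, hm, or_false] at h3
      obtain ⟨i, hi, h4⟩ := h3
      exact hA.saturated_of_occurs hw (fun e => absurd e hs) (fun e => absurd e hs) h1 hi h4
  · rintro s b h1 ⟨h2, h3⟩ h4
    exact h1 (hR h2 h3 h4)
  · exact fun h => absurd hD h
  · exact fun _ => iff_of_false (fun h => h.1 rfl) (not_not.2 ⟨hT0, h0⟩)
  · exact ⟨p, hp.1.2.1, fun h => h.1 p hp ⟨p, rfl, rfl⟩⟩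
  · obtain ⟨z, hz, hz0⟩ := hz
    exact ⟨z, hz, hR hT0 h0 ⟨z, rfl, hz0⟩⟩

theorem Reduced.exists_isCut (hw : S.Reduced w) (h : S.Obstruction w p j) :
    ∃ R T, S.IsCut w R T := by
  by_cases hc : S.typeD ∧ ¬ S.Occurs w S.last 0 ∧ ¬ ∃ z, S.seg z ≠ S.last ∧ w z = 0
  · obtain ⟨hD, h0, hz⟩ := hc
    wlog hs : ¬ S.FlippableWithLast w p generalizing p j
    · exact this h.symm fun hj => h.2.2 (FlippableWithLast.pair h.2.1 (not_not.1 hs) hj)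
    exact (rigidClass_of_typeD_of_not_occurs_last_zero h.1 hD h0 hs fun h => absurd h hz)
      |>.exists_isCut hw h
  · wlog hf : ¬ S.Flippable w p generalizing p j
    · exact this h.symm fun hj => h.2.2 (Flippable.pair h.2.1 (not_not.1 hf) hj)
    by_cases hD : S.typeD
    · by_cases h0 : S.Occurs w S.last 0
      · exact (rigidClass_of_typeD_of_occurs_last_zero h.1 hD h0 hf).exists_isCut hw h
      by_cases hs : S.FlippableWithLast w p
      · have hz : ∃ z, S.seg z ≠ S.last ∧ w z = 0 := by tauto
        exact ⟨_, _, isCut_lastFlipClass hw hD h0 ⟨h.1, hs⟩ hf hz⟩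
      · exact (rigidClass_of_typeD_of_not_occurs_last_zero h.1 hD h0 hs fun _ => hf)
          |>.exists_isCut hw h
    · exact (rigidClass_of_not_typeD h.1 hD hf).exists_isCut hw h

/-! ### Reduction of an obstruction -/

theorem Obstruction.ne_zero_of_occursTwice (h : S.Obstruction w p q)
    (hb : S.OccursTwice w s b) : b ≠ 0 := by
  obtain ⟨x, hx, rfl⟩ := h.exists_regular
  obtain ⟨i, j, hij, rfl, hj, rfl, e⟩ := hb
  exact abs_ne_zero.2 (hx.ne_zero_of_abs_eq hij hj.symm e)

section
variable [Fintype ι]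

/-- Decreases under every exchange that a pattern failing to be `Reduced` admits. -/
noncomputable def complexity (S : LinkageSystem ι) (w : ι → ℝ) : ℕ :=
  2 * (S.equalPairs w).card + if S.Occurs w S.last 0 then 0 else 1

theorem complexity_lt_of_card_lt {v : ι → ℝ}
    (h : (S.equalPairs v).card < (S.equalPairs w).card) : S.complexity v < S.complexity w := by
  simp only [complexity]
  split_ifs <;> omega

/-- Some rearrangement of the pattern `w` is obstructed and has smaller complexity. -/
def Reducible (S : LinkageSystem ι) (w : ι → ℝ) : Prop :=
  ∃ (σ : Equiv.Perm ι) (r r' : ι),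
    S.Obstruction (w ∘ σ) r r' ∧ S.complexity (w ∘ σ) < S.complexity w

theorem Obstruction.reducible_of_exchangeable (h : S.Obstruction w p q)
    (he : S.Exchangeable w i k) (hp : S.seg (Equiv.swap i k p) ≠ S.last)
    (hq : S.seg (Equiv.swap i k q) ≠ S.last) (hb : S.OccursTwice w (S.seg k) (w k)) :
    S.Reducible w := by
  obtain ⟨k', hk, hs, hw⟩ : ∃ k', k ≠ k' ∧ S.seg k' = S.seg k ∧ w k' = w k := by
    obtain ⟨a, b, hab, ha, hb, ha', hb'⟩ := hb
    by_cases hka : k = a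
    · exact ⟨b, hka ▸ hab, hb, hb'⟩
    · exact ⟨a, hka, ha, ha'⟩
  exact ⟨_, _, _, h.comp_swap he hp hq, complexity_lt_of_card_lt
    (Finset.card_lt_card (equalPairs_comp_swap_ssubset he hk hs hw))⟩

theorem Obstruction.reducible_of_lone_pair (h : S.Obstruction w p q) (hi : S.Lone w i)
    (hs : s ≠ S.last) (hb : S.OccursTwice w s b) (h1 : ¬ S.Occurs w (S.seg i) b)
    (h2 : ¬ S.Occurs w s (w i)) : S.Reducible w := by
  obtain ⟨k, -, -, rfl, -, rfl, -⟩ := id hb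
  have he : S.Exchangeable w i k := ⟨h1, h2, fun e => absurd e hs, fun e => absurd e hi.1⟩
  have hne : ∀ p, S.Lone w p → S.seg (Equiv.swap i k p) ≠ S.last := fun p hp => by
    rw [Equiv.swap_apply_def]
    split_ifs
    exacts [hs, hi.1, hp.1]
  exact h.reducible_of_exchangeable he (hne p h.1) (hne q h.2.1) hb

theorem Obstruction.reducible_of_pair_last (h : S.Obstruction w p q) (hs : s ≠ S.last)
    (hb : S.OccursTwice w s b) (hl : S.seg l = S.last)
    (h2 : ¬ S.Occurs w S.last b) (h3 : ¬ S.Occurs w s (w l)) : S.Reducible w := by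
  obtain ⟨k, -, -, rfl, -, rfl, -⟩ := id hb
  have he : S.Exchangeable w l k :=
    ⟨hl ▸ h2, h3, fun e => absurd e hs, fun _ => Or.inr (h.ne_zero_of_occursTwice hb)⟩
  have hne : ∀ p, S.Lone w p → S.seg (Equiv.swap l k p) ≠ S.last := fun p hp => by
    rw [Equiv.swap_apply_of_ne_of_ne]
    exacts [hp.1, fun e => hp.1 (e ▸ hl), fun e => hp.not_occursTwice (e ▸ hb)]
  exact h.reducible_of_exchangeable he (hne p h.1) (hne q h.2.1) hb

theorem Obstruction.reducible_of_zero_last (h : S.Obstruction w p q) (hD : S.typeD)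
    (h0 : ¬ S.Occurs w S.last 0) (hk0 : w k = 0)
    (hl : S.seg l = S.last) (h1 : ¬ S.Occurs w (S.seg k) (w l)) : S.Reducible w := by
  have he : S.Exchangeable w k l :=
    ⟨h1, by rwa [hl, hk0], fun _ => Or.inl hD, fun _ => Or.inl hD⟩
  have hne : ∀ p, S.Lone w p → S.seg (Equiv.swap k l p) ≠ S.last := fun p hp => by
    rw [Equiv.swap_apply_of_ne_of_ne]
    exacts [hp.1, fun e => hp.2.1 (e ▸ hk0), fun e => hp.1 (e ▸ hl)]
  refine ⟨_, _, _, h.comp_swap he (hne p h.1) (hne q h.2.1), ?_⟩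
  have hc := Finset.card_le_card (equalPairs_comp_swap_subset he)
  have hz : S.Occurs (w ∘ Equiv.swap k l) S.last 0 := ⟨l, hl, by simp [hk0]⟩
  simp only [complexity, hz, h0, if_true, if_false]
  omega

theorem Obstruction.reducible_of_not_reduced (h : S.Obstruction w p q) (hw : ¬ S.Reduced w) :
    S.Reducible w := by
  by_contra hr
  refine hw ⟨fun i s b hi hs hb h1 => ?_, fun i s b hi hs h2 hb => ?_,
    fun s d hD h0 hs hz hd => ?_, fun s b d hs hb hd h2 => ?_⟩ <;> by_contra hc
  · exact hr (h.reducible_of_lone_pair hi hs hb h1 hc)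
  · obtain ⟨σ, r, r', hσ, hlt⟩ := h.exists_of_occursTwice hi hb hs h2 hc
    exact hr ⟨σ, r, r', hσ, complexity_lt_of_card_lt hlt⟩
  · obtain ⟨k, rfl, hk0⟩ := hz
    obtain ⟨l, hl, rfl⟩ := hd
    exact hr (h.reducible_of_zero_last hD h0 hk0 hl hc)
  · obtain ⟨l, hl, rfl⟩ := hd
    exact hr (h.reducible_of_pair_last hs hb hl h2 hc)

end

theorem Obstruction.exists_isCut [Finite ι] (h : S.Obstruction w p q) :
    ∃ (σ : Equiv.Perm ι) (R : Set ℕ) (T : Set ℝ), S.IsCut (w ∘ σ) R T := by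
  have := Fintype.ofFinite ι
  induction hn : S.complexity w using Nat.strong_induction_on generalizing w p q with
  | _ n ih =>
    by_cases hw : S.Reduced w
    · exact ⟨1, hw.exists_isCut h⟩
    · obtain ⟨τ, r, r', hτ, hlt⟩ := h.reducible_of_not_reduced hw
      obtain ⟨σ, hσ⟩ := ih _ (hn ▸ hlt) hτ rfl
      exact ⟨τ * σ, hσ⟩

end LinkageSystem

/-! ### Multiplicities -/

namespace Segmentation
variable {ι : Type*} [Fintype ι] {S : Segmentation ι} {x w : ι → ℝ} {s : ℕ} {a : ℝ}

/-- `n_s^w(a)`, for a vector `w` of absolute values. -/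
noncomputable def mult (S : Segmentation ι) (w : ι → ℝ) (s : ℕ) (a : ℝ) : ℕ :=
  ({i | S.seg i = s ∧ w i = a} : Finset ι).card

/-- The largest multiplicity of `a` in segment `s` that regularity permits. -/
noncomputable def capacity (S : Segmentation ι) (s : ℕ) (a : ℝ) : ℕ :=
  if s = S.last ∨ a = 0 then 1 else 2

theorem mult_pos_iff : 0 < S.mult w s a ↔ S.Occurs w s a := by
  simp [mult, Finset.card_pos, Finset.Nonempty, Occurs]

theorem capacity_le_mult_iff : S.capacity s a ≤ S.mult w s a ↔ S.Saturated w s a := by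
  unfold capacity Saturated
  split_ifs
  · exact mult_pos_iff
  · simp only [mult, Nat.succ_le_iff, Finset.one_lt_card_iff, Finset.mem_filter_univ, OccursTwice]
    grind

theorem Regular.mult_le_capacity (hx : S.Regular x) (s : ℕ) (a : ℝ) :
    S.mult |x| s a ≤ S.capacity s a := by
  unfold mult capacity
  split_ifs with h
  · refine Finset.card_le_one.2 fun i hi j hj => by_contra fun hij => ?_
    simp only [Finset.mem_filter_univ] at hi hj
    have hs := hi.1.trans hj.1.symm
    have hneg := hx.eq_neg_of_abs_eq hij hs (hi.2.trans hj.2.symm)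
    rcases h with rfl | rfl
    · exact (hx.1 i j hij hs).2 hi.1 hneg
    · exact (hx.1 i j hij hs).1 ((abs_eq_zero.1 hi.2).trans (abs_eq_zero.1 hj.2).symm)
  · by_contra! hc
    obtain ⟨i, j, k, hi, hj, hk, hij, hik, hjk⟩ := Finset.two_lt_card_iff.1 hc
    simp only [Finset.mem_filter_univ] at hi hj hk
    have e1 := hx.eq_neg_of_abs_eq hij (hi.1.trans hj.1.symm) (hi.2.trans hj.2.symm)
    have e2 := hx.eq_neg_of_abs_eq hik (hi.1.trans hk.1.symm) (hi.2.trans hk.2.symm)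
    exact (hx.1 j k hjk (hj.1.trans hk.1.symm)).1 (neg_injective (e1.symm.trans e2))

theorem card_filter_mem_eq_sum_mult (S : Segmentation ι) (w : ι → ℝ) (P : Finset (ℕ × ℝ)) :
    ({i | (S.seg i, w i) ∈ P} : Finset ι).card = ∑ p ∈ P, S.mult w p.1 p.2 := by
  refine (Finset.card_eq_sum_card_fiberwise (f := fun i => (S.seg i, w i))
    fun i hi => (Finset.mem_filter_univ i).1 hi).trans
    (Finset.sum_congr rfl fun p hp => congrArg Finset.card ?_)
  ext i
  simp only [Finset.mem_filter, Finset.mem_univ, true_and, Prod.ext_iff]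
  exact and_iff_right_of_imp fun e => (Prod.ext e.1 e.2 : (S.seg i, w i) = p) ▸ hp

theorem card_filter_and_not_add_card (p q : ι → Prop) :
    ({i | p i ∧ ¬ q i} : Finset ι).card + ({i | q i} : Finset ι).card =
      ({i | p i} : Finset ι).card + ({i | ¬ p i ∧ q i} : Finset ι).card := by
  simp only [Finset.card_filter, ← Finset.sum_add_distrib]
  refine Finset.sum_congr rfl fun i _ => ?_
  by_cases hp : p i <;> by_cases hq : q i <;> simp [hp, hq]

theorem card_filter_mem_comp_perm (σ : Equiv.Perm ι) (w : ι → ℝ) (T : Set ℝ) :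
    ({i | (w ∘ σ) i ∈ T} : Finset ι).card = ({i | w i ∈ T} : Finset ι).card := by
  simp only [Finset.card_filter, Function.comp]
  exact Equiv.sum_comp σ fun i => if w i ∈ T then 1 else 0

end Segmentation

namespace LinkageSystem
variable {ι : Type*} [DecidableEq ι] [Finite ι] {S : LinkageSystem ι} {x w : ι → ℝ}
  {R : Set ℕ} {T : Set ℝ}

theorem IsCut.exists_finset_mem_iff (h : S.IsCut w R T) :
    ∃ P : Finset (ℕ × ℝ), ∀ s a, (s, a) ∈ P ↔ s ∈ R ∧ a ∉ T := by
  have := Fintype.ofFinite ι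
  refine ⟨({i | S.seg i ∈ R ∧ w i ∉ T} : Finset ι).image fun i => (S.seg i, w i), fun s a => ?_⟩
  simp only [Finset.mem_image, Finset.mem_filter_univ, Prod.mk.injEq]
  constructor
  · rintro ⟨i, hi, rfl, rfl⟩
    exact hi
  · rintro ⟨hs, ha⟩
    obtain ⟨i, rfl, rfl⟩ := (h.saturated s a hs ha).occurs
    exact ⟨i, ⟨hs, ha⟩, rfl, rfl⟩

theorem IsCut.saturated_and_not_occurs_of_regular (h : S.IsCut w R T) (hx : S.Regular x)
    {σ : Equiv.Perm ι} (hσ : |x| = w ∘ σ) :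
    (∀ s a, s ∈ R → a ∉ T → S.Saturated |x| s a) ∧
      ∀ s a, s ∉ R → a ∈ T → ¬ S.Occurs |x| s a := by
  have := Fintype.ofFinite ι
  obtain ⟨P, hP⟩ := h.exists_finset_mem_iff
  have count (v : ι → ℝ) : (∑ p ∈ P, S.mult v p.1 p.2) + ({i | v i ∈ T} : Finset ι).card =
      ({i | S.seg i ∈ R} : Finset ι).card +
        ({i | S.seg i ∉ R ∧ v i ∈ T} : Finset ι).card := by
    rw [← S.card_filter_mem_eq_sum_mult]
    simp only [hP]
    exact Segmentation.card_filter_and_not_add_card (fun i => S.seg i ∈ R) fun i => v i ∈ T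
  have hw : ({i | S.seg i ∉ R ∧ w i ∈ T} : Finset ι).card = 0 :=
    Finset.card_eq_zero.2 (Finset.filter_eq_empty_iff.2 fun i _ hi =>
      h.not_occurs _ _ hi.1 hi.2 ⟨i, rfl, rfl⟩)
  have hle : ∀ p ∈ P, S.mult |x| p.1 p.2 ≤ S.mult w p.1 p.2 := fun p hp =>
    (hx.mult_le_capacity _ _).trans (Segmentation.capacity_le_mult_iff.2
      (h.saturated _ _ ((hP _ _).1 hp).1 ((hP _ _).1 hp).2))
  have hsum := Finset.sum_le_sum hle
  have hT : ({i | |x| i ∈ T} : Finset ι).card = ({i | w i ∈ T} : Finset ι).card := by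
    rw [hσ, Segmentation.card_filter_mem_comp_perm]
  have hcx := count |x|
  have hcw := count w
  refine ⟨fun s a hs ha => ?_, ?_⟩
  · have heq := (Finset.sum_eq_sum_iff_of_le hle).1 (by omega) _ ((hP s a).2 ⟨hs, ha⟩)
    rw [← Segmentation.capacity_le_mult_iff, heq]
    exact Segmentation.capacity_le_mult_iff.2 (h.saturated s a hs ha)
  · rintro s a hs ha ⟨i, rfl, rfl⟩
    have hx0 : ({i | S.seg i ∉ R ∧ |x| i ∈ T} : Finset ι).card = 0 := by omega
    exact Finset.filter_eq_empty_iff.1 (Finset.card_eq_zero.1 hx0) (Finset.mem_univ i) ⟨hs, ha⟩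

theorem IsCut.of_regular (h : S.IsCut w R T) (hx : S.Regular x) {σ : Equiv.Perm ι}
    (hσ : |x| = w ∘ σ) : S.IsCut |x| R T where
  saturated := (h.saturated_and_not_occurs_of_regular hx hσ).1
  not_occurs := (h.saturated_and_not_occurs_of_regular hx hσ).2
  last_mem_iff := h.last_mem_iff
  last_mem_iff_typeD := h.last_mem_iff_typeD
  exists_notMem := by
    obtain ⟨u, hu⟩ := h.exists_notMem
    exact ⟨σ.symm u, by simpa only [hσ, Function.comp, Equiv.apply_symm_apply] using hu⟩
  exists_mem := h.exists_mem

end LinkageSystem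

/-! ### Segments -/

section
variable {n : ℕ} {ct : CType} {I : Finset (Fin n)} {i j k : Fin n} {s : ℕ}

/-- The number of the segment that contains the `0`-based index `i`. For nonstandard `I` this refers
to the uncorrected values `q_s`. -/
noncomputable def segIndex (I : Finset (Fin n)) (i : Fin n) : ℕ :=
  1 + {k ∈ Finset.univ \ I | k < i}.card

theorem mval_eq (I : Finset (Fin n)) : mval n I = 1 + (Finset.univ \ I).card := by
  simp [mval, Qlist, add_comm]

theorem one_le_segIndex (I : Finset (Fin n)) (i : Fin n) : 1 ≤ segIndex I i := Nat.le_add_right _ _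

theorem segIndex_le_mval (I : Finset (Fin n)) (i : Fin n) : segIndex I i ≤ mval n I := by
  rw [mval_eq]
  exact Nat.add_le_add_left (Finset.card_filter_le _ _) 1

theorem segIndex_mono (I : Finset (Fin n)) : Monotone (segIndex I) := fun _ _ h =>
  Nat.add_le_add_left (Finset.card_le_card (Finset.monotone_filter_right _ fun _ _ hk =>
    hk.trans_le h)) 1

theorem segIndex_eq_segIndex_iff (h : i ≤ j) :
    segIndex I i = segIndex I j ↔ ∀ k, i ≤ k → k < j → k ∈ I := by
  rw [← (segIndex_mono I h).ge_iff_eq, segIndex, segIndex, Nat.add_le_add_iff_left,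
    Finset.eq_iff_card_ge_of_superset
      (Finset.monotone_filter_right _ fun _ _ hk => hk.trans_le h), Finset.filter_inj']
  simp only [Finset.mem_sdiff, Finset.mem_univ, true_and]
  exact ⟨fun H k hi hj => by_contra fun hk => hi.not_gt ((H hk).1 hj),
    fun H k hk => ⟨fun hj => not_le.1 fun hi => hk (H k hi hj), fun hi => hi.trans_le h⟩⟩

theorem segIndex_eq_mval_iff : segIndex I i = mval n I ↔ ∀ k, i ≤ k → k ∈ I := by
  rw [mval_eq, segIndex, Nat.add_left_cancel_iff, Finset.card_filter_eq_iff]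
  simp only [Finset.mem_sdiff, Finset.mem_univ, true_and]
  exact forall_congr' fun k => by rw [← not_le, not_imp_not]

theorem segIndex_lt_mval_of_notMem (hk : k ∉ I) : segIndex I k < mval n I :=
  (segIndex_le_mval I k).lt_of_ne fun h => hk (segIndex_eq_mval_iff.1 h k le_rfl)

theorem segIndex_succ (hk : k.1 + 1 < n) (h : k ∈ I) : segIndex I ⟨k + 1, hk⟩ = segIndex I k := by
  refine ((segIndex_eq_segIndex_iff (Fin.le_def.2 (Nat.le_succ _))).2 fun l h1 h2 => ?_).symm
  exact Fin.ext (le_antisymm (Nat.lt_succ_iff.1 h2) h1) ▸ h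

theorem segIndex_induction {P : Fin n → Prop} (hi : P i)
    (hs : ∀ (k : Fin n) (hk : k.1 + 1 < n), i ≤ k → k ∈ I → P k → P ⟨k + 1, hk⟩)
    (hij : i ≤ j) (h : segIndex I i = segIndex I j) : P j := by
  rw [segIndex_eq_segIndex_iff hij] at h
  obtain ⟨j, hj⟩ := j
  induction j, (show i.1 ≤ j from hij) using Nat.le_induction with
  | base => exact hi
  | succ l hl ih =>
    refine hs ⟨l, by omega⟩ hj hl (h _ hl (Nat.lt_succ_self l)) (ih _ hl fun k h1 h2 => ?_)
    exact h k h1 (h2.trans (Nat.lt_succ_self l))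

theorem segIndex_last_eq_mval_iff (hn : 2 ≤ n) :
    segIndex I ⟨n - 1, by omega⟩ = mval n I ↔ (⟨n - 1, by omega⟩ : Fin n) ∈ I := by
  rw [segIndex_eq_mval_iff]
  refine ⟨fun h => h _ le_rfl, fun h k hk => ?_⟩
  exact Fin.ext (le_antisymm hk (Nat.le_sub_one_of_lt k.2)) ▸ h

theorem last_mem_of_segIndex_eq_mval (hn : 2 ≤ n) (h : segIndex I i = mval n I) :
    (⟨n - 1, by omega⟩ : Fin n) ∈ I :=
  segIndex_eq_mval_iff.1 h _ (Fin.le_def.2 (Nat.le_sub_one_of_lt i.2))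

theorem StandardI.segIndex_penultimate (hn : 2 ≤ n) (hstd : StandardI n .D I)
    (h : (⟨n - 1, by omega⟩ : Fin n) ∈ I) : segIndex I ⟨n - 2, by omega⟩ = mval n I := by
  rw [segIndex_eq_mval_iff]
  intro k hk
  rcases (show k.1 = n - 1 ∨ k.1 = n - 2 by have : n - 2 ≤ k.1 := hk; omega) with e | e
  · rwa [show k = ⟨n - 1, by omega⟩ from Fin.ext e]
  · rw [show k = ⟨n - 2, by omega⟩ from Fin.ext e]
    exact (hstd rfl hn).resolve_right (not_not.2 h)

theorem getElem_lt_iff_lt_countP {α : Type*} [LinearOrder α] {l : List α}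
    (hl : l.Pairwise (· < ·)) (a : α) {t : ℕ} (ht : t < l.length) :
    l[t] < a ↔ t < l.countP (· < a) := by
  induction l generalizing t with
  | nil => simp at ht
  | cons b r ih =>
    rw [List.pairwise_cons] at hl
    by_cases hb : b < a
    · rw [List.countP_cons_of_pos (by simpa using hb)]
      cases t with
      | zero => simp [hb]
      | succ t => simpa using ih hl.2 (by simpa using ht)
    · have hr : ∀ c ∈ b :: r, ¬ c < a := by
        simp only [List.mem_cons, forall_eq_or_imp]
        exact ⟨hb, fun c hc h => hb ((hl.1 c hc).trans h)⟩
      rw [List.countP_eq_zero.2 (by simpa using hr)]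
      simpa using hr _ (List.getElem_mem ht)

theorem qval_lt_iff_lt_segIndex (h1 : 1 ≤ s) (h2 : s < mval n I) :
    qval n I s < i.1 + 1 ↔ s < segIndex I i := by
  have hl : s - 1 < ((Finset.univ \ I).sort (· ≤ ·)).length := by
    rw [mval_eq] at h2
    rw [Finset.length_sort]
    omega
  have hq : qval n I s = (((Finset.univ \ I).sort (· ≤ ·))[s - 1]).1 + 1 := by
    rw [qval, if_neg (by omega), if_pos h2, Qlist, List.getD_eq_getElem _ _ (by simpa using hl),
      List.getElem_map]
  have hc : ((Finset.univ \ I).sort (· ≤ ·)).countP (· < i) =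
      {k ∈ Finset.univ \ I | k < i}.card := by
    rw [List.countP_eq_length_filter, ← List.toFinset_card_of_nodup
      ((Finset.sort_nodup _ _).filter _), List.toFinset_filter, Finset.sort_toFinset]
    simp only [decide_eq_true_eq]
  rw [hq, Nat.add_lt_add_iff_right, ← Fin.lt_def,
    getElem_lt_iff_lt_countP (Finset.sortedLT_sort _).pairwise i hl, hc, segIndex]
  omega

theorem StandardI.qv_eq_qval (hstd : StandardI n ct I) (s : ℕ) : qv n ct I s = qval n I s :=
  if_neg fun h => h.1 hstd

theorem StandardI.inSeg_iff (hstd : StandardI n ct I) (h1 : 1 ≤ s) (h2 : s ≤ mval n I) :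
    InSeg n ct I s i ↔ segIndex I i = s := by
  have hle : i.1 + 1 ≤ qval n I s ↔ segIndex I i ≤ s := by
    rcases h2.lt_or_eq with h | rfl
    · exact not_lt.symm.trans ((qval_lt_iff_lt_segIndex h1 h).not.trans not_lt)
    · rw [qval, if_neg (by omega), if_neg (lt_irrefl _)]
      exact iff_of_true i.2 (segIndex_le_mval I i)
  have hlt : qval n I (s - 1) < i.1 + 1 ↔ s - 1 < segIndex I i := by
    rcases h1.lt_or_eq with h | rfl
    · exact qval_lt_iff_lt_segIndex (by omega) (by omega)
    · exact iff_of_true (Nat.succ_pos _) (one_le_segIndex I i)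
  rw [InSeg, hstd.qv_eq_qval, hstd.qv_eq_qval, hle, hlt]
  omega

theorem StandardI.segIndex_ne_mval (hstd : StandardI n ct I)
    (h : i.1 + 1 ≤ qv n ct I (mval n I - 1)) : segIndex I i ≠ mval n I := fun e =>
  absurd ((hstd.inSeg_iff (e ▸ one_le_segIndex I i) le_rfl).2 e).1 (not_lt.2 h)

end

/-! ### Roots and reflections -/

section
variable {n : ℕ} {ct : CType} {I : Finset (Fin n)} {i j k : Fin n} {x β : V n} {s : ℕ}

theorem inn_ee (x : V n) (i : Fin n) : inn x (ee i) = x i := dotProduct_single_one x i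

theorem inn_add (x y z : V n) : inn x (y + z) = inn x y + inn x z := dotProduct_add x y z

theorem inn_sub (x y z : V n) : inn x (y - z) = inn x y - inn x z := dotProduct_sub x y z

theorem inn_neg (x y : V n) : inn x (-y) = -inn x y := dotProduct_neg x y

theorem inn_smul (x y : V n) (c : ℝ) : inn x (c • y) = c * inn x y := dotProduct_smul c x y

theorem ee_apply (i k : Fin n) : (ee i : V n) k = if k = i then 1 else 0 := Pi.single_apply i 1 k

theorem sRefl_ee_sub_ee (h : i ≠ j) (x : V n) : sRefl (ee i - ee j) x = x ∘ Equiv.swap i j := by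
  funext k
  simp only [sRefl, inn_sub, inn_ee, Pi.sub_apply, Pi.smul_apply, ee_apply, smul_eq_mul,
    Function.comp_apply, Equiv.swap_apply_def, h, h.symm, if_true, if_false]
  split_ifs <;> simp_all <;> ring

theorem sRefl_ee_add_ee (h : i ≠ j) (x : V n) : sRefl (ee i + ee j) x = negSwap i j x := by
  funext k
  simp only [sRefl, inn_add, inn_ee, Pi.sub_apply, Pi.add_apply, Pi.smul_apply, ee_apply,
    smul_eq_mul, negSwap_apply, h, h.symm, if_true, if_false]
  split_ifs <;> simp_all <;> ring

/-- The positive root proportional to `e_i`: `2e_i` in type `C` and `e_i` in type `B`. Like `sRefl`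
it also makes sense in type `D`, where it is not a root. -/
noncomputable def axisRoot (ct : CType) (i : Fin n) : V n :=
  match ct with
  | .C => (2 : ℝ) • ee i
  | _ => ee i

theorem sRefl_axisRoot (ct : CType) (i : Fin n) (x : V n) :
    sRefl (axisRoot ct i) x = negAt i x := by
  funext k
  cases ct <;>
  · simp only [axisRoot, sRefl, inn_smul, inn_ee, Pi.sub_apply, Pi.smul_apply, ee_apply,
      smul_eq_mul, negAt_apply, if_true]
    split_ifs with h
    · rw [h]; ring
    · ring

theorem inn_axisRoot_eq_zero_iff : inn x (axisRoot ct i) = 0 ↔ x i = 0 := by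
  cases ct <;> simp [axisRoot, inn_ee, inn_smul]

theorem mem_phi_iff : β ∈ Phi n ct ↔
    β ∈ DRoots n ∨ ct ≠ .D ∧ ∃ i, β = axisRoot ct i ∨ β = -axisRoot ct i := by
  cases ct <;> simp [Phi, axisRoot]

theorem ee_sub_ee_mem_phi (ct : CType) (h : i ≠ j) : (ee i - ee j : V n) ∈ Phi n ct :=
  mem_phi_iff.2 (Or.inl ⟨i, j, h, Or.inr (Or.inl rfl)⟩)

theorem ee_add_ee_mem_phi (ct : CType) (h : i ≠ j) : (ee i + ee j : V n) ∈ Phi n ct :=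
  mem_phi_iff.2 (Or.inl ⟨i, j, h, Or.inl rfl⟩)

theorem axisRoot_mem_phi (hct : ct ≠ .D) (i : Fin n) : axisRoot ct i ∈ Phi n ct :=
  mem_phi_iff.2 (Or.inr ⟨hct, i, Or.inl rfl⟩)

theorem ee_sub_ee_mem_phiPos (ct : CType) (h : i < j) : (ee i - ee j : V n) ∈ PhiPos n ct := by
  refine ⟨ee_sub_ee_mem_phi ct h.ne, i, by simp [ee_apply, h.ne], fun k hk => ?_⟩
  simp [ee_apply, hk.ne, (hk.trans h).ne]

theorem ee_add_ee_mem_phiPos (ct : CType) (h : i ≠ j) : (ee i + ee j : V n) ∈ PhiPos n ct := by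
  wlog hij : i < j generalizing i j
  · rw [add_comm]
    exact this h.symm (h.lt_or_gt.resolve_left hij)
  refine ⟨ee_add_ee_mem_phi ct h, i, by simp [ee_apply, h], fun k hk => ?_⟩
  simp [ee_apply, hk.ne, (hk.trans hij).ne]

theorem axisRoot_mem_phiPos (hct : ct ≠ .D) (i : Fin n) : axisRoot ct i ∈ PhiPos n ct := by
  refine ⟨axisRoot_mem_phi hct i, i, ?_, fun k hk => ?_⟩
  · cases ct <;> simp [axisRoot, ee_apply]
  · cases ct <;> simp [axisRoot, ee_apply, hk.ne]

theorem alphaR_of_lt (ct : CType) (h : k.1 + 1 < n) :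
    alphaR n ct k = ee k - ee ⟨k.1 + 1, h⟩ := dif_pos h

theorem alphaR_last (hct : ct ≠ .D) (hn : 2 ≤ n) :
    alphaR n ct ⟨n - 1, by omega⟩ = axisRoot ct ⟨n - 1, by omega⟩ := by
  have : ¬ n - 1 + 1 < n := by omega
  cases ct <;> simp_all [alphaR, axisRoot]

theorem alphaR_typeD_last (hn : 2 ≤ n) :
    alphaR n .D ⟨n - 1, by omega⟩ = ee ⟨n - 2, by omega⟩ + ee ⟨n - 1, by omega⟩ :=
  dif_neg (show ¬ n - 1 + 1 < n by omega)

/-! ### Parabolic subsystems -/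

/-- The span of the simple roots indexed by `I`. -/
abbrev simpleSpan (ct : CType) (I : Finset (Fin n)) : Submodule ℝ (V n) :=
  Submodule.span ℝ (alphaR n ct '' (I : Set (Fin n)))

theorem alphaR_mem_simpleSpan (h : k ∈ I) : alphaR n ct k ∈ simpleSpan ct I :=
  Submodule.subset_span ⟨k, h, rfl⟩

theorem ee_sub_ee_mem_simpleSpan (h : segIndex I i = segIndex I j) :
    (ee i - ee j : V n) ∈ simpleSpan ct I := by
  wlog hij : i ≤ j generalizing i j
  · rw [← Submodule.neg_mem_iff, neg_sub]
    exact this h.symm (le_of_not_ge hij)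
  refine segIndex_induction (P := fun k => (ee i - ee k : V n) ∈ simpleSpan ct I) (by simp)
    (fun k hk _ hkI ih => ?_) hij h
  simpa [alphaR_of_lt ct hk] using add_mem ih (alphaR_mem_simpleSpan (ct := ct) hkI)

theorem axisRoot_mem_simpleSpan_iff :
    axisRoot ct i ∈ simpleSpan ct I ↔ (ee i : V n) ∈ simpleSpan ct I := by
  cases ct with
  | B | D => rfl
  | C => exact Submodule.smul_mem_iff _ two_ne_zero

theorem ee_mem_simpleSpan (hn : 2 ≤ n) (hct : ct ≠ .D) (h : segIndex I i = mval n I) :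
    (ee i : V n) ∈ simpleSpan ct I := by
  have hl := last_mem_of_segIndex_eq_mval hn h
  have h1 : (ee i - ee ⟨n - 1, by omega⟩ : V n) ∈ simpleSpan ct I :=
    ee_sub_ee_mem_simpleSpan (h.trans ((segIndex_last_eq_mval_iff hn).2 hl).symm)
  have h2 : (ee ⟨n - 1, by omega⟩ : V n) ∈ simpleSpan ct I :=
    axisRoot_mem_simpleSpan_iff.1 (alphaR_last hct hn ▸ alphaR_mem_simpleSpan hl)
  simpa using add_mem h1 h2

theorem ee_add_ee_mem_simpleSpan (hn : 2 ≤ n) (hstd : StandardI n ct I)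
    (hi : segIndex I i = mval n I) (hj : segIndex I j = mval n I) :
    (ee i + ee j : V n) ∈ simpleSpan ct I := by
  by_cases hct : ct = .D
  · subst hct
    have hl := last_mem_of_segIndex_eq_mval hn hi
    have h1 : (ee i - ee ⟨n - 2, by omega⟩ : V n) ∈ simpleSpan .D I :=
      ee_sub_ee_mem_simpleSpan (hi.trans (hstd.segIndex_penultimate hn hl).symm)
    have h2 : (ee j - ee ⟨n - 1, by omega⟩ : V n) ∈ simpleSpan .D I :=
      ee_sub_ee_mem_simpleSpan (hj.trans ((segIndex_last_eq_mval_iff hn).2 hl).symm)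
    have h3 := alphaR_mem_simpleSpan (ct := .D) hl
    rw [alphaR_typeD_last hn] at h3
    convert add_mem (add_mem h1 h2) h3 using 1
    abel
  · exact add_mem (ee_mem_simpleSpan hn hct hi) (ee_mem_simpleSpan hn hct hj)

/-- The sum of the entries of the segment `s`. -/
noncomputable def segSum (I : Finset (Fin n)) (s : ℕ) : V n →ₗ[ℝ] ℝ :=
  ∑ k with segIndex I k = s, LinearMap.proj k

theorem segSum_ee (I : Finset (Fin n)) (s : ℕ) (i : Fin n) :
    segSum I s (ee i) = if segIndex I i = s then 1 else 0 := by
  simp [segSum, LinearMap.sum_apply, ee_apply]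

theorem segSum_axisRoot_of_ne (h : segIndex I i ≠ s) : segSum I s (axisRoot ct i) = 0 := by
  cases ct <;> simp [axisRoot, segSum_ee, h]

theorem simpleSpan_le_ker_segSum (hn : 2 ≤ n) (hstd : StandardI n ct I) (hs : s ≠ mval n I) :
    simpleSpan ct I ≤ LinearMap.ker (segSum I s) := by
  rw [Submodule.span_le]
  rintro _ ⟨k, hk, rfl⟩
  rw [SetLike.mem_coe, LinearMap.mem_ker]
  by_cases h : k.1 + 1 < n
  · rw [alphaR_of_lt ct h, map_sub, segSum_ee, segSum_ee, segIndex_succ h hk, sub_self]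
  have hlast : k = ⟨n - 1, by omega⟩ := Fin.ext (by have := k.2; simp only; omega)
  rw [hlast] at hk ⊢
  have hm := (segIndex_last_eq_mval_iff hn).2 hk
  by_cases hct : ct = .D
  · subst hct
    rw [alphaR_typeD_last hn, map_add, segSum_ee, segSum_ee, hm,
      hstd.segIndex_penultimate hn hk, if_neg hs.symm, add_zero]
  · rw [alphaR_last hct hn, segSum_axisRoot_of_ne (hm.trans_ne hs.symm)]

theorem ee_sub_ee_mem_simpleSpan_iff (hn : 2 ≤ n) (hstd : StandardI n ct I) :
    (ee i - ee j : V n) ∈ simpleSpan ct I ↔ segIndex I i = segIndex I j := by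
  refine ⟨fun h => by_contra fun hc => ?_, ee_sub_ee_mem_simpleSpan⟩
  obtain ⟨s, hs, hs'⟩ : ∃ s ≠ mval n I, s = segIndex I i ∨ s = segIndex I j := by
    by_cases hi : segIndex I i = mval n I
    · exact ⟨_, fun hj => hc (hi.trans hj.symm), Or.inr rfl⟩
    · exact ⟨_, hi, Or.inl rfl⟩
  have := simpleSpan_le_ker_segSum hn hstd hs h
  rw [LinearMap.mem_ker, map_sub, segSum_ee, segSum_ee] at this
  rcases hs' with rfl | rfl
  · simp [Ne.symm hc] at this
  · simp [hc] at this

theorem ee_add_ee_mem_simpleSpan_iff (hn : 2 ≤ n) (hstd : StandardI n ct I) :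
    (ee i + ee j : V n) ∈ simpleSpan ct I ↔ segIndex I i = mval n I ∧ segIndex I j = mval n I := by
  have key : ∀ {i j : Fin n}, (ee i + ee j : V n) ∈ simpleSpan ct I → segIndex I i = mval n I := by
    intro i j h
    by_contra hc
    have := simpleSpan_le_ker_segSum hn hstd hc h
    rw [LinearMap.mem_ker, map_add, segSum_ee, segSum_ee, if_pos rfl] at this
    split_ifs at this <;> norm_num at this
  exact ⟨fun h => ⟨key h, key (add_comm (ee i : V n) _ ▸ h)⟩,
    fun h => ee_add_ee_mem_simpleSpan hn hstd h.1 h.2⟩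

theorem axisRoot_mem_simpleSpan_iff_segIndex (hn : 2 ≤ n) (hstd : StandardI n ct I)
    (hct : ct ≠ .D) :
    axisRoot ct i ∈ simpleSpan ct I ↔ segIndex I i = mval n I := by
  rw [axisRoot_mem_simpleSpan_iff]
  refine ⟨fun h => by_contra fun hc => ?_, ee_mem_simpleSpan hn hct⟩
  have := simpleSpan_le_ker_segSum hn hstd hc h
  rw [LinearMap.mem_ker, segSum_ee, if_pos rfl] at this
  exact one_ne_zero this

/-- The segments cut out by `I`, as a combinatorial datum on the index set. -/
noncomputable def segmentation (ct : CType) (I : Finset (Fin n)) : Segmentation (Fin n) where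
  seg := segIndex I
  last := mval n I
  typeD := ct = .D

theorem regI_iff_regular (hn : 2 ≤ n) (hstd : StandardI n ct I) :
    RegI n ct I x ↔ (segmentation ct I).Regular x := by
  constructor
  · refine fun h => ⟨fun i j hij hs => ⟨fun e => ?_, fun hm e => ?_⟩, fun hD i hi e => ?_⟩
    · refine h _ ⟨ee_sub_ee_mem_phi ct hij, ee_sub_ee_mem_simpleSpan hs⟩ ?_
      rw [inn_sub, inn_ee, inn_ee, e, sub_self]
    · refine h _ ⟨ee_add_ee_mem_phi ct hij,
        ee_add_ee_mem_simpleSpan hn hstd hm (hs.symm.trans hm)⟩ ?_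
      rw [inn_add, inn_ee, inn_ee, e, neg_add_cancel]
    · exact h _ ⟨axisRoot_mem_phi hD i, (axisRoot_mem_simpleSpan_iff_segIndex hn hstd hD).2 hi⟩
        (inn_axisRoot_eq_zero_iff.2 e)
  · rintro ⟨h1, h2⟩ β ⟨hβ, hsp : β ∈ simpleSpan ct I⟩ h0
    have hadd : ∀ i j : Fin n, i ≠ j → (ee i + ee j : V n) ∈ simpleSpan ct I → x i + x j ≠ 0 := by
      intro i j hij h e
      rw [ee_add_ee_mem_simpleSpan_iff hn hstd] at h
      exact (h1 i j hij (h.1.trans h.2.symm)).2 h.1 (eq_neg_of_add_eq_zero_left e)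
    have haxis : ct ≠ .D → ∀ i, axisRoot ct i ∈ simpleSpan ct I → inn x (axisRoot ct i) ≠ 0 :=
      fun hct i h e => h2 hct i ((axisRoot_mem_simpleSpan_iff_segIndex hn hstd hct).1 h)
        (inn_axisRoot_eq_zero_iff.1 e)
    rcases mem_phi_iff.1 hβ with ⟨i, j, hij, rfl | rfl | rfl⟩ | ⟨hct, i, rfl | rfl⟩
    · rw [inn_add, inn_ee, inn_ee] at h0
      exact hadd i j hij hsp h0
    · rw [inn_sub, inn_ee, inn_ee, sub_eq_zero] at h0
      exact (h1 i j hij ((ee_sub_ee_mem_simpleSpan_iff hn hstd).1 hsp)).1 h0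
    · rw [← neg_add', Submodule.neg_mem_iff] at hsp
      rw [← neg_add', inn_neg, inn_add, inn_ee, inn_ee, neg_eq_zero] at h0
      exact hadd i j hij hsp h0
    · exact haxis hct i hsp h0
    · rw [Submodule.neg_mem_iff] at hsp
      rw [inn_neg, neg_eq_zero] at h0
      exact haxis hct i hsp h0

end

/-! ### Orbits of the parabolic subgroup -/

section
variable {n : ℕ} {ct : CType} {I : Finset (Fin n)} {i j k l : Fin n} {x y z β : V n}

theorem wiOrb_sRefl (h : k ∈ I) (x : V n) : WIOrb n ct I x (sRefl (alphaR n ct k) x) :=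
  Relation.ReflTransGen.single ⟨k, h, rfl⟩

theorem WIOrb.trans (h : WIOrb n ct I x y) (h' : WIOrb n ct I y z) : WIOrb n ct I x z :=
  Relation.ReflTransGen.trans h h'

theorem wiOrb_comp_swap (h : segIndex I i = segIndex I j) (x : V n) :
    WIOrb n ct I x (x ∘ Equiv.swap i j) := by
  wlog hij : i ≤ j generalizing i j
  · rw [Equiv.swap_comm]
    exact this h.symm (le_of_not_ge hij)
  refine segIndex_induction (P := fun k => ∀ x, WIOrb n ct I x (x ∘ Equiv.swap i k))
    (fun x => ?_) (fun k hk hik hkI ih x => ?_) hij h x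
  · rw [Equiv.swap_self]
    exact Relation.ReflTransGen.refl
  have hne : k ≠ ⟨k + 1, hk⟩ := by simp [Fin.ext_iff]
  have hadj : ∀ y, WIOrb n ct I y (y ∘ Equiv.swap k ⟨k + 1, hk⟩) := fun y => by
    rw [← sRefl_ee_sub_ee hne, ← alphaR_of_lt ct hk]
    exact wiOrb_sRefl hkI y
  rcases hik.eq_or_lt with rfl | hlt
  · exact hadj x
  have hne' : i ≠ ⟨k + 1, hk⟩ := by rw [Ne, Fin.ext_iff]; exact (Nat.lt_succ_of_lt hlt).ne
  rw [Equiv.swap_comm, ← Equiv.swap_mul_swap_mul_swap hlt.ne hne']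
  exact ((hadj x).trans (ih _)).trans (hadj _)

theorem wiOrb_negAt (hn : 2 ≤ n) (hct : ct ≠ .D) (h : segIndex I k = mval n I) (x : V n) :
    WIOrb n ct I x (negAt k x) := by
  have hlast := last_mem_of_segIndex_eq_mval hn h
  have hk := h.trans ((segIndex_last_eq_mval_iff hn).2 hlast).symm
  have hneg : ∀ y, WIOrb n ct I y (negAt ⟨n - 1, by omega⟩ y) := fun y => by
    rw [← sRefl_axisRoot ct, ← alphaR_last hct hn]
    exact wiOrb_sRefl hlast y
  have := ((wiOrb_comp_swap hk x).trans (hneg _)).trans (wiOrb_comp_swap hk _)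
  rwa [negAt_comp_swap, Equiv.swap_apply_right, comp_swap_comp_swap] at this

theorem wiOrb_negAt_negAt (hn : 2 ≤ n) (hstd : StandardI n .D I) (hkl : k ≠ l)
    (hk : segIndex I k = mval n I) (hl : segIndex I l = mval n I) (x : V n) :
    WIOrb n .D I x (negAt k (negAt l x)) := by
  have hlast := last_mem_of_segIndex_eq_mval hn hk
  have ha := hstd.segIndex_penultimate hn hlast
  have hb := (segIndex_last_eq_mval_iff hn).2 hlast
  have hroot := alphaR_typeD_last hn
  have hab : (⟨n - 2, by omega⟩ : Fin n) ≠ ⟨n - 1, by omega⟩ := by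
    rw [Ne, Fin.mk.injEq]; omega
  generalize (⟨n - 2, by omega⟩ : Fin n) = a at ha hab hroot
  generalize (⟨n - 1, by omega⟩ : Fin n) = b at hb hab hroot hlast
  have hpair_ab : ∀ y, WIOrb n .D I y (negAt a (negAt b y)) := fun y => by
    rw [negAt_negAt_eq_negSwap_comp_swap hab, ← sRefl_ee_add_ee hab, ← hroot]
    exact (wiOrb_comp_swap (ha.trans hb.symm) y).trans (wiOrb_sRefl hlast _)
  have hpair_b : ∀ k ≠ b, segIndex I k = mval n I → ∀ y, WIOrb n .D I y (negAt k (negAt b y)) := by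
    intro k hkb hk y
    have hka := hk.trans ha.symm
    have := ((wiOrb_comp_swap hka y).trans (hpair_ab _)).trans (wiOrb_comp_swap hka _)
    rwa [negAt_comp_swap, negAt_comp_swap, Equiv.swap_apply_right,
      Equiv.swap_apply_of_ne_of_ne hkb.symm hab.symm, comp_swap_comp_swap] at this
  by_cases hkb : k = b
  · rw [hkb, negAt_comm]
    exact hpair_b l (fun h => hkl (hkb.trans h.symm)) hl x
  by_cases hlb : l = b
  · exact hlb ▸ hpair_b k hkb hk x
  have := (hpair_b l hlb hl x).trans (hpair_b k hkb hk _)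
  rwa [negAt_comm l b, negAt_negAt_self] at this

/-! ### Connections by single roots -/

theorem conn_refl (h : RegI n ct I x) : Conn n ct I x x := ⟨h, h, Relation.ReflTransGen.refl⟩

theorem Conn.trans (h : Conn n ct I x y) (h' : Conn n ct I y z) : Conn n ct I x z :=
  ⟨h.1, h'.2.1, h.2.2.trans h'.2.2⟩

theorem WIOrb.conn (h : WIOrb n ct I x y) (hx : RegI n ct I x) (hy : RegI n ct I y) :
    Conn n ct I x y :=
  ⟨hx, hy, Relation.ReflTransGen.single ⟨hx, hy, Or.inl h⟩⟩

theorem conn_sRefl (hstd : StandardI n ct I) (hβ : β ∈ PhiPos n ct) (hβI : β ∉ simpleSpan ct I)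
    (hexc : ¬ Exc n ct I x β) (hx : RegI n ct I x) (hy : RegI n ct I (sRefl β x)) :
    Conn n ct I x (sRefl β x) := by
  by_cases h : sRefl β x = x
  · rw [h]
    exact conn_refl hx
  refine ⟨hx, hy, Relation.ReflTransGen.single ⟨hx, hy, Or.inr ⟨β, ?_, .refl⟩⟩⟩
  rw [LinkedRoot, if_pos hstd]
  exact ⟨hx, hβ, fun h => hβI h.2, hy, h, hexc⟩

end

/-! ### Exceptional roots -/

section
variable {n : ℕ} {ct : CType} {I : Finset (Fin n)} {i j a b : Fin n} {x β : V n} {s : ℕ} {c : ℝ}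

theorem nsl_eq_card (hstd : StandardI n ct I) (h1 : 1 ≤ s) (h2 : s ≤ mval n I) (x : V n) (c : ℝ) :
    nsl n ct I x s c = ({i | segIndex I i = s ∧ |x i| = c} : Finset (Fin n)).card := by
  simp only [nsl, hstd.inSeg_iff h1 h2]

theorem nsl_pos_iff (hstd : StandardI n ct I) (h1 : 1 ≤ s) (h2 : s ≤ mval n I) :
    0 < nsl n ct I x s c ↔ (segmentation ct I).Occurs |x| s c := by
  simp [nsl_eq_card hstd h1 h2, Finset.card_pos, Finset.Nonempty, Segmentation.Occurs,
    segmentation]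

/-- The condition on the multiplicities of `0` and `|x i|` in the segment of `i` and in the last
segment under which the entry at `i` gives rise to exceptional roots. -/
structure ExceptionalAt (ct : CType) (I : Finset (Fin n)) (x : V n) (i : Fin n) : Prop where
  segIndex_ne : segIndex I i ≠ mval n I
  ne_zero : x i ≠ 0
  not_occurs_iff (h : ct ≠ .D) : ¬ ((segmentation ct I).Occurs |x| (segIndex I i) 0 ↔
    (segmentation ct I).Occurs |x| (mval n I) |x i|)
  occurs (h : ct = .D) : (segmentation ct I).Occurs |x| (segIndex I i) 0 ∧
    (segmentation ct I).Occurs |x| (mval n I) |x i| ∧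
    (segmentation ct I).Occurs |x| (mval n I) 0

/-- The roots that may be exceptional because of the entry at `i`. -/
inductive ExceptionalForm (ct : CType) (I : Finset (Fin n)) (x : V n) (i : Fin n) : V n → Prop
  | axis : ExceptionalForm ct I x i (axisRoot ct i)
  | add_zero (j : Fin n) : segIndex I j = segIndex I i → x j = 0 →
    ExceptionalForm ct I x i (ee i + ee j)
  | add (j : Fin n) : segIndex I j = mval n I → |x i| = |x j| →
    ExceptionalForm ct I x i (ee i + ee j)
  | sub (j : Fin n) : segIndex I j = mval n I → |x i| = |x j| →
    ExceptionalForm ct I x i (ee i - ee j)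

theorem exists_exceptionalAt_of_excBC (hstd : StandardI n ct I) (hct : ct ≠ .D)
    (h : ExcBC n ct I (axisRoot ct) x β) :
    ∃ i, ExceptionalAt ct I x i ∧ ExceptionalForm ct I x i β := by
  obtain ⟨s, h1, hs, c, hc, -, hsum, h⟩ := h
  have hm1 : 1 ≤ mval n I := h1.trans hs.le
  have hiff : ¬ ((segmentation ct I).Occurs |x| s 0 ↔
      (segmentation ct I).Occurs |x| (mval n I) c) := by
    rw [← nsl_pos_iff hstd h1 hs.le, ← nsl_pos_iff hstd hm1 le_rfl]
    omega
  simp only [hstd.inSeg_iff h1 hs.le, hstd.inSeg_iff hm1 le_rfl] at h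
  have key : ∀ i, segIndex I i = s → |x i| = c → ExceptionalForm ct I x i β →
      ∃ i, ExceptionalAt ct I x i ∧ ExceptionalForm ct I x i β := by
    rintro i rfl rfl hform
    exact ⟨i, ⟨hs.ne, abs_pos.1 hc, fun _ => hiff, fun h => absurd h hct⟩, hform⟩
  have habs : |c| = c := abs_of_pos hc
  rcases h with ⟨i, j, hi, hj, hic, hj0, hβ⟩ | ⟨i, j, hi, hj, hij, hβ⟩ | ⟨i, j, hi, hj, hij, hβ⟩
  · refine key i hi hic ?_
    rcases hβ with rfl | rfl
    exacts [.axis, .add_zero j (hj.trans hi.symm) hj0]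
  all_goals
    have hic : |x i| = c := by rcases hij with h | h <;> simp [h.1, habs]
    have hjc : |x j| = c := by rcases hij with h | h <;> simp [h.2, habs]
    refine key i hi hic ?_
    rcases hβ with rfl | rfl
  exacts [.axis, .add j hj (hic.trans hjc.symm), .axis, .sub j hj (hic.trans hjc.symm)]

theorem exists_exceptionalAt_of_excD (hstd : StandardI n .D I) (h : ExcD n I x β) :
    ∃ i, ExceptionalAt .D I x i ∧ ExceptionalForm .D I x i β := by
  obtain ⟨s, h1, hs, c, hc, -, hm, hs0, hm0, i, j, k, l, hi, hj, hk, -, hj0, -, h⟩ := h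
  have hm1 : 1 ≤ mval n I := h1.trans hs.le
  rw [hstd.inSeg_iff h1 hs.le] at hi hj
  rw [hstd.inSeg_iff hm1 le_rfl] at hk
  have habs : |c| = c := abs_of_pos hc
  have hic : |x i| = c := by rcases h with ⟨h | h, -⟩ | ⟨h | h, -⟩ <;> simp [h.1, habs]
  have hkc : |x k| = c := by rcases h with ⟨h | h, -⟩ | ⟨h | h, -⟩ <;> simp [h.2, habs]
  subst hi hic
  refine ⟨i, ⟨hs.ne, abs_pos.1 hc, fun h => absurd rfl h, fun _ => ⟨?_, ?_, ?_⟩⟩, ?_⟩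
  · exact (nsl_pos_iff hstd h1 hs.le).1 (hs0 ▸ one_pos)
  · exact (nsl_pos_iff hstd hm1 le_rfl).1 (hm ▸ one_pos)
  · exact (nsl_pos_iff hstd hm1 le_rfl).1 (hm0 ▸ one_pos)
  · rcases h with ⟨-, rfl | rfl⟩ | ⟨-, rfl | rfl⟩
    exacts [.add_zero j hj hj0, .add k hk hkc.symm, .add_zero j hj hj0, .sub k hk hkc.symm]

theorem exists_exceptionalAt (hstd : StandardI n ct I) (h : Exc n ct I x β) :
    ∃ i, ExceptionalAt ct I x i ∧ ExceptionalForm ct I x i β := by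
  cases ct with
  | B => exact exists_exceptionalAt_of_excBC hstd CType.noConfusion h
  | C => exact exists_exceptionalAt_of_excBC hstd CType.noConfusion h
  | D => exact exists_exceptionalAt_of_excD hstd h

theorem eq_of_ee_add_ee_eq (hij : i ≠ j) (h : (ee i + ee j : V n) = ee a + ee b) :
    (a = i ∧ b = j) ∨ (a = j ∧ b = i) := by
  have hi := congrFun h i
  have hj := congrFun h j
  simp only [Pi.add_apply, ee_apply] at hi hj
  grind

theorem eq_of_ee_sub_ee_eq (hij : i ≠ j) (h : (ee i - ee j : V n) = ee a - ee b) :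
    a = i ∧ b = j := by
  have hi := congrFun h i
  have hj := congrFun h j
  simp only [Pi.sub_apply, ee_apply] at hi hj
  grind

theorem ee_add_ee_ne_ee_sub_ee (i j a b : Fin n) : (ee i + ee j : V n) ≠ ee a - ee b := fun h => by
  have := congrArg (fun v => ∑ k, v k) h
  simp [ee_apply, Finset.sum_add_distrib, Finset.sum_sub_distrib] at this

theorem ee_add_ee_ne_axisRoot (hij : i ≠ j) : (ee i + ee j : V n) ≠ axisRoot ct a := fun h => by
  have hi := congrFun h i
  have hj := congrFun h j
  cases ct <;>
  · simp only [axisRoot, Pi.add_apply, Pi.smul_apply, smul_eq_mul, ee_apply] at hi hj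
    grind

theorem ee_sub_ee_ne_axisRoot (hij : i ≠ j) : (ee i - ee j : V n) ≠ axisRoot ct a := fun h => by
  have hi := congrFun h i
  have hj := congrFun h j
  cases ct <;>
  · simp only [axisRoot, Pi.sub_apply, Pi.smul_apply, smul_eq_mul, ee_apply] at hi hj
    grind

theorem axisRoot_injective (ct : CType) : Function.Injective (axisRoot ct : Fin n → V n) := by
  intro i a h
  have hi := congrFun h i
  cases ct <;>
  · simp only [axisRoot, Pi.smul_apply, smul_eq_mul, ee_apply] at hi
    grind

theorem exceptionalAt_of_exc_ee_sub_ee (hstd : StandardI n ct I) (hij : i ≠ j)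
    (h : Exc n ct I x (ee i - ee j)) :
    ExceptionalAt ct I x i ∧ segIndex I j = mval n I ∧ |x i| = |x j| := by
  obtain ⟨a, ha, hform⟩ := exists_exceptionalAt hstd h
  generalize hβ : (ee i - ee j : V n) = β at hform
  rcases hform with _ | ⟨b, -, -⟩ | ⟨b, -, -⟩ | ⟨b, hb, hab⟩
  · exact absurd hβ (ee_sub_ee_ne_axisRoot hij)
  · exact absurd hβ.symm (ee_add_ee_ne_ee_sub_ee _ _ _ _)
  · exact absurd hβ.symm (ee_add_ee_ne_ee_sub_ee _ _ _ _)
  · obtain ⟨rfl, rfl⟩ := eq_of_ee_sub_ee_eq hij hβ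
    exact ⟨ha, hb, hab⟩

theorem exceptionalAt_of_exc_ee_add_ee (hstd : StandardI n ct I) (hij : i ≠ j)
    (h : Exc n ct I x (ee i + ee j)) : ∃ a b, (a = i ∧ b = j ∨ a = j ∧ b = i) ∧
      ExceptionalAt ct I x a ∧
      (segIndex I b = segIndex I a ∧ x b = 0 ∨ segIndex I b = mval n I ∧ |x a| = |x b|) := by
  obtain ⟨a, ha, hform⟩ := exists_exceptionalAt hstd h
  generalize hβ : (ee i + ee j : V n) = β at hform
  rcases hform with _ | ⟨b, hb, hb0⟩ | ⟨b, hb, hab⟩ | ⟨b, -, -⟩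
  · exact absurd hβ (ee_add_ee_ne_axisRoot hij)
  · exact ⟨a, b, eq_of_ee_add_ee_eq hij hβ, ha, Or.inl ⟨hb, hb0⟩⟩
  · exact ⟨a, b, eq_of_ee_add_ee_eq hij hβ, ha, Or.inr ⟨hb, hab⟩⟩
  · exact absurd hβ (ee_add_ee_ne_ee_sub_ee _ _ _ _)

theorem exceptionalAt_of_exc_axisRoot (hstd : StandardI n ct I)
    (h : Exc n ct I x (axisRoot ct i)) : ExceptionalAt ct I x i := by
  obtain ⟨a, ha, hform⟩ := exists_exceptionalAt hstd h
  have hne : ∀ b, segIndex I b = mval n I → a ≠ b := fun b hb e =>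
    ha.segIndex_ne (e ▸ hb)
  generalize hβ : (axisRoot ct i : V n) = β at hform
  rcases hform with _ | ⟨b, -, hb0⟩ | ⟨b, hb, -⟩ | ⟨b, hb, -⟩
  · exact axisRoot_injective ct hβ ▸ ha
  · exact absurd hβ.symm (ee_add_ee_ne_axisRoot fun e => ha.ne_zero (e ▸ hb0))
  · exact absurd hβ.symm (ee_add_ee_ne_axisRoot (hne b hb))
  · exact absurd hβ.symm (ee_sub_ee_ne_axisRoot (hne b hb))

end

/-! ### The linkage system of a parabolic category -/

section
variable {n : ℕ} {ct : CType} {I : Finset (Fin n)} {i j k : Fin n} {x : V n}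

theorem conn_comp_swap_of_segIndex_ne (hn : 2 ≤ n) (hstd : StandardI n ct I)
    (hx : RegI n ct I x) (hy : RegI n ct I (x ∘ Equiv.swap i j))
    (hs : segIndex I i ≠ segIndex I j)
    (h : |x i| ≠ |x j| ∨ (segIndex I i ≠ mval n I ∧ segIndex I j ≠ mval n I)) :
    Conn n ct I x (x ∘ Equiv.swap i j) := by
  wlog hij : i < j generalizing i j
  · rw [Equiv.swap_comm] at hy ⊢
    exact this hy hs.symm (h.imp Ne.symm And.symm)
      ((ne_of_apply_ne _ hs).lt_or_gt.resolve_left hij)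
  rw [← sRefl_ee_sub_ee hij.ne] at hy ⊢
  refine conn_sRefl hstd (ee_sub_ee_mem_phiPos ct hij)
    (fun hsp => hs ((ee_sub_ee_mem_simpleSpan_iff hn hstd).1 hsp)) (fun hexc => ?_) hx hy
  obtain ⟨-, hj, habs⟩ := exceptionalAt_of_exc_ee_sub_ee hstd hij.ne hexc
  exact h.elim (fun h => h habs) fun h => h.2 hj

theorem conn_negSwap_of_segIndex_ne (hn : 2 ≤ n) (hstd : StandardI n ct I)
    (hx : RegI n ct I x) (hy : RegI n ct I (negSwap i j x)) (hs : segIndex I i ≠ segIndex I j)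
    (h : |x i| ≠ |x j| ∨ (segIndex I i ≠ mval n I ∧ segIndex I j ≠ mval n I)) :
    Conn n ct I x (negSwap i j x) := by
  have hij : i ≠ j := ne_of_apply_ne _ hs
  rw [← sRefl_ee_add_ee hij] at hy ⊢
  refine conn_sRefl hstd (ee_add_ee_mem_phiPos ct hij) (fun hsp => ?_) (fun hexc => ?_) hx hy
  · rw [ee_add_ee_mem_simpleSpan_iff hn hstd] at hsp
    exact hs (hsp.1.trans hsp.2.symm)
  obtain ⟨a, b, hab, -, ⟨hb, -⟩ | ⟨hb, habs⟩⟩ := exceptionalAt_of_exc_ee_add_ee hstd hij hexc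
  · rcases hab with ⟨rfl, rfl⟩ | ⟨rfl, rfl⟩
    exacts [hs hb.symm, hs hb]
  · rcases hab with ⟨rfl, rfl⟩ | ⟨rfl, rfl⟩
    exacts [h.elim (fun h => h habs) fun h => h.2 hb, h.elim (fun h => h habs.symm) fun h => h.1 hb]

theorem conn_negAt_negAt_of_segIndex_eq (hn : 2 ≤ n) (hstd : StandardI n ct I)
    (hx : (segmentation ct I).Regular x)
    (hy : (segmentation ct I).Regular (negAt i (negAt j x))) (hij : i ≠ j)
    (hs : segIndex I i = segIndex I j) (hm : segIndex I i ≠ mval n I)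
    (hexc : ¬ Exc n ct I x (ee i + ee j)) : Conn n ct I x (negAt i (negAt j x)) := by
  have e : negSwap i j x ∘ Equiv.swap i j = negAt i (negAt j x) := by
    funext k; simp only [negAt_apply, negSwap_apply, Function.comp, Equiv.swap_apply_def]; grind
  have hz : (segmentation ct I).Regular (negSwap i j x) := by
    rw [← comp_swap_comp_swap i j (negSwap i j x), e]
    exact hy.comp_swap_of_seg_eq hs
  rw [← regI_iff_regular hn hstd] at hx hy hz
  refine Conn.trans ?_ ((e ▸ wiOrb_comp_swap hs _ : WIOrb n ct I _ _).conn hz hy)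
  rw [← sRefl_ee_add_ee hij] at hz ⊢
  exact conn_sRefl hstd (ee_add_ee_mem_phiPos ct hij)
    (fun hsp => hm ((ee_add_ee_mem_simpleSpan_iff hn hstd).1 hsp).1) hexc hx hz

theorem exceptionalAt_of_exc_ee_add_ee_of_segIndex_eq (hstd : StandardI n ct I) (hij : i ≠ j)
    (hs : segIndex I i = segIndex I j) (hm : segIndex I i ≠ mval n I) (hi : x i ≠ 0)
    (h : Exc n ct I x (ee i + ee j)) : ExceptionalAt ct I x i ∧ x j = 0 := by
  obtain ⟨a, b, ⟨rfl, rfl⟩ | ⟨rfl, rfl⟩, ha, ⟨-, hb⟩ | ⟨hb, -⟩⟩ :=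
    exceptionalAt_of_exc_ee_add_ee hstd hij h
  exacts [⟨ha, hb⟩, absurd (hs.trans hb) hm, absurd hb hi, absurd hb hm]

theorem conn_negAt_of_occurs_iff (hn : 2 ≤ n) (hstd : StandardI n ct I) (hct : ct ≠ .D)
    (hx : RegI n ct I x) (hy : RegI n ct I (negAt i x)) (hm : segIndex I i ≠ mval n I)
    (h : (segmentation ct I).Occurs |x| (segIndex I i) 0 ↔
      (segmentation ct I).Occurs |x| (mval n I) |x i|) : Conn n ct I x (negAt i x) := by
  rw [← sRefl_axisRoot ct] at hy ⊢
  exact conn_sRefl hstd (axisRoot_mem_phiPos hct i)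
    (fun hsp => hm ((axisRoot_mem_simpleSpan_iff_segIndex hn hstd hct).1 hsp))
    (fun hexc => (exceptionalAt_of_exc_axisRoot hstd hexc).not_occurs_iff hct h) hx hy

theorem conn_negAt_negAt_of_abs_eq (hn : 2 ≤ n) (hstd : StandardI n .D I)
    (hx : RegI n .D I x) (hy : RegI n .D I (negAt i (negAt k x)))
    (hi : segIndex I i ≠ mval n I) (hk : segIndex I k = mval n I) (hik : |x i| = |x k|)
    (h : ¬ ((segmentation .D I).Occurs |x| (segIndex I i) 0 ∧
      (segmentation .D I).Occurs |x| (mval n I) 0)) :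
    Conn n .D I x (negAt i (negAt k x)) := by
  have hlt : i < k := by
    by_contra hc
    exact hi ((segIndex_le_mval I i).antisymm (hk ▸ segIndex_mono I (not_lt.1 hc)))
  have hnot : ¬ ExceptionalAt .D I x i := fun he => h ⟨(he.occurs rfl).1, (he.occurs rfl).2.2⟩
  rcases abs_eq_abs.1 hik with e | e
  · have hrefl : negAt i (negAt k x) = sRefl (ee i + ee k) x := by
      rw [sRefl_ee_add_ee hlt.ne]
      funext a; simp only [negSwap_apply, negAt_apply]; grind
    rw [hrefl] at hy ⊢
    refine conn_sRefl hstd (ee_add_ee_mem_phiPos .D hlt.ne)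
      (fun hsp => hi ((ee_add_ee_mem_simpleSpan_iff hn hstd).1 hsp).1) (fun hexc => ?_) hx hy
    obtain ⟨a, b, ⟨rfl, -⟩ | ⟨rfl, -⟩, ha, -⟩ := exceptionalAt_of_exc_ee_add_ee hstd hlt.ne hexc
    exacts [hnot ha, ha.segIndex_ne hk]
  · have hrefl : negAt i (negAt k x) = sRefl (ee i - ee k) x := by
      rw [sRefl_ee_sub_ee hlt.ne]
      funext a; simp only [negAt_apply, Function.comp, Equiv.swap_apply_def]; grind
    rw [hrefl] at hy ⊢
    exact conn_sRefl hstd (ee_sub_ee_mem_phiPos .D hlt)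
      (fun hsp => hi (((ee_sub_ee_mem_simpleSpan_iff hn hstd).1 hsp).trans hk))
      (fun hexc => hnot (exceptionalAt_of_exc_ee_sub_ee hstd hlt.ne hexc).1) hx hy

/-- The segments of `I` together with the relation of being connected. -/
noncomputable def linkageSystem (hn : 2 ≤ n) (hstd : StandardI n ct I) : LinkageSystem (Fin n) where
  toSegmentation := segmentation ct I
  conn := Conn n ct I
  conn_refl hx := conn_refl ((regI_iff_regular hn hstd).2 hx)
  conn_trans := Conn.trans
  conn_swap_of_seg_eq hx hs _ := (wiOrb_comp_swap hs _).conn ((regI_iff_regular hn hstd).2 hx)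
    ((regI_iff_regular hn hstd).2 (hx.comp_swap_of_seg_eq hs))
  conn_negAt_last hD hx hk := (wiOrb_negAt hn hD hk _).conn ((regI_iff_regular hn hstd).2 hx)
    ((regI_iff_regular hn hstd).2 (hx.negAt_of_last hk))
  conn_negAt_negAt_last {x k l} hD hx hkl hk hl := by
    obtain rfl : ct = .D := hD
    exact (wiOrb_negAt_negAt hn hstd hkl hk hl x).conn ((regI_iff_regular hn hstd).2 hx)
      ((regI_iff_regular hn hstd).2 ((hx.negAt_of_last hl).negAt_of_last hk))
  conn_swap hx hy := conn_comp_swap_of_segIndex_ne hn hstd ((regI_iff_regular hn hstd).2 hx)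
    ((regI_iff_regular hn hstd).2 hy)
  conn_negSwap hx hy := conn_negSwap_of_segIndex_ne hn hstd ((regI_iff_regular hn hstd).2 hx)
    ((regI_iff_regular hn hstd).2 hy)
  conn_negAt_negAt hx hy hij hs hm hi hj :=
    conn_negAt_negAt_of_segIndex_eq hn hstd hx hy hij hs hm fun hexc =>
      hj (exceptionalAt_of_exc_ee_add_ee_of_segIndex_eq hstd hij hs hm hi hexc).2
  conn_negAt hD hx hy hm _ := conn_negAt_of_occurs_iff hn hstd hD
    ((regI_iff_regular hn hstd).2 hx) ((regI_iff_regular hn hstd).2 hy) hm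
  conn_negAt_typeD {x i j} hD hx hy hs hm hj hi h := by
    have hij : i ≠ j := fun e => hi (e ▸ hj)
    rw [← negAt_eq_self hj] at hy
    have := conn_negAt_negAt_of_segIndex_eq hn hstd hx hy hij hs hm fun hexc =>
      h ((exceptionalAt_of_exc_ee_add_ee_of_segIndex_eq hstd hij hs hm hi hexc).1.occurs hD).2
    rwa [negAt_eq_self hj] at this
  conn_negAt_last_typeD {x i k} hD hx hy hi hk hik _ h := by
    obtain rfl : ct = .D := hD
    exact conn_negAt_negAt_of_abs_eq hn hstd ((regI_iff_regular hn hstd).2 hx)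
      ((regI_iff_regular hn hstd).2 hy) hi hk hik h

end

/-! ### Weights positive on the simple roots of `I` -/

section
variable {n : ℕ} {ct : CType} {I : Finset (Fin n)} {i j : Fin n} {x y : V n}

theorem lt_of_segIndex_eq (h : ∀ k ∈ I, 0 < inn x (alphaR n ct k)) (hij : i < j)
    (hs : segIndex I i = segIndex I j) : x j < x i := by
  have key : j = i ∨ x j < x i := by
    refine segIndex_induction (P := fun k => k = i ∨ x k < x i) (Or.inl rfl)
      (fun k hk _ hkI ih => Or.inr ?_) hij.le hs
    have hlt := h k hkI
    rw [alphaR_of_lt ct hk, inn_sub, inn_ee, inn_ee, sub_pos] at hlt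
    exact ih.elim (fun e => e ▸ hlt) hlt.trans
  exact key.resolve_left hij.ne'

theorem le_of_segIndex_eq (h : ∀ k ∈ I, 0 < inn x (alphaR n ct k)) (hij : i ≤ j)
    (hs : segIndex I i = segIndex I j) : x j ≤ x i :=
  hij.eq_or_lt.elim (fun e => e ▸ le_rfl) fun hij => (lt_of_segIndex_eq h hij hs).le

theorem pos_of_segIndex_eq_mval (hn : 2 ≤ n) (hct : ct ≠ .D)
    (h : ∀ k ∈ I, 0 < inn x (alphaR n ct k)) (hi : segIndex I i = mval n I) : 0 < x i := by
  have hl := last_mem_of_segIndex_eq_mval hn hi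
  have hpos := h _ hl
  rw [alphaR_last hct hn] at hpos
  have hle : x ⟨n - 1, by omega⟩ ≤ x i := le_of_segIndex_eq h
    (Fin.le_def.2 (Nat.le_sub_one_of_lt i.2)) (hi.trans ((segIndex_last_eq_mval_iff hn).2 hl).symm)
  refine lt_of_lt_of_le ?_ hle
  cases ct <;> simpa [axisRoot, inn_ee, inn_smul] using hpos

theorem add_pos_of_segIndex_eq_mval (hn : 2 ≤ n) (hstd : StandardI n ct I)
    (h : ∀ k ∈ I, 0 < inn x (alphaR n ct k)) (hij : i ≠ j)
    (hi : segIndex I i = mval n I) (hj : segIndex I j = mval n I) : 0 < x i + x j := by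
  by_cases hct : ct = .D
  swap
  · exact add_pos (pos_of_segIndex_eq_mval hn hct h hi) (pos_of_segIndex_eq_mval hn hct h hj)
  subst hct
  wlog hlt : i < j generalizing i j
  · rw [add_comm]
    exact this hij.symm hj hi (hij.lt_or_gt.resolve_left hlt)
  have hl := last_mem_of_segIndex_eq_mval hn hi
  have hpos := h _ hl
  rw [alphaR_typeD_last hn, inn_add, inn_ee, inn_ee] at hpos
  have hjn := j.2
  have : i.1 < j.1 := hlt
  exact hpos.trans_le (add_le_add
    (le_of_segIndex_eq h (Fin.le_def.2 (show i.1 ≤ n - 2 by omega))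
      (hi.trans (hstd.segIndex_penultimate hn hl).symm))
    (le_of_segIndex_eq h (Fin.le_def.2 (Nat.le_sub_one_of_lt hjn))
      (hj.trans ((segIndex_last_eq_mval_iff hn).2 hl).symm)))

theorem LamIPlus.regI (hn : 2 ≤ n) (hstd : StandardI n ct I) (h : LamIPlus n ct I x) :
    RegI n ct I x := by
  rw [regI_iff_regular hn hstd]
  refine ⟨fun i j hij hs => ⟨?_, fun hm e => ?_⟩,
    fun hD i hi => (pos_of_segIndex_eq_mval hn hD h.2 hi).ne'⟩
  · rcases hij.lt_or_gt with hlt | hlt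
    exacts [(lt_of_segIndex_eq h.2 hlt hs).ne', (lt_of_segIndex_eq h.2 hlt hs.symm).ne]
  · have hpos := add_pos_of_segIndex_eq_mval hn hstd h.2 hij hm (hs.symm.trans hm)
    rw [e, neg_add_cancel] at hpos
    exact hpos.false

/-! ### Orbits of the Weyl group -/

theorem exists_perm_abs_sRefl_alphaR (hn : 2 ≤ n) (ct : CType) (k : Fin n) (x : V n) :
    ∃ σ : Equiv.Perm (Fin n), |sRefl (alphaR n ct k) x| = |x| ∘ σ := by
  by_cases h : k.1 + 1 < n
  · rw [alphaR_of_lt ct h, sRefl_ee_sub_ee (by simp [Fin.ext_iff])]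
    exact ⟨_, rfl⟩
  rw [show k = ⟨n - 1, by omega⟩ from Fin.ext (by have := k.2; simp only; omega)]
  by_cases hct : ct = .D
  · rw [hct, alphaR_typeD_last hn, sRefl_ee_add_ee (by simp only [ne_eq, Fin.ext_iff]; omega)]
    exact ⟨_, abs_negSwap _ _ _⟩
  · rw [alphaR_last hct hn, sRefl_axisRoot, abs_negAt]
    exact ⟨1, rfl⟩

theorem WOrb.exists_perm (hn : 2 ≤ n) (h : WOrb n ct x y) :
    ∃ σ : Equiv.Perm (Fin n), |y| = |x| ∘ σ := by
  unfold WOrb WIOrb at h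
  induction h with
  | refl => exact ⟨1, rfl⟩
  | tail _ hs ih =>
    obtain ⟨σ, hσ⟩ := ih
    obtain ⟨k, -, rfl⟩ := hs
    obtain ⟨τ, hτ⟩ := exists_perm_abs_sRefl_alphaR hn ct k _
    exact ⟨τ.trans σ, by rw [hτ, hσ]; rfl⟩

end

/-! ### The values of a dominant weight -/

section
variable {n : ℕ} {ct : CType} {J : Finset (Fin n)} {k : Fin n} {lbar : V n}

theorem qval_le {s : ℕ} (h1 : 1 ≤ s) (h2 : s < mval n J) : qval n J s ≤ n := by
  have hmem : qval n J s ∈ Qlist n J := by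
    rw [qval, if_neg (by omega), if_pos h2, List.getD_eq_getElem _ _ (by unfold mval at h2; omega)]
    exact List.getElem_mem _
  obtain ⟨k, -, hk⟩ := List.mem_map.1 hmem
  exact hk ▸ k.2

theorem qval_segIndex (hk : k ∉ J) : qval n J (segIndex J k) = k.1 + 1 := by
  have h1 := one_le_segIndex J k
  have h2 := segIndex_lt_mval_of_notMem hk
  refine le_antisymm ?_ (not_lt.1 fun h => lt_irrefl _ ((qval_lt_iff_lt_segIndex h1 h2).1 h))
  by_cases hlast : k.1 + 1 < n
  · have hlt : k < ⟨k + 1, hlast⟩ := Nat.lt_succ_self k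
    refine Nat.lt_succ_iff.1 ((qval_lt_iff_lt_segIndex (i := ⟨k + 1, hlast⟩) h1 h2).2 ?_)
    exact (segIndex_mono J hlt.le).lt_of_ne fun h =>
      hk ((segIndex_eq_segIndex_iff hlt.le).1 h k le_rfl hlt)
  · exact (qval_le h1 h2).trans (not_lt.1 hlast)

theorem StandardI.aval_segIndex (hJ : StandardI n ct J) (hk : k ∉ J) :
    aval n ct J lbar (segIndex J k) = lbar k := by
  simp [aval, segIndex_lt_mval_of_notMem hk, hJ.qv_eq_qval, qval_segIndex hk]

theorem aval_mval (ct : CType) (J : Finset (Fin n)) (lbar : V n) :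
    aval n ct J lbar (mval n J) = 0 := if_neg (lt_irrefl _)

theorem segIndex_last (hn : 2 ≤ n) (h : (⟨n - 1, by omega⟩ : Fin n) ∉ J) :
    segIndex J ⟨n - 1, by omega⟩ = mval n J - 1 := by
  have hsplit : Finset.univ \ J = insert ⟨n - 1, by omega⟩
      {k ∈ Finset.univ \ J | k < ⟨n - 1, by omega⟩} := by
    ext k
    have hle : k ≤ ⟨n - 1, by omega⟩ := Fin.le_def.2 (Nat.le_sub_one_of_lt k.2)
    grind
  rw [mval_eq, segIndex, hsplit, Finset.card_insert_of_notMem (by simp)]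
  grind

theorem DominantW.antitone (h : DominantW n ct lbar) : Antitone lbar := by
  cases n with
  | zero => exact fun i => i.elim0
  | succ n =>
    refine Fin.antitone_iff_succ_le.2 fun i => ?_
    have hi := h i.castSucc
    rwa [alphaR_of_lt ct (by simp), inn_sub, inn_ee, inn_ee, sub_nonneg] at hi

theorem inn_alphaR_eq_zero_iff (h : k.1 + 1 < n) :
    inn lbar (alphaR n ct k) = 0 ↔ lbar ⟨k + 1, h⟩ = lbar k := by
  rw [alphaR_of_lt ct h, inn_sub, inn_ee, inn_ee, sub_eq_zero, eq_comm]

theorem DominantW.standardI (hdom : DominantW n ct lbar)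
    (hJ : ∀ i : Fin n, i ∈ J ↔ inn lbar (alphaR n ct i) = 0)
    (hA : 0 < aval n ct J lbar (mval n J - 1)) : StandardI n ct J := by
  by_contra hns
  obtain ⟨rfl, hn, -, hmem⟩ : ct = .D ∧ ∃ hn : 2 ≤ n,
      (⟨n - 2, by omega⟩ : Fin n) ∉ J ∧ (⟨n - 1, by omega⟩ : Fin n) ∈ J := by
    simpa [StandardI] using hns
  have hq : qv n .D J (mval n J - 1) = n := if_pos ⟨hns, rfl⟩
  have hm : mval n J - 1 < mval n J := Nat.sub_lt (Nat.succ_pos _) one_pos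
  have hpos : 0 < lbar ⟨n - 1, by omega⟩ := by
    simpa only [aval, hm, if_true, hq, show n - 1 < n by omega, dite_true] using hA
  have hle : lbar ⟨n - 1, by omega⟩ ≤ lbar ⟨n - 2, by omega⟩ :=
    hdom.antitone (Fin.le_def.2 (by simp only; omega))
  have hsum := (hJ _).1 hmem
  rw [alphaR_typeD_last hn, inn_add, inn_ee, inn_ee] at hsum
  linarith

theorem DominantW.last_nonneg (hn : 2 ≤ n) (hdom : DominantW n ct lbar)
    (hJ : ∀ i : Fin n, i ∈ J ↔ inn lbar (alphaR n ct i) = 0)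
    (hA : 0 < aval n ct J lbar (mval n J - 1)) : 0 ≤ lbar ⟨n - 1, by omega⟩ := by
  have hlast := hdom ⟨n - 1, by omega⟩
  by_cases hct : ct = .D
  · subst hct
    rw [alphaR_typeD_last hn, inn_add, inn_ee, inn_ee] at hlast
    by_contra! hneg
    have hst := hdom.standardI hJ hA
    have hpen : (⟨n - 2, by omega⟩ : Fin n) ∉ J := fun h => by
      have heq := (inn_alphaR_eq_zero_iff (by simp only; omega)).1 ((hJ _).1 h)
      simp only [show n - 2 + 1 = n - 1 by omega] at heq
      linarith
    have hval := hst.aval_segIndex (lbar := lbar) ((hst rfl hn).resolve_left hpen)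
    rw [segIndex_last hn ((hst rfl hn).resolve_left hpen)] at hval
    linarith
  · rw [alphaR_last hct hn] at hlast
    cases ct <;> simpa [axisRoot, inn_ee, inn_smul] using hlast

theorem DominantW.last_eq_zero (hn : 2 ≤ n) (hdom : DominantW n ct lbar)
    (h0 : 0 ≤ lbar ⟨n - 1, by omega⟩)
    (h : inn lbar (alphaR n ct ⟨n - 1, by omega⟩) = 0) : lbar ⟨n - 1, by omega⟩ = 0 := by
  by_cases hct : ct = .D
  · subst hct
    rw [alphaR_typeD_last hn, inn_add, inn_ee, inn_ee] at h
    have hle : lbar ⟨n - 1, by omega⟩ ≤ lbar ⟨n - 2, by omega⟩ :=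
      hdom.antitone (Fin.le_def.2 (by simp only; omega))
    linarith
  · rwa [alphaR_last hct hn, inn_axisRoot_eq_zero_iff] at h

theorem DominantW.exists_aval_eq_abs (hn : 2 ≤ n) (hdom : DominantW n ct lbar)
    (hJ : ∀ i : Fin n, i ∈ J ↔ inn lbar (alphaR n ct i) = 0)
    (hA : 0 < aval n ct J lbar (mval n J - 1)) (hk : lbar k ≠ 0) :
    ∃ t, 1 ≤ t ∧ t < mval n J ∧ aval n ct J lbar t = |lbar k| := by
  have hlast := hdom.last_nonneg hn hJ hA
  have hpos : 0 ≤ lbar k := hlast.trans (hdom.antitone (Fin.le_def.2 (Nat.le_sub_one_of_lt k.2)))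
  obtain ⟨l, hl, hmax⟩ := Finset.exists_max_image {i | lbar i = lbar k} id ⟨k, by simp⟩
  simp only [Finset.mem_filter_univ] at hl hmax
  have hlJ : l ∉ J := fun hmem => by
    by_cases h : l.1 + 1 < n
    · have heq := (inn_alphaR_eq_zero_iff h).1 ((hJ l).1 hmem)
      exact absurd (hmax _ (heq.trans hl)) (not_le.2 (Nat.lt_succ_self l.1))
    · obtain ⟨l, hln⟩ := l
      obtain rfl : l = n - 1 := by simp only at h; omega
      exact hk (hl ▸ hdom.last_eq_zero hn hlast ((hJ _).1 hmem))
  refine ⟨segIndex J l, one_le_segIndex J l, segIndex_lt_mval_of_notMem hlJ, ?_⟩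
  rw [(hdom.standardI hJ hA).aval_segIndex hlJ, hl, abs_of_nonneg hpos]

end

/-! ### The separable pair of a cut -/

theorem Segmentation.Regular.lone_abs {ι : Type*} [DecidableEq ι] {S : Segmentation ι} {x : ι → ℝ}
    {i j : ι} (hij : i ≠ j) (hx : S.Regular x) (hx' : S.Regular (negAt i (negAt j x)))
    (hswap : S.seg i = S.seg j → negAt i (negAt j x) ≠ x ∘ Equiv.swap i j)
    (hi : S.seg i ≠ S.last) (h0 : x i ≠ 0) : S.Lone |x| i := by
  refine ⟨hi, abs_ne_zero.2 h0, fun k hk hs he => ?_⟩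
  have hneg := hx.eq_neg_of_abs_eq hk hs he
  by_cases hkj : k = j
  · subst hkj
    refine hswap hs.symm (funext fun a => ?_)
    simp only [negAt_apply, Function.comp_apply, Equiv.swap_apply_def]
    grind
  · exact (hx'.1 k i hk hs).1 (by simp [negAt_apply, hk, hkj, hij, hneg])

section
variable {n : ℕ} {ct : CType} {I J : Finset (Fin n)} {lam lbar mu w : V n} {i j : Fin n}
  {R : Set ℕ} {T : Set ℝ}

/-- The pair `(S, S̄)` of sets of segment and value indices attached to a cut `(R, T)`. The values
indexed by `S̄` are those outside `T`. -/
noncomputable def cutPair (n : ℕ) (ct : CType) (I J : Finset (Fin n)) (lbar : V n) (R : Set ℕ)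
    (T : Set ℝ) : Finset ℕ × Finset ℕ :=
  ({s ∈ Finset.Icc 1 (mval n I) | s ∈ R}, {t ∈ Finset.Icc 1 (mval n J) | aval n ct J lbar t ∉ T})

theorem isMaxN_of_saturated (hn : 2 ≤ n) (hstd : StandardI n ct I) {s : ℕ} {a : ℝ} (h1 : 1 ≤ s)
    (h2 : s ≤ mval n I) (h : (segmentation ct I).Saturated |mu| s a) :
    IsMaxN n ct I mu s a := fun nu _ hnu => by
  rw [nsl_eq_card hstd h1 h2, nsl_eq_card hstd h1 h2]
  exact (((regI_iff_regular hn hstd).1 hnu).mult_le_capacity s a).trans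
    (Segmentation.capacity_le_mult_iff.2 h)

theorem isSepPair_cutPair (hn : 2 ≤ n) (hstd : StandardI n ct I)
    (h : (linkageSystem hn hstd).IsCut |mu| R T)
    (ht : ∃ t, 1 ≤ t ∧ t < mval n J ∧ aval n ct J lbar t ∉ T) :
    IsSepPair n ct I J lbar mu (cutPair n ct I J lbar R T).1 (cutPair n ct I J lbar R T).2 := by
  obtain ⟨t, ht1, htm, htT⟩ := ht
  obtain ⟨z, hzm, hzR⟩ := h.exists_mem
  have hz1 : 1 ≤ segIndex I z := one_le_segIndex I z
  have hzlt : segIndex I z < mval n I := (segIndex_le_mval I z).lt_of_ne hzm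
  simp only [cutPair]
  refine ⟨⟨_, Finset.mem_filter.2 ⟨Finset.mem_Icc.2 ⟨hz1, hzlt.le⟩, hzR⟩⟩,
    ⟨t, Finset.mem_filter.2 ⟨Finset.mem_Icc.2 ⟨ht1, htm.le⟩, htT⟩⟩, Finset.filter_subset _ _,
    Finset.filter_subset _ _, hz1.trans_lt hzlt, ht1.trans_lt htm, ?_, ?_, ?_⟩
  · intro s hs t ht
    simp only [Finset.mem_filter, Finset.mem_Icc] at hs ht
    exact isMaxN_of_saturated hn hstd hs.1.1 hs.1.2 (h.saturated s _ hs.2 ht.2)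
  · intro s hs hsR t ht htT
    rw [Finset.mem_filter, not_and] at hsR htT
    rw [Finset.mem_Icc] at hs
    exact Nat.eq_zero_of_not_pos fun hpos => h.not_occurs s _ (hsR (Finset.mem_Icc.2 hs))
      (not_not.1 (htT ht)) ((nsl_pos_iff hstd hs.1 hs.2).1 hpos)
  · have hS : mval n I ∈ ({s ∈ Finset.Icc 1 (mval n I) | s ∈ R} : Finset ℕ) ↔ mval n I ∈ R := by
      simp [hz1.trans hzlt.le]
    have hT : mval n J ∈ ({t ∈ Finset.Icc 1 (mval n J) | aval n ct J lbar t ∉ T} : Finset ℕ) ↔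
        0 ∉ T := by
      simp [ht1.trans htm.le, aval_mval]
    cases ct
    · exact hS.trans ((h.last_mem_iff CType.noConfusion).trans (not_not.symm.trans hT.not.symm))
    · exact hS.trans ((h.last_mem_iff CType.noConfusion).trans (not_not.symm.trans hT.not.symm))
    · exact hS.trans ((h.last_mem_iff_typeD rfl).trans hT.symm)

theorem not_isWeakPair {p : Finset ℕ × Finset ℕ} (hs : ∃ s ∈ p.1, s ≠ mval n I)
    (ht : ∃ t ∈ p.2, t ≠ mval n J) : ¬ IsWeakPair n I J p := by
  obtain ⟨s, hs, hsm⟩ := hs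
  obtain ⟨t, ht, htm⟩ := ht
  rintro (rfl | rfl | rfl | rfl)
  exacts [htm (Finset.mem_singleton.1 ht), htm (Finset.mem_singleton.1 ht),
    hsm (Finset.mem_singleton.1 hs), hsm (Finset.mem_singleton.1 hs)]

theorem not_isWeakPair_cutPair (hn : 2 ≤ n) (hstd : StandardI n ct I)
    (h : (linkageSystem hn hstd).IsCut w R T)
    (ht : ∃ t, 1 ≤ t ∧ t < mval n J ∧ aval n ct J lbar t ∉ T) :
    ¬ IsWeakPair n I J (cutPair n ct I J lbar R T) := by
  obtain ⟨t, ht1, htm, htT⟩ := ht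
  obtain ⟨z, hzm, hzR⟩ := h.exists_mem
  exact not_isWeakPair
    ⟨_, Finset.mem_filter.2 ⟨Finset.mem_Icc.2 ⟨one_le_segIndex I z, segIndex_le_mval I z⟩, hzR⟩,
      hzm⟩
    ⟨t, Finset.mem_filter.2 ⟨Finset.mem_Icc.2 ⟨ht1, htm.le⟩, htT⟩, htm.ne⟩

theorem exists_aval_notMem (hn : 2 ≤ n) (hstd : StandardI n ct I)
    (h : (linkageSystem hn hstd).IsCut w R T) (hdom : DominantW n ct lbar)
    (hJ : ∀ i : Fin n, i ∈ J ↔ inn lbar (alphaR n ct i) = 0)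
    (hA : 0 < aval n ct J lbar (mval n J - 1)) {τ : Equiv.Perm (Fin n)} (hτ : |lbar| = w ∘ τ) :
    ∃ t, 1 ≤ t ∧ t < mval n J ∧ aval n ct J lbar t ∉ T := by
  obtain ⟨u, hu0, huT⟩ := h.exists_notMem
  have hu : |lbar (τ.symm u)| = w u := (congrFun hτ _).trans (congrArg w (τ.apply_symm_apply u))
  obtain ⟨t, ht1, htm, ht⟩ := hdom.exists_aval_eq_abs hn hJ hA (abs_ne_zero.1 (hu ▸ hu0))
  exact ⟨t, ht1, htm, (ht.trans hu).symm ▸ huT⟩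

theorem exists_cutPair (hn : 2 ≤ n) (hstd : StandardI n ct I)
    (h : (linkageSystem hn hstd).IsCut w R T) {σ : Equiv.Perm (Fin n)} (hσ : w = |lam| ∘ σ)
    (horb : WOrb n ct lam lbar) (hdom : DominantW n ct lbar)
    (hJ : ∀ i : Fin n, i ∈ J ↔ inn lbar (alphaR n ct i) = 0)
    (hA : 0 < aval n ct J lbar (mval n J - 1)) :
    ¬ IsWeakPair n I J (cutPair n ct I J lbar R T) ∧
      ∀ mu, WOrb n ct lbar mu → RegI n ct I mu →
        IsSepPair n ct I J lbar mu (cutPair n ct I J lbar R T).1 (cutPair n ct I J lbar R T).2 := by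
  obtain ⟨ρ, hρ⟩ := horb.exists_perm hn
  have hw : |lbar| = w ∘ ρ.trans σ.symm := by
    rw [hρ, hσ]
    funext k
    simp
  have ht := exists_aval_notMem hn hstd h hdom hJ hA hw
  refine ⟨not_isWeakPair_cutPair hn hstd h ht, fun mu hmu hreg => ?_⟩
  obtain ⟨τ, hτ⟩ := hmu.exists_perm hn
  have hcut := h.of_regular ((regI_iff_regular hn hstd).1 hreg)
    (σ := τ.trans (ρ.trans σ.symm)) (by rw [hτ, hw]; rfl)
  exact isSepPair_cutPair hn hstd hcut ht

theorem ne_of_not_conn (hreg : RegI n ct I lam)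
    (hnc : ¬ Conn n ct I lam (sRefl (ee i) (sRefl (ee j) lam))) : i ≠ j := by
  rintro rfl
  refine hnc ?_
  rw [show (ee i : V n) = axisRoot .B i from rfl, sRefl_axisRoot, sRefl_axisRoot,
    negAt_negAt_self]
  exact conn_refl hreg

theorem two_le_of_not_conn (hreg : RegI n ct I lam)
    (hnc : ¬ Conn n ct I lam (sRefl (ee i) (sRefl (ee j) lam))) : 2 ≤ n :=
  Fin.nontrivial_iff_two_le.1 ⟨i, j, ne_of_not_conn hreg hnc⟩

theorem obstruction_of_not_conn (hn : 2 ≤ n) (hstd : StandardI n ct I) (hreg : RegI n ct I lam)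
    (hiq : i.1 + 1 ≤ qv n ct I (mval n I - 1)) (hjq : j.1 + 1 ≤ qv n ct I (mval n I - 1))
    (hi0 : lam i ≠ 0) (hj0 : lam j ≠ 0) (hregij : RegI n ct I (sRefl (ee i) (sRefl (ee j) lam)))
    (hnc : ¬ Conn n ct I lam (sRefl (ee i) (sRefl (ee j) lam))) :
    (linkageSystem hn hstd).Obstruction |lam| i j := by
  have hij := ne_of_not_conn hreg hnc
  have hflip : sRefl (ee i) (sRefl (ee j) lam) = negAt i (negAt j lam) := by
    rw [← sRefl_axisRoot .B, ← sRefl_axisRoot .B]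
    rfl
  rw [hflip] at hregij hnc
  have hx := (regI_iff_regular hn hstd).1 hreg
  have hx' := (regI_iff_regular hn hstd).1 hregij
  have hswap : segIndex I i = segIndex I j → negAt i (negAt j lam) ≠ lam ∘ Equiv.swap i j :=
    fun hs he => hnc ((he ▸ wiOrb_comp_swap hs lam : WIOrb n ct I lam _).conn hreg hregij)
  refine ⟨hx.lone_abs hij hx' hswap (hstd.segIndex_ne_mval hiq) hi0,
    hx.lone_abs hij.symm (negAt_comm i j lam ▸ hx') (fun hs => ?_) (hstd.segIndex_ne_mval hjq) hj0,
    fun h => hnc (h lam hx rfl)⟩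
  rw [negAt_comm, Equiv.swap_comm]
  exact hswap hs.symm

end

theorem statement6_general (n : ℕ) (ct : CType) (I J : Finset (Fin n)) (lam lbar : V n)
    (hstd : StandardI n ct I) (hreg : RegI n ct I lam)
    (horb : WOrb n ct lam lbar) (hdom : DominantW n ct lbar)
    (hJ : ∀ i : Fin n, i ∈ J ↔ inn lbar (alphaR n ct i) = 0)
    (hA : 0 < aval n ct J lbar (mval n J - 1))
    (i j : Fin n)
    (hiq : i.1 + 1 ≤ qv n ct I (mval n I - 1))
    (hjq : j.1 + 1 ≤ qv n ct I (mval n I - 1))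
    (hij0 : lam i * lam j ≠ 0)
    (hregij : RegI n ct I (sRefl (ee i) (sRefl (ee j) lam)))
    (hnc : ¬ Conn n ct I lam (sRefl (ee i) (sRefl (ee j) lam))) :
    ∃ p, ¬ IsWeakPair n I J p ∧ ∀ mu, WOrb n ct lbar mu → RegI n ct I mu →
      IsSepPair n ct I J lbar mu p.1 p.2 := by
  have hn := two_le_of_not_conn hreg hnc
  have hobs := obstruction_of_not_conn hn hstd hreg hiq hjq (left_ne_zero_of_mul hij0)
    (right_ne_zero_of_mul hij0) hregij hnc
  obtain ⟨σ, R, T, hcut⟩ := hobs.exists_isCut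
  exact ⟨cutPair n ct I J lbar R T, exists_cutPair hn hstd hcut rfl horb hdom hJ hA⟩

/-- Proposition 5.8 / `ssprop3`. -/
theorem statement6 (n : ℕ) (ct : CType) (I J : Finset (Fin n)) (lam lbar : V n)
    (hstd : StandardI n ct I)
    (hint : IntegralW n ct lam) (hreg : RegI n ct I lam)
    (horb : WOrb n ct lam lbar) (hdom : DominantW n ct lbar)
    (hJ : ∀ i : Fin n, i ∈ J ↔ inn lbar (alphaR n ct i) = 0)
    (hA : 0 < aval n ct J lbar (mval n J - 1))
    (i j : Fin n)
    (hiq : i.1 + 1 ≤ qv n ct I (mval n I - 1))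
    (hjq : j.1 + 1 ≤ qv n ct I (mval n I - 1))
    (hij0 : lam i * lam j ≠ 0)
    (hregij : RegI n ct I (sRefl (ee i) (sRefl (ee j) lam)))
    (hnc : ¬ Conn n ct I lam (sRefl (ee i) (sRefl (ee j) lam))) :
    StronglySepSys n ct I J lbar := by
  obtain ⟨p, hp, h⟩ := statement6_general n ct I J lam lbar hstd hreg horb hdom hJ hA i j hiq hjq
    hij0 hregij hnc
  exact ⟨p, fun mu hmu => h mu hmu.1 (LamIPlus.regI (two_le_of_not_conn hreg hnc) hstd hmu.2), hp⟩

end JantzenBlocks
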